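/- arXiv:1912.11614 — 11 statements merged into one kernel-verified Lean document; each statement's English description precedes it below -/
import Mathlib

section
/- Let n, m be integers with n ≥ m ≥ 2 and n − m even. Then the function x ↦ sin^n(x)/x^m is Lebesgue integrable on ℝ and ∫_ℝ sin^n(x)/x^m dx = (−1)^{(n+m)/2} · π/(2^n (m−1)!) · ∑_{l=0}^{n} (−1)^l · binom(n,l) · (2l−n)^{m−1} · sgn(2l−n), where sgn denotes the sign function (with sgn(0) = 0). -/
open MeasureTheory Real Finset

lemma aux_deriv (k : ℕ) (a : ℂ) (s : ℂ) (x : ℂ) :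
    HasDerivAt (fun x : ℂ => - Complex.exp (-s * x) *
      ∑ j ∈ range (k + 1), s ^ j * (x - a) ^ j / (j.factorial : ℂ))
      (s ^ (k + 1) * (x - a) ^ k / (k.factorial : ℂ) * Complex.exp (-s * x)) x := by
  have he : HasDerivAt (fun x : ℂ => - Complex.exp (-s * x)) (s * Complex.exp (-s * x)) x := by
    have := (((hasDerivAt_id x).const_mul (-s)).cexp).neg
    refine this.congr_deriv ?_
    simp [mul_comm]
  induction k with
  | zero => 
    simp only [zero_add, range_one, sum_singleton]
    simpa using he
  | succ k ih =>
    have h1 : HasDerivAt (fun x : ℂ => s ^ (k+1) * (x - a) ^ (k+1) / ((k+1).factorial : ℂ))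
        (s ^ (k+1) * (((k+1 : ℕ) : ℂ) * (x - a) ^ k) / ((k+1).factorial : ℂ)) x := by
      have := ((((hasDerivAt_id x).sub_const a).pow (k+1)).const_mul (s ^ (k+1))).div_const ((k+1).factorial : ℂ)
      simpa using this
    have h2 := ih.add (he.mul h1)
    have hfun : (fun x : ℂ => - Complex.exp (-s * x) *
        ∑ j ∈ range (k + 1 + 1), s ^ j * (x - a) ^ j / (j.factorial : ℂ)) =
        (fun x : ℂ => - Complex.exp (-s * x) *
          ∑ j ∈ range (k + 1), s ^ j * (x - a) ^ j / (j.factorial : ℂ)) +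
        (fun x : ℂ => - Complex.exp (-s * x)) *
          (fun x : ℂ => s ^ (k+1) * (x - a) ^ (k+1) / ((k+1).factorial : ℂ)) := by
      funext y
      rw [sum_range_succ]
      simp only [Pi.add_apply, Pi.mul_apply]
      ring
    rw [hfun]
    refine h2.congr_deriv ?_
    · have : (k.factorial : ℂ) ≠ 0 := by exact_mod_cast k.factorial_ne_zero
      have : (k : ℂ) + 1 ≠ 0 := by exact_mod_cast k.succ_ne_zero
      rw [Nat.factorial_succ]
      push_cast
      field_simp
      ring

lemma aux_int (k : ℕ) (a N : ℝ) (s : ℂ) :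
    s ^ (k + 1) * ∫ x in a..N, ((x : ℂ) - a) ^ k * Complex.exp (-s * x) =
      (k.factorial : ℂ) * (Complex.exp (-s * a) - Complex.exp (-s * N) *
        ∑ j ∈ range (k + 1), s ^ j * ((N : ℂ) - a) ^ j / (j.factorial : ℂ)) := by
  have h := intervalIntegral.integral_eq_sub_of_hasDerivAt (a := a) (b := N)
    (fun x _ => (aux_deriv k a s (x : ℂ)).comp_ofReal)
    (Continuous.intervalIntegrable (by fun_prop) _ _)
  have hk : (k.factorial : ℂ) ≠ 0 := by exact_mod_cast k.factorial_ne_zero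
  have e : ∀ x : ℝ, s ^ (k + 1) * ((x : ℂ) - a) ^ k / (k.factorial : ℂ) * Complex.exp (-s * x)
    = (s ^ (k + 1) / (k.factorial : ℂ)) * (((x : ℂ) - a) ^ k * Complex.exp (-s * x)) := by
    intro x; ring
  simp_rw [e] at h
  rw [intervalIntegral.integral_const_mul] at h
  have h0 : ∑ j ∈ range (k + 1), s ^ j * ((a : ℂ) - a) ^ j / (j.factorial : ℂ) = 1 := by
    rw [sum_range_succ']
    simp
  rw [h0] at h
  have h3 := congrArg (fun z => (k.factorial : ℂ) * z) h
  rw [← mul_assoc, mul_div_cancel₀ _ hk] at h3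
  rw [h3]; ring

lemma aux_fd (n j : ℕ) (h : j < n) (x : ℂ) :
    ∑ l ∈ range (n + 1), (-1 : ℂ) ^ l * (n.choose l : ℂ) * (x - 2 * l) ^ j = 0 := by
  have h1 := congrFun (fwdDiff_iter_pow_eq_zero_of_lt (R := ℂ) h) (-x / 2)
  rw [fwdDiff_iter_eq_sum_shift] at h1
  have h2 : ∑ l ∈ range (n + 1), (-1 : ℂ) ^ l * (n.choose l : ℂ) * (x - 2 * l) ^ j =
    (-1) ^ n * (-2) ^ j * ∑ k ∈ range (n + 1), ((-1 : ℤ) ^ (n - k) * n.choose k) •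
      (-x / 2 + k • (1 : ℂ)) ^ j := by
    rw [mul_sum]
    refine sum_congr rfl fun l hl => ?_
    have hl' : l ≤ n := by simp at hl; omega
    obtain ⟨d, rfl⟩ := Nat.exists_eq_add_of_le hl'
    have : (x - 2 * l) = (-2) * (-x / 2 + l) := by ring
    rw [this, mul_pow]
    simp only [add_tsub_cancel_left, zsmul_eq_mul, nsmul_eq_mul, mul_one]
    push_cast
    have h4 : (-1 : ℂ) ^ (l + d) * (-1) ^ d = (-1) ^ l := by
      rw [pow_add, mul_assoc, ← mul_pow]; simp
    rw [← h4]; ring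
  rw [h2, h1]; simp

/-- the B-spline-like function -/
noncomputable def auxg (n k : ℕ) (x : ℝ) : ℂ :=
  ∑ l ∈ range (n + 1), (-1 : ℂ) ^ l * (n.choose l : ℂ) *
    (((max (x - (2 * (l : ℝ) - n)) 0 : ℝ)) : ℂ) ^ k

lemma auxg_cont (n k : ℕ) : Continuous (auxg n k) := by
  unfold auxg
  fun_prop

lemma auxg_supp (n k : ℕ) (hk : 1 ≤ k) (hkn : k < n) (x : ℝ) (hx : x ∉ Set.Ioc (-(n : ℝ)) n) :
    auxg n k x = 0 := by
  unfold auxg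
  by_cases h : x ≤ -(n : ℝ)
  · refine sum_eq_zero fun l _ => ?_
    have : max (x - (2 * (l : ℝ) - n)) 0 = 0 := by
      apply max_eq_right
      have : (0 : ℝ) ≤ l := by positivity
      linarith
    rw [this]
    simp [show k ≠ 0 by omega]
  · have h2 : (n : ℝ) < x := by
      by_contra h3
      exact hx ⟨by linarith, by linarith⟩
    rw [← aux_fd n k hkn (x + n)]
    refine sum_congr rfl fun l hl => ?_
    have hl' : (l : ℝ) ≤ n := by
      have : l ≤ n := by simp at hl; omega
      exact_mod_cast this
    rw [max_eq_left (by linarith)]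
    push_cast
    ring

lemma auxg_laplace (n k : ℕ) (hk : 1 ≤ k) (hkn : k < n) (s : ℂ) :
    s ^ (k + 1) * ∫ x : ℝ, auxg n k x * Complex.exp (-s * x) =
      (k.factorial : ℂ) * (Complex.exp s - Complex.exp (-s)) ^ n := by
  have h1 : ∫ x : ℝ, auxg n k x * Complex.exp (-s * x) =
      ∫ x in (-(n : ℝ))..n, auxg n k x * Complex.exp (-s * x) := by
    rw [intervalIntegral.integral_of_le (by linarith [(Nat.cast_nonneg n : (0:ℝ) ≤ n)])]
    refine (setIntegral_eq_integral_of_forall_compl_eq_zero fun x hx => ?_).symm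
    rw [auxg_supp n k hk hkn x hx, zero_mul]
  have h2 : ∀ l ∈ range (n + 1), ∫ x in (-(n : ℝ))..n,
      (((max (x - (2 * (l : ℝ) - n)) 0 : ℝ)) : ℂ) ^ k * Complex.exp (-s * x) =
      ∫ x in (2 * (l : ℝ) - n)..n, ((x : ℂ) - (2 * (l : ℝ) - n : ℝ)) ^ k * Complex.exp (-s * x) := by
    intro l hl
    have hl' : (l : ℝ) ≤ n := by
      have : l ≤ n := by simp at hl; omega
      exact_mod_cast this
    have hl0 : (0 : ℝ) ≤ l := by positivity
    have hc : Continuous fun x : ℝ => (((max (x - (2 * (l : ℝ) - n)) 0 : ℝ)) : ℂ) ^ k *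
      Complex.exp (-s * x) := by fun_prop
    rw [← intervalIntegral.integral_add_adjacent_intervals (b := 2 * (l : ℝ) - n)
      (hc.intervalIntegrable _ _) (hc.intervalIntegrable _ _)]
    rw [intervalIntegral.integral_congr (g := fun _ => (0 : ℂ)) (a := -(n : ℝ)), 
      intervalIntegral.integral_zero, zero_add]
    · refine intervalIntegral.integral_congr fun x hx => ?_
      rw [Set.uIcc_of_le (by linarith)] at hx
      beta_reduce
      rw [max_eq_left (by linarith [hx.1])]
      push_cast; rfl
    · intro x hx
      rw [Set.uIcc_of_le (by linarith)] at hx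
      beta_reduce
      rw [max_eq_right (by linarith [hx.2])]
      simp [show k ≠ 0 by omega]
  have h3 : ∫ x in (-(n : ℝ))..n, auxg n k x * Complex.exp (-s * x) =
      ∑ l ∈ range (n + 1), (-1 : ℂ) ^ l * (n.choose l : ℂ) * 
      ∫ x in (2 * (l : ℝ) - n)..n, ((x : ℂ) - (2 * (l : ℝ) - n : ℝ)) ^ k * Complex.exp (-s * x) := by
    unfold auxg
    simp_rw [sum_mul]
    rw [intervalIntegral.integral_finsetSum]
    · refine sum_congr rfl fun l hl => ?_
      rw [← h2 l hl, ← intervalIntegral.integral_const_mul]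
      simp_rw [mul_assoc]
    · intro l hl
      exact Continuous.intervalIntegrable (by fun_prop) _ _
  rw [h1, h3, mul_sum]
  have h4 : ∀ l ∈ range (n + 1), s ^ (k + 1) * ((-1 : ℂ) ^ l * (n.choose l : ℂ) * 
      ∫ x in (2 * (l : ℝ) - n)..n, ((x : ℂ) - (2 * (l : ℝ) - n : ℝ)) ^ k * Complex.exp (-s * x)) =
      (k.factorial : ℂ) * ((-1 : ℂ) ^ l * (n.choose l : ℂ) * Complex.exp (-s * (2 * (l : ℝ) - n : ℝ)))
      - (k.factorial : ℂ) * Complex.exp (-s * n) * ∑ j ∈ range (k + 1), s ^ j / (j.factorial : ℂ) *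
        ((-1 : ℂ) ^ l * (n.choose l : ℂ) * (2 * n - 2 * l) ^ j) := by
    intro l _
    have := aux_int k (2 * (l : ℝ) - n) n s
    rw [mul_left_comm, this, mul_sub, mul_sub, mul_left_comm]
    congr 1
    simp only [mul_sum]
    refine sum_congr rfl fun j _ => ?_
    push_cast
    ring
  rw [sum_congr rfl h4, sum_sub_distrib, ← mul_sum, ← mul_sum, sum_comm]
  have h5 : ∑ j ∈ range (k + 1), ∑ l ∈ range (n + 1), s ^ j / (j.factorial : ℂ) *
        ((-1 : ℂ) ^ l * (n.choose l : ℂ) * (2 * n - 2 * l) ^ j) = 0 := by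
    refine sum_eq_zero fun j hj => ?_
    rw [← mul_sum, aux_fd n j (by simp at hj; omega), mul_zero]
  rw [h5, mul_zero, sub_zero]
  congr 1
  rw [sub_eq_add_neg, add_comm (Complex.exp s), add_pow]
  refine sum_congr rfl fun l hl => ?_
  have hl' : l ≤ n := by simp at hl; omega
  rw [neg_pow (Complex.exp (-s)), ← Complex.exp_nat_mul, ← Complex.exp_nat_mul]
  have : Complex.exp (-s * (2 * (l : ℝ) - n : ℝ)) = Complex.exp (l * -s) * 
      Complex.exp ((n - l : ℕ) * s) := by
    rw [← Complex.exp_add]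
    congr 1
    push_cast [hl']
    ring
  rw [this]; ring

lemma aux_integrable (n m : ℕ) (hm : 2 ≤ m) (hmn : m ≤ n) :
    Integrable (fun x : ℝ => Real.sin x ^ n / x ^ m) := by
  refine Integrable.mono' (integrable_inv_one_add_sq.const_mul 2) 
    (by apply Measurable.aestronglyMeasurable; fun_prop) (ae_of_all _ fun x => ?_)
  by_cases hx : x = 0
  · subst hx
    simp [show n ≠ 0 by omega]
  have hx' : 0 < |x| := abs_pos.mpr hx
  have h1 : |Real.sin x| ≤ 1 := Real.abs_sin_le_one x
  have h2 : |Real.sin x| ≤ |x| := Real.abs_sin_le_abs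
  rw [Real.norm_eq_abs, abs_div, abs_pow, abs_pow]
  have h3 : |Real.sin x| ^ n / |x| ^ m ≤ (|Real.sin x| / |x|) ^ 2 := by
    calc _ ≤ |Real.sin x| ^ m / |x| ^ m := by
          gcongr ?_ / _
          exact pow_le_pow_of_le_one (abs_nonneg _) h1 hmn
      _ = (|Real.sin x| / |x|) ^ m := by rw [div_pow]
      _ ≤ _ := pow_le_pow_of_le_one (by positivity) (div_le_one_of_le₀ h2 hx'.le) hm
  refine h3.trans ?_
  rw [div_pow, sq_abs, sq_abs, ← div_eq_mul_inv, div_le_div_iff₀ (by positivity) (by positivity)]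
  have h4 : Real.sin x ^ 2 ≤ x ^ 2 := sq_le_sq.mpr h2
  have h5 : Real.sin x ^ 2 ≤ 1 := Real.sin_sq_le_one x
  nlinarith [sq_nonneg x]

open FourierTransform in
lemma aux_main (n k : ℕ) (hk : 1 ≤ k) (hkn : k < n) :
    auxg n k 0 = (2 * π : ℝ)⁻¹ * ((k.factorial : ℂ) * (2 * Complex.I) ^ n / Complex.I ^ (k + 1)) *
      ((∫ x : ℝ, Real.sin x ^ n / x ^ (k + 1) : ℝ) : ℂ) := by
  have hcs : HasCompactSupport (auxg n k) := 
    HasCompactSupport.intro (isCompact_Icc (a := -(n : ℝ)) (b := n)) fun x hx =>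
      auxg_supp n k hk hkn x fun h => hx (Set.Ioc_subset_Icc_self h)
  have hint : Integrable (auxg n k) := (auxg_cont n k).integrable_of_hasCompactSupport hcs
  set C : ℂ := (k.factorial : ℂ) * (2 * Complex.I) ^ n / Complex.I ^ (k + 1) with hC
  have hF : ∀ w : ℝ, w ≠ 0 → 𝓕 (auxg n k) w = 
      C * ((Real.sin (2 * π * w) ^ n / (2 * π * w) ^ (k + 1) : ℝ) : ℂ) := by
    intro w hw
    have h := auxg_laplace n k hk hkn ((2 * π * w : ℝ) * Complex.I)
    have hs : ((2 * π * w : ℝ) : ℂ) ≠ 0 := by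
      exact_mod_cast mul_ne_zero (by positivity) hw
    have h6 : Complex.exp ((2 * π * w : ℝ) * Complex.I) - 
      Complex.exp (-((2 * π * w : ℝ) * Complex.I)) = 2 * Complex.I * (Real.sin (2 * π * w) : ℝ) := by
      rw [← neg_mul, Complex.exp_mul_I, Complex.exp_mul_I, Complex.cos_neg, Complex.sin_neg,
        Complex.ofReal_sin]
      ring
    rw [h6] at h
    rw [Real.fourier_real_eq_integral_exp_smul]
    have h7 : ∫ v : ℝ, Complex.exp (↑(-2 * π * v * w) * Complex.I) • auxg n k v =
       ∫ x : ℝ, auxg n k x * Complex.exp (-((2 * π * w : ℝ) * Complex.I) * x) := by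
      congr 1
      ext v
      rw [smul_eq_mul, mul_comm]
      congr 2
      push_cast; ring
    rw [h7, hC]
    have hI := Complex.I_ne_zero
    rw [Complex.ofReal_div, Complex.ofReal_pow, Complex.ofReal_pow, div_mul_div_comm, eq_div_iff 
      (mul_ne_zero (pow_ne_zero _ hI) (pow_ne_zero _ hs))]
    rw [mul_pow, mul_pow] at h
    linear_combination h
  have hae : 𝓕 (auxg n k) =ᵐ[volume] fun w : ℝ => 
      C * ((Real.sin (2 * π * w) ^ n / (2 * π * w) ^ (k + 1) : ℝ) : ℂ) := by
    filter_upwards [compl_mem_ae_iff.mpr (measure_singleton (0 : ℝ))] with w hw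
    exact hF w hw
  have hi2 : Integrable (𝓕 (auxg n k)) := by
    refine Integrable.congr ?_ hae.symm
    refine Integrable.const_mul ?_ _
    refine Integrable.ofReal ?_
    exact (aux_integrable n (k+1) (by omega) (by omega)).comp_mul_left' (by positivity)
  have h8 := congrFun ((auxg_cont n k).fourierInv_fourier_eq hint hi2) 0
  rw [← h8, Real.fourierInv_eq']
  simp only [inner_zero_right, mul_zero, Complex.ofReal_zero, zero_mul, Complex.exp_zero, one_smul]
  rw [integral_congr_ae hae, integral_const_mul, integral_complex_ofReal,
    Measure.integral_comp_mul_left (fun x : ℝ => Real.sin x ^ n / x ^ (k + 1)) (2 * π)]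
  rw [abs_of_pos (by positivity), smul_eq_mul]
  push_cast
  ring

lemma auxg_zero (n k : ℕ) (hk : 1 ≤ k) (hkn : k < n) :
    auxg n k 0 = ((-1 : ℂ) ^ (k + 1) / 2) * ((∑ l ∈ Finset.range (n + 1),
          (-1 : ℝ) ^ l * (n.choose l : ℝ) * (2 * (l : ℝ) - n) ^ k *
            Real.sign (2 * (l : ℝ) - n) : ℝ) : ℂ) := by
  have h := aux_fd n k hkn n
  have : auxg n k 0 = auxg n k 0 - 1 / 2 * 
    ∑ l ∈ range (n + 1), (-1 : ℂ) ^ l * (n.choose l : ℂ) * ((n : ℂ) - 2 * l) ^ k := by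
    rw [h]; simp
  rw [this]
  unfold auxg
  rw [Complex.ofReal_sum, mul_sum, mul_sum, ← sum_sub_distrib]
  refine sum_congr rfl fun l _ => ?_
  have e : (n : ℂ) - 2 * l = (-1) * ((2 * (l : ℝ) - n : ℝ) : ℂ) := by push_cast; ring
  rw [e, mul_pow]
  push_cast
  rw [zero_sub]
  rcases lt_trichotomy (2 * (l : ℝ) - n) 0 with h0 | h0 | h0
  · rw [Real.sign_of_neg h0, max_eq_left (by linarith)]
    push_cast
    rw [neg_pow (2 * (l : ℂ) - n), pow_succ]
    ring
  · rw [h0]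
    have : (2 * (l : ℂ) - n) = 0 := by exact_mod_cast h0
    simp [this, show k ≠ 0 by omega]
  · rw [Real.sign_of_pos h0, max_eq_right (by linarith)]
    push_cast
    rw [zero_pow (by omega), pow_succ]
    ring

theorem stmt_0 (n m : ℕ) (hm : 2 ≤ m) (hmn : m ≤ n) (hpar : Even (n - m)) :
    Integrable (fun x : ℝ => Real.sin x ^ n / x ^ m) ∧
    ∫ x : ℝ, Real.sin x ^ n / x ^ m =
      (-1 : ℝ) ^ ((n + m) / 2) * Real.pi / (2 ^ n * (Nat.factorial (m - 1))) *
        ∑ l ∈ Finset.range (n + 1),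
          (-1 : ℝ) ^ l * (n.choose l : ℝ) * (2 * (l : ℝ) - n) ^ (m - 1) *
            Real.sign (2 * (l : ℝ) - n) := by
  refine ⟨aux_integrable n m hm hmn, ?_⟩
  obtain ⟨k, rfl⟩ : ∃ k, m = k + 1 := ⟨m - 1, by omega⟩
  simp only [add_tsub_cancel_right]
  have h1 := aux_main n k (by omega) (by omega)
  rw [auxg_zero n k (by omega) (by omega)] at h1
  obtain ⟨d, hd⟩ := hpar
  obtain rfl : n = k + 1 + 2 * d := by omega
  have h2 : (k + 1 + 2 * d + (k + 1)) / 2 = k + 1 + d := by omega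
  rw [h2]
  generalize (∑ l ∈ Finset.range (k + 1 + 2 * d + 1),
          (-1 : ℝ) ^ l * ((k + 1 + 2 * d).choose l : ℝ) * (2 * (l : ℝ) - (k + 1 + 2 * d : ℕ)) ^ k *
            Real.sign (2 * (l : ℝ) - (k + 1 + 2 * d : ℕ))) = S at *
  generalize (∫ x : ℝ, Real.sin x ^ (k + 1 + 2 * d) / x ^ (k + 1)) = J at *
  have h3 : (2 * Complex.I) ^ (k + 1 + 2 * d) / Complex.I ^ (k + 1) = 
      2 ^ (k + 1 + 2 * d) * (-1) ^ d := by
    rw [mul_pow, pow_add Complex.I, pow_mul Complex.I, Complex.I_sq]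
    have := Complex.I_ne_zero
    field_simp
  rw [mul_div_assoc, h3] at h1
  have h4 : (-1 : ℝ) ^ (k + 1) / 2 * S = (2 * π)⁻¹ * (k.factorial * (2 ^ (k + 1 + 2 * d) * (-1) ^ d)) * J := by
    exact_mod_cast h1
  have hf : (k.factorial : ℝ) ≠ 0 := by exact_mod_cast k.factorial_ne_zero
  have hp := Real.pi_ne_zero
  have hs : ((-1 : ℝ) ^ d) * (-1) ^ d = 1 := by rw [← mul_pow]; simp
  rw [div_mul_eq_mul_div, eq_div_iff (by positivity), pow_add (-1 : ℝ) (k + 1) d]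
  have h5 : (-1 : ℝ) ^ (k + 1) * S * π = (k.factorial * (2 ^ (k + 1 + 2 * d) * (-1) ^ d)) * J := by
    have : (-1 : ℝ) ^ (k + 1) * S * π = 2 * π * ((-1 : ℝ) ^ (k + 1) / 2 * S) := by ring
    rw [this, h4]; field_simp
  linear_combination (-(-1 : ℝ) ^ d) * h5 - J * k.factorial * 2 ^ (k + 1 + 2 * d) * hs
end

section
/- For every integer n ≥ 2, the function x ↦ sin^n(x)/x^n is Lebesgue integrable on ℝ and ∫_ℝ sin^n(x)/x^n dx = π/(2^{n−1}(n−1)!) · ∑_{l=0}^{⌊n/2⌋} (−1)^l · binom(n,l) · (n−2l)^{n−1}. -/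
open MeasureTheory Real Finset

lemma integrable_of_bound {f : ℝ → ℝ} (C : ℝ) (hm : Measurable f)
    (hf : ∀ x, (1 + x ^ 2) * |f x| ≤ C) : Integrable f := by
  refine (integrable_inv_one_add_sq.const_mul C).mono' hm.aestronglyMeasurable ?_
  filter_upwards with x
  rw [Real.norm_eq_abs, ← div_eq_mul_inv, le_div_iff₀ (by positivity), mul_comm]
  exact hf x

lemma integrable_sin_pow (n : ℕ) (hn : 2 ≤ n) :
    Integrable (fun x : ℝ => Real.sin x ^ n / x ^ n) := by
  refine integrable_of_bound 2 (by fun_prop) fun x => ?_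
  rcases eq_or_ne x 0 with rfl | hx
  · simp; 
    rw [zero_pow (by omega)]; simp
  obtain ⟨k, rfl⟩ := Nat.exists_eq_add_of_le hn
  rw [← div_pow, abs_pow, pow_add]
  have h1 : |sin x / x| ≤ 1 := by
    rw [abs_div, div_le_one (abs_pos.2 hx)]
    exact abs_sin_le_abs
  have h2 : |sin x / x| ^ k ≤ 1 := pow_le_one₀ (abs_nonneg _) h1
  have h3 : |sin x / x| ^ 2 ≤ 1 := pow_le_one₀ (abs_nonneg _) h1
  have h4 : x ^ 2 * |sin x / x| ^ 2 ≤ 1 := by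
    rw [sq_abs, div_pow]; field_simp; exact sin_sq_le_one x
  calc _ = ((1 + x ^ 2) * |sin x / x| ^ 2) * |sin x / x| ^ k := by ring
    _ ≤ ((1 + x ^ 2) * |sin x / x| ^ 2) * 1 := by gcongr
    _ ≤ 2 := by linarith

lemma integrable_one_sub_cos : Integrable (fun x : ℝ => (1 - cos x) / x ^ 2) := by
  refine integrable_of_bound 3 (by fun_prop) fun x => ?_
  rcases eq_or_ne x 0 with rfl | hx
  · simp
  have := cos_le_one x
  have := neg_one_le_cos x
  have := one_sub_sq_div_two_le_cos (x := x)
  have hx2 : 0 < x ^ 2 := by positivity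
  rw [abs_of_nonneg (div_nonneg (by linarith) hx2.le), ← mul_div_assoc, div_le_iff₀ hx2]
  nlinarith

lemma lap (t : ℝ) (ht : 0 < t) :
    IntegrableOn (fun x : ℝ => (1 - cos x) * (t * exp (-(t * x)))) (Set.Ioi 0) ∧
    ∫ x in Set.Ioi (0:ℝ), (1 - cos x) * (t * exp (-(t * x))) = (1 + t ^ 2)⁻¹ := by
  let G : ℝ → ℝ := fun x => exp (-(t * x)) * (-1 + t * (t * cos x - sin x) / (t ^ 2 + 1))
  have hG : ∀ x ∈ Set.Ici (0:ℝ), HasDerivAt G ((1 - cos x) * (t * exp (-(t * x)))) x := by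
    intro x _
    have h1 : HasDerivAt (fun x : ℝ => exp (-(t * x))) (exp (-(t * x)) * (-(t * 1))) x :=
      (((hasDerivAt_id x).const_mul t).neg).exp
    have h2 : HasDerivAt (fun x : ℝ => -1 + t * (t * cos x - sin x) / (t ^ 2 + 1))
        (t * (t * (-sin x) - cos x) / (t ^ 2 + 1)) x :=
      (((((hasDerivAt_cos x).const_mul t).sub (hasDerivAt_sin x)).const_mul t).div_const _).const_add _
    refine (h1.mul h2).congr_deriv ?_
    have : t ^ 2 + 1 ≠ 0 := by positivity
    field_simp
    ring
  have hpos : ∀ x ∈ Set.Ioi (0:ℝ), 0 ≤ (1 - cos x) * (t * exp (-(t * x))) := by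
    intro x _
    have := cos_le_one x
    exact mul_nonneg (by linarith) (by positivity)
  have hlim : Filter.Tendsto G Filter.atTop (nhds 0) := by
    have h1 : Filter.Tendsto (fun x : ℝ => exp (-(t * x))) Filter.atTop (nhds 0) :=
      tendsto_exp_neg_atTop_nhds_zero.comp (Filter.tendsto_id.const_mul_atTop ht)
    refine Filter.Tendsto.zero_mul_isBoundedUnder_le h1 ?_
    refine ⟨1 + t * (t + 1), ?_⟩
    simp only [Filter.eventually_map]
    filter_upwards with x
    simp only [Function.comp, Real.norm_eq_abs]
    refine (abs_add_le _ _).trans ?_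
    rw [abs_neg, abs_one, abs_div, abs_mul, abs_of_pos ht, abs_of_pos (show 0 < t ^ 2 + 1 by positivity)]
    gcongr
    refine (div_le_self (by positivity) (by nlinarith)).trans ?_
    gcongr
    refine (abs_sub _ _).trans ?_
    rw [abs_mul, abs_of_pos ht]
    have := abs_cos_le_one x
    have := abs_sin_le_one x
    nlinarith
  refine ⟨integrableOn_Ioi_deriv_of_nonneg' hG hpos hlim, ?_⟩
  rw [integral_Ioi_of_hasDerivAt_of_nonneg' hG hpos hlim]
  simp [G]
  field_simp
  ring

lemma lap2 (x : ℝ) (hx : 0 < x) :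
    IntegrableOn (fun t : ℝ => t * exp (-(t * x))) (Set.Ioi 0) ∧
    ∫ t in Set.Ioi (0:ℝ), t * exp (-(t * x)) = 1 / x ^ 2 := by
  have h := Real.integral_rpow_mul_exp_neg_mul_Ioi (a := 2) (r := x) (by norm_num) hx
  have e : ∀ t : ℝ, t ^ ((2:ℝ) - 1) * exp (-(x * t)) = t * exp (-(t * x)) := by
    intro t; norm_num; left; ring
  simp only [e] at h
  have h' : ∫ t in Set.Ioi (0:ℝ), t * exp (-(t * x)) = 1 / x ^ 2 := by
    rw [h]; norm_num
  refine ⟨?_, h'⟩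
  by_contra hc
  rw [integral_undef hc] at h'
  have : 0 < 1 / x ^ 2 := by positivity
  linarith

lemma half_integral : ∫ x in Set.Ioi (0:ℝ), (1 - cos x) / x ^ 2 = π / 2 := by
  have key : Integrable (Function.uncurry fun x t : ℝ => (1 - cos x) * (t * exp (-(t * x))))
      ((volume.restrict (Set.Ioi 0)).prod (volume.restrict (Set.Ioi 0))) := by
    have hc : Continuous (Function.uncurry fun x t : ℝ => (1 - cos x) * (t * exp (-(t * x)))) := by
      unfold Function.uncurry; fun_prop
    rw [integrable_prod_iff hc.aestronglyMeasurable]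
    constructor
    · filter_upwards [ae_restrict_mem measurableSet_Ioi] with x hx
      exact (lap2 x hx).1.const_mul (1 - cos x)
    · refine (integrable_one_sub_cos.integrableOn (s := Set.Ioi 0)).congr ?_
      filter_upwards [ae_restrict_mem measurableSet_Ioi] with x hx
      have := cos_le_one x
      rw [div_eq_mul_one_div, ← (lap2 x hx).2, ← integral_const_mul]
      refine setIntegral_congr_fun measurableSet_Ioi fun t ht => ?_
      have ht : (0:ℝ) < t := ht
      simp only [Function.uncurry]
      rw [Real.norm_of_nonneg]
      exact mul_nonneg (by linarith) (by positivity)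
  have hs := integral_integral_swap key
  have hI : ∫ t in Set.Ioi (0:ℝ), (1 + t ^ 2)⁻¹ = π / 2 := by simp
  rw [← hI]
  calc _ = ∫ x in Set.Ioi (0:ℝ), ∫ t in Set.Ioi (0:ℝ), (1 - cos x) * (t * exp (-(t * x))) := by
        refine setIntegral_congr_fun measurableSet_Ioi fun x hx => ?_
        beta_reduce
        rw [integral_const_mul, (lap2 x hx).2, div_eq_mul_one_div]
    _ = _ := hs
    _ = _ := setIntegral_congr_fun measurableSet_Ioi fun t ht => (lap t ht).2

lemma full_integral : ∫ x : ℝ, (1 - cos x) / x ^ 2 = π := by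
  have := integral_comp_abs (f := fun x : ℝ => (1 - cos x) / x ^ 2)
  simp only [cos_abs, sq_abs] at this
  rw [this, half_integral]; ring

lemma cos_int (b : ℝ) : Integrable (fun x : ℝ => (1 - cos (b * x)) / x ^ 2) ∧
    ∫ x : ℝ, (1 - cos (b * x)) / x ^ 2 = π * |b| := by
  have e : (fun x : ℝ => (1 - cos (b * x)) / x ^ 2) =
      fun x => b ^ 2 * ((1 - cos (b * x)) / (b * x) ^ 2) := by
    funext x
    rcases eq_or_ne b 0 with rfl | hb
    · simp
    rcases eq_or_ne x 0 with rfl | hx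
    · simp
    field_simp
  rcases eq_or_ne b 0 with rfl | hb
  · simp
  rw [e]
  refine ⟨(integrable_one_sub_cos.comp_mul_left' hb).const_mul _, ?_⟩
  rw [integral_const_mul, Measure.integral_comp_mul_left (fun x : ℝ => (1 - cos x) / x ^ 2) b,
    full_integral, abs_inv, ← sq_abs, smul_eq_mul]
  have := abs_pos.2 hb
  field_simp

/-- `y^k sign y`. -/
noncomputable def phi (k : ℕ) (y : ℝ) : ℝ := y ^ (k - 1) * |y|

lemma phi_deriv (k : ℕ) (y : ℝ) : HasDerivAt (phi (k + 2)) ((k + 2 : ℝ) * phi (k + 1) y) y := by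
  unfold phi
  simp only [Nat.add_sub_cancel, show k + 2 - 1 = k + 1 by omega]
  rcases lt_trichotomy y 0 with hy | rfl | hy
  · have h : HasDerivAt (fun y : ℝ => -(y ^ (k + 2))) (-(((k + 2 : ℕ) : ℝ) * y ^ (k + 1))) y :=
      (hasDerivAt_pow (k + 2) y).neg
    refine (h.congr_of_eventuallyEq ?_).congr_deriv ?_
    · filter_upwards [gt_mem_nhds hy] with z hz
      rw [abs_of_neg hz]; ring
    · rw [abs_of_neg hy]; push_cast; ring
  · have h : HasDerivAt (fun y : ℝ => y * |y|) 0 0 := by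
      rw [hasDerivAt_iff_isLittleO_nhds_zero]
      simp only [zero_add, abs_zero, mul_zero, sub_zero, smul_zero]
      have : (fun y : ℝ => |y|) =o[nhds 0] (fun _ => (1:ℝ)) := by
        rw [Asymptotics.isLittleO_one_iff]
        simpa using (continuous_abs (G := ℝ)).tendsto 0
      simpa using (Asymptotics.isBigO_refl (fun y : ℝ => y) (nhds 0)).mul_isLittleO this
    have h2 := (hasDerivAt_pow k (0:ℝ)).mul h
    refine (h2.congr_of_eventuallyEq ?_).congr_deriv ?_
    · filter_upwards with z
      simp; ring
    · simp
  · have h : HasDerivAt (fun y : ℝ => (y ^ (k + 2))) ((((k + 2 : ℕ) : ℝ) * y ^ (k + 1))) y :=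
      (hasDerivAt_pow (k + 2) y)
    refine (h.congr_of_eventuallyEq ?_).congr_deriv ?_
    · filter_upwards [lt_mem_nhds hy] with z hz
      rw [abs_of_pos hz]; ring
    · rw [abs_of_pos hy]; push_cast; ring

lemma phi_cont (k : ℕ) : Continuous (phi k) := by unfold phi; fun_prop

lemma phi_int (k : ℕ) (c a : ℝ) : ∫ b in (a - 1)..(a + 1), phi (k + 1) (b + c) =
    (phi (k + 2) (a + 1 + c) - phi (k + 2) (a - 1 + c)) / (k + 2) := by
  have h : ∀ b ∈ Set.uIcc (a - 1) (a + 1),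
      HasDerivAt (fun b => phi (k + 2) (b + c) / (k + 2)) (phi (k + 1) (b + c)) b := by
    intro b _
    refine (((phi_deriv k (b + c)).comp_add_const b c).div_const (k + 2 : ℝ)).congr_deriv ?_
    field_simp
  rw [intervalIntegral.integral_eq_sub_of_hasDerivAt h
    (((phi_cont _).comp (by fun_prop)).intervalIntegrable _ _)]
  ring

lemma pascal_sum (n : ℕ) (f : ℕ → ℝ) :
    ∑ l ∈ range (n + 2), (-1 : ℝ) ^ l * ((n + 1).choose l : ℝ) * f l =
    ∑ l ∈ range (n + 1), (-1 : ℝ) ^ l * (n.choose l : ℝ) * (f l - f (l + 1)) := by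
  simp only [mul_sub, sum_sub_distrib]
  rw [sum_range_succ', sum_congr rfl fun l _ => by rw [Nat.choose_succ_succ]]
  simp only [Nat.cast_add, mul_add, add_mul, sum_add_distrib]
  have h2 : ∑ l ∈ range (n + 1), (-1 : ℝ) ^ l * (n.choose l : ℝ) * f l =
      ∑ l ∈ range (n + 1), (-1 : ℝ) ^ (l + 1) * (n.choose (l + 1) : ℝ) * f (l + 1) +
       (-1 : ℝ) ^ 0 * (n.choose 0 : ℝ) * f 0 := by
    rw [← sum_range_succ' (fun l => (-1 : ℝ) ^ l * (n.choose l : ℝ) * f l), sum_range_succ _ (n+1)]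
    simp
  rw [h2]
  have h3 : ∑ l ∈ range (n + 1), (-1 : ℝ) ^ (l + 1) * (n.choose l : ℝ) * f (l + 1) =
     - ∑ l ∈ range (n + 1), (-1 : ℝ) ^ l * (n.choose l : ℝ) * f (l + 1) := by
    rw [← sum_neg_distrib]
    exact sum_congr rfl fun l _ => by ring
  rw [h3]
  simp
  ring

lemma sinc_cos (a x : ℝ) (hx : x ≠ 0) :
    sin x / x * cos (a * x) = 1 / 2 * ∫ b in (a - 1)..(a + 1), cos (b * x) := by
  rw [intervalIntegral.integral_comp_mul_right _ hx, integral_cos, smul_eq_mul, add_mul, sub_mul, one_mul, sin_add, sin_sub]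
  field_simp
  ring

lemma main_int (k : ℕ) : ∀ a : ℝ, ∫ x : ℝ, sin x ^ (k + 2) / x ^ (k + 2) * cos (a * x) =
    π / (2 ^ (k + 2) * (k + 1).factorial) *
      ∑ l ∈ range (k + 3), (-1 : ℝ) ^ l * ((k + 2).choose l : ℝ) *
        phi (k + 1) (a + ((k + 2 : ℝ) - 2 * l)) := by
  induction k with
  | zero =>
    intro a
    have e : ∀ x : ℝ, sin x ^ (0 + 2) / x ^ (0 + 2) * cos (a * x) =
        1 / 4 * ((1 - cos ((a + 2) * x)) / x ^ 2 + (1 - cos ((a - 2) * x)) / x ^ 2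
          - 2 * ((1 - cos (a * x)) / x ^ 2)) := by
      intro x
      have h1 : cos ((a + 2) * x) + cos ((a - 2) * x) = 2 * cos (a * x) * (1 - 2 * sin x ^ 2) := by
        rw [add_mul, sub_mul, cos_add, cos_sub, cos_two_mul, cos_sq']; ring
      have h2 : cos ((a + 2) * x) = 2 * cos (a * x) * (1 - 2 * sin x ^ 2) - cos ((a - 2) * x) := by
        linarith
      rw [h2]; ring
    simp only [e]
    rw [integral_const_mul, integral_sub (by exact (cos_int _).1.add (cos_int _).1) ((cos_int _).1.const_mul _),
      integral_add (cos_int _).1 (cos_int _).1, integral_const_mul, (cos_int _).2, (cos_int _).2,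
      (cos_int _).2]
    simp [phi, sum_range_succ]
    ring_nf
  | succ k ih =>
    intro a
    have hi := integrable_sin_pow (k + 2) (by omega)
    have e : ∫ x : ℝ, sin x ^ (k + 1 + 2) / x ^ (k + 1 + 2) * cos (a * x) =
        ∫ x : ℝ, 1 / 2 * ∫ b in (a - 1)..(a + 1), sin x ^ (k + 2) / x ^ (k + 2) * cos (b * x) := by
      refine integral_congr_ae ?_
      filter_upwards [compl_mem_ae_iff.2 (measure_singleton (0:ℝ))] with x hx
      have hx : x ≠ 0 := hx
      rw [intervalIntegral.integral_const_mul, mul_left_comm, ← sinc_cos a x hx]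
      field_simp
      ring
    have key : Integrable (Function.uncurry fun x b : ℝ => sin x ^ (k + 2) / x ^ (k + 2) * cos (b * x))
        (volume.prod (volume.restrict (Set.Ioc (a - 1) (a + 1)))) := by
      have h1 : Integrable (fun z : ℝ × ℝ => (sin z.1 ^ (k + 2) / z.1 ^ (k + 2)) * 1)
        (volume.prod (volume.restrict (Set.Ioc (a - 1) (a + 1)))) :=
        hi.mul_prod (integrable_const (1:ℝ))
      refine h1.mono (Measurable.aestronglyMeasurable (by unfold Function.uncurry; fun_prop)) ?_
      filter_upwards with z
      simp only [Function.uncurry, norm_mul]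
      gcongr
      simpa using abs_cos_le_one _
    rw [e, integral_const_mul]
    simp only [intervalIntegral.integral_of_le (show a - 1 ≤ a + 1 by linarith)]
    rw [integral_integral_swap key]
    simp only [ih]
    rw [← intervalIntegral.integral_of_le (by linarith), intervalIntegral.integral_const_mul,
      intervalIntegral.integral_finsetSum]
    swap
    · intro l _
      exact (((phi_cont _).comp (by fun_prop)).const_mul _).intervalIntegrable _ _
    simp only [intervalIntegral.integral_const_mul, phi_int]
    have hp := pascal_sum (k + 2) fun l => phi (k + 2) (a + 1 + ((k + 2 : ℝ) - 2 * l))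
    have e2 : ∀ l : ℕ, phi (k + 2) (a + ((((k + 1 : ℕ) : ℝ) + 2) - 2 * l)) =
      phi (k + 2) (a + 1 + ((k + 2 : ℝ) - 2 * l)) := by
      intro l; congr 1; push_cast; ring
    have e3 : ∀ l : ℕ, phi (k + 2) (a - 1 + ((k + 2 : ℝ) - 2 * l)) =
      phi (k + 2) (a + 1 + ((k + 2 : ℝ) - 2 * ((l + 1 : ℕ) : ℝ))) := by
      intro l; congr 1; push_cast; ring
    simp only [e2, e3, show k + 1 + 1 = k + 2 from rfl, show k + 1 + 2 = k + 2 + 1 from rfl,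
      show k + 1 + 3 = k + 2 + 2 from rfl]
    rw [hp]
    simp only [mul_div_assoc', ← sum_div]
    rw [show (k + 2).factorial = (k + 2) * (k + 1).factorial from Nat.factorial_succ _]
    push_cast
    have := Nat.factorial_pos (k + 1)
    field_simp
    ring

lemma half_sum (n : ℕ) (f : ℕ → ℝ) (hs : ∀ l ≤ n, f (n - l) = f l) (h0 : ∀ l, 2 * l = n → f l = 0) :
    ∑ l ∈ range (n + 1), f l = 2 * ∑ l ∈ range (n / 2 + 1), f l := by
  rw [two_mul]
  have h1 : ∑ l ∈ range (n / 2 + 1), f l = ∑ l ∈ (range (n + 1)).filter (fun l => 2 * l ≤ n), f l := by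
    congr 1; ext l; simp; omega
  have h2 : ∑ l ∈ range (n / 2 + 1), f l = ∑ l ∈ (range (n + 1)).filter (fun l => ¬ 2 * l ≤ n), f l := by
    rw [h1, ← sum_filter_add_sum_filter_not _ (fun l => 2 * l = n), sum_eq_zero, zero_add]
    · refine sum_bij' (fun l _ => n - l) (fun l _ => n - l) ?_ ?_ ?_ ?_ ?_
      · intro l; simp; omega
      · intro l; simp; omega
      · intro l; simp; omega
      · intro l; simp; omega
      · intro l hl
        simp at hl
        exact (hs l (by omega)).symm
    · intro l hl
      simp at hl
      exact h0 l hl.2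
  nth_rewrite 1 [h1]
  rw [h2, sum_filter_add_sum_filter_not]

theorem stmt_1 (n : ℕ) (hn : 2 ≤ n) :
    Integrable (fun x : ℝ => Real.sin x ^ n / x ^ n) ∧
    ∫ x : ℝ, Real.sin x ^ n / x ^ n =
      Real.pi / (2 ^ (n - 1) * (Nat.factorial (n - 1))) *
        ∑ l ∈ Finset.range (n / 2 + 1),
          (-1 : ℝ) ^ l * (n.choose l : ℝ) * ((n : ℝ) - 2 * l) ^ (n - 1) := by
  refine ⟨integrable_sin_pow n hn, ?_⟩
  obtain ⟨k, rfl⟩ := Nat.exists_eq_add_of_le' hn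
  have h := main_int k 0
  simp only [zero_mul, cos_zero, mul_one, zero_add] at h
  rw [h, show k + 3 = k + 2 + 1 from rfl, half_sum]
  · rw [show k + 2 - 1 = k + 1 by omega]
    have : ∀ l ∈ range ((k + 2) / 2 + 1), (-1 : ℝ) ^ l * ((k + 2).choose l : ℝ) *
        phi (k + 1) ((k + 2 : ℝ) - 2 * l) =
        (-1 : ℝ) ^ l * ((k + 2).choose l : ℝ) * (((k + 2 : ℕ) : ℝ) - 2 * l) ^ (k + 1) := by
      intro l hl
      have hl : 2 * l ≤ k + 2 := by simp at hl; omega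
      have hl : (2 * l : ℝ) ≤ k + 2 := by exact_mod_cast hl
      rw [phi, abs_of_nonneg (by linarith)]
      push_cast
      rw [pow_succ]
    rw [sum_congr rfl this]
    ring
  · intro l hl
    rw [Nat.choose_symm hl, Nat.cast_sub hl, phi, phi]
    have e : (k + 2 : ℝ) - 2 * (((k + 2 : ℕ) : ℝ) - l) = -((k + 2 : ℝ) - 2 * l) := by push_cast; ring
    rw [e, abs_neg, neg_pow ((k + 2 : ℝ) - 2 * l), Nat.add_sub_cancel]
    have : (-1 : ℝ) ^ (k + 2 - l) * (-1) ^ k = (-1) ^ l := by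
      rw [← pow_add]
      rw [show (-1 : ℝ) ^ l = (-1) ^ (l + 2 * (k + 1 - l) + 0) by rw [add_zero, pow_add, pow_mul]; simp]
      rcases Nat.lt_or_ge (k + 1) l with h | h
      · have : l = k + 2 := by omega
        subst this
        rw [show k + 2 - (k + 2) + k = k by omega, show k + 1 - (k + 2) = 0 by omega]
        ring
      · rw [show l + 2 * (k + 1 - l) + 0 = k + 2 - l + k by omega]
    rw [← this]; ring
  · intro l hl
    have : (2 * l : ℝ) = k + 2 := by exact_mod_cast hl
    rw [this]; simp [phi]
end

section
/- Let n, m be integers with n ≥ m ≥ 2 and n − m even. Then ∫_0^∞ sin^n(x)/x^m dx = −(−1)^{(m−n)/2} · π/(2^{n+1}(m−1)!) · ∑'_{l=0}^{n} (−1)^l · binom(n,l) · (n−2l)^{m−1} · sgn(2l−n), where ∑' means the term with 2l = n (if n is even) is omitted, sgn denotes the sign function, and the integral is a Lebesgue integral over (0,∞). -/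
open MeasureTheory Real Finset

/-- Iterated antiderivatives of cosine vanishing at the origin. -/
noncomputable def TT : ℕ → ℝ → ℝ
  | 0 => fun x => Real.cos x
  | (m + 1) => fun x => ∫ t in (0 : ℝ)..x, TT m t

lemma TT_cont (m : ℕ) : Continuous (TT m) := by
  induction m with
  | zero => exact Real.continuous_cos
  | succ m ih =>
    exact intervalIntegral.continuous_primitive (fun a b => ih.intervalIntegrable a b) 0

lemma TT_deriv (m : ℕ) (x : ℝ) : HasDerivAt (TT (m + 1)) (TT m x) x := by
  have h := TT_cont m
  exact intervalIntegral.integral_hasDerivAt_right (h.intervalIntegrable _ _)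
    (h.stronglyMeasurableAtFilter _ _) h.continuousAt

lemma TT_zero (m : ℕ) : TT (m + 1) 0 = 0 := by
  simp [TT]

lemma TT_one (x : ℝ) : TT 1 x = Real.sin x := by
  simp [TT]

lemma TT_two (x : ℝ) : TT 2 x = 1 - Real.cos x := by
  show ∫ t in (0 : ℝ)..x, TT 1 t = _
  simp [TT_one]

lemma TT_neg (m : ℕ) : ∀ x, TT m (-x) = (-1) ^ m * TT m x := by
  induction m with
  | zero => intro x; simp [TT]
  | succ m ih =>
    intro x
    show ∫ t in (0 : ℝ)..(-x), TT m t = (-1) ^ (m + 1) * ∫ t in (0 : ℝ)..x, TT m t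
    have h := intervalIntegral.integral_comp_neg (a := 0) (b := x) (TT m)
    simp only [ih, neg_zero] at h
    rw [intervalIntegral.integral_symm, ← h, intervalIntegral.integral_const_mul]
    ring

lemma TT_bound1 (m : ℕ) : ∀ x, 0 ≤ x → |TT m x| ≤ x ^ m := by
  induction m with
  | zero => intro x _; simpa [TT] using Real.abs_cos_le_one x
  | succ m ih =>
    intro x hx
    have h := intervalIntegral.norm_integral_le_of_norm_le_const (a := 0) (b := x) (f := TT m)
      (C := x ^ m) (by
        intro t ht
        rw [Set.uIoc_of_le hx] at ht
        exact (ih t ht.1.le).trans (pow_le_pow_left₀ ht.1.le ht.2 m))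
    rw [sub_zero, abs_of_nonneg hx, ← pow_succ] at h
    exact h

lemma TT_bound2 (m : ℕ) : ∀ x, 0 ≤ x → |TT (m + 2) x| ≤ 2 * x ^ m := by
  induction m with
  | zero =>
    intro x _
    rw [TT_two, abs_le]
    constructor <;> simp <;> linarith [Real.neg_one_le_cos x, Real.cos_le_one x]
  | succ m ih =>
    intro x hx
    have h := intervalIntegral.norm_integral_le_of_norm_le_const (a := 0) (b := x) (f := TT (m + 2))
      (C := 2 * x ^ m) (by
        intro t ht
        rw [Set.uIoc_of_le hx] at ht
        refine (ih t ht.1.le).trans ?_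
        have := pow_le_pow_left₀ ht.1.le ht.2 m
        linarith)
    rw [sub_zero, abs_of_nonneg hx, mul_assoc, ← pow_succ] at h
    exact h

lemma TT_poly (m : ℕ) : ∃ P : ℕ → ℝ, ∀ x,
    TT m x = Real.cos (x - m * (π / 2)) + ∑ j ∈ range m, P j * x ^ j := by
  induction m with
  | zero => exact ⟨0, fun x => by simp [TT]⟩
  | succ m ih =>
    obtain ⟨P, hP⟩ := ih
    refine ⟨fun j => Nat.casesOn j (-Real.cos (0 - (m + 1 : ℕ) * (π / 2)))
      (fun i => P i / (i + 1)), fun x => ?_⟩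
    rw [Finset.sum_range_succ']
    show ∫ t in (0 : ℝ)..x, TT m t = _
    rw [intervalIntegral.integral_eq_sub_of_hasDerivAt
      (f := fun x => Real.cos (x - (m + 1 : ℕ) * (π / 2)) +
        ∑ j ∈ range m, P j / (j + 1) * x ^ (j + 1)) _ ((TT_cont m).intervalIntegrable _ _)]
    · simp
      ring
    · intro t _
      rw [hP]
      refine HasDerivAt.add ?_ (HasDerivAt.fun_sum fun j _ => ?_)
      · have h := ((hasDerivAt_id t).sub_const ((m + 1 : ℕ) * (π / 2))).cos
        convert! h using 1
        have : t - (m + 1 : ℕ) * (π / 2) = (t - m * (π / 2)) - π / 2 := by push_cast; ring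
        simp only [id, this, Real.sin_sub_pi_div_two]
        ring
      · have h := (hasDerivAt_pow (j + 1) t).const_mul (P j / (j + 1))
        convert! h using 1
        have : (j : ℝ) + 1 ≠ 0 := by positivity
        push_cast
        field_simp

lemma findiff (n j : ℕ) (hj : j < n) (x : ℝ) :
    ∑ l ∈ range (n + 1), (-1 : ℝ) ^ l * (n.choose l : ℝ) * (((n : ℝ) - 2 * l) * x) ^ j = 0 := by
  let Q : Polynomial ℝ := (Polynomial.C (n * x) + Polynomial.C (-2 * x) * Polynomial.X) ^ j
  have hQ : Q.natDegree < n := by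
    refine lt_of_le_of_lt ?_ hj
    refine (Polynomial.natDegree_pow_le).trans ?_
    have : (Polynomial.C (n * x) + Polynomial.C (-2 * x) * Polynomial.X).natDegree ≤ 1 := by
      compute_degree
    nlinarith
  have h := congrFun (Polynomial.fwdDiff_iter_eq_zero_of_degree_lt hQ) 0
  rw [fwdDiff_iter_eq_sum_shift] at h
  have h2 : (-1 : ℝ) ^ n * ∑ l ∈ range (n + 1),
      (-1 : ℝ) ^ l * (n.choose l : ℝ) * (((n : ℝ) - 2 * l) * x) ^ j = 0 := by
    rw [← (show _ = (0 : ℝ) from h), Finset.mul_sum]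
    refine Finset.sum_congr rfl fun l hl => ?_
    have hl' : l ≤ n := by simpa [Nat.lt_succ_iff] using hl
    obtain ⟨k, rfl⟩ := Nat.exists_eq_add_of_le hl'
    simp [Q]
    have e : (-1 : ℝ) ^ (l + k) = (-1) ^ l * (-1) ^ k := pow_add _ _ _
    have e2 : (-1 : ℝ) ^ l * (-1) ^ l = 1 := by rw [← mul_pow]; simp
    have e3 : ((l + k : ℝ) - 2 * l) * x = (l + k) * x + -(2 * x * l) := by ring
    rw [e, e3]
    linear_combination ((-1) ^ k * ((l + k).choose l : ℝ) * ((l + k) * x + -(2 * x * l)) ^ j) * e2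
  exact (mul_eq_zero.mp h2).resolve_left (by simp)

lemma sin_pow_eq (n : ℕ) (x : ℝ) : 2 ^ n * Real.sin x ^ n =
    ∑ l ∈ range (n + 1), (-1 : ℝ) ^ l * (n.choose l : ℝ) *
      Real.cos (((n : ℝ) - 2 * l) * x - n * (π / 2)) := by
  set a : ℂ := Complex.exp (((x - π / 2 : ℝ) : ℂ) * Complex.I) with ha
  set b : ℂ := Complex.exp (((-(x + π / 2) : ℝ) : ℂ) * Complex.I) with hb
  have hab : -b + a = ((2 * Real.sin x : ℝ) : ℂ) := by
    rw [ha, hb, Complex.exp_mul_I, Complex.exp_mul_I, ← Complex.ofReal_cos, ← Complex.ofReal_sin,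
      ← Complex.ofReal_cos, ← Complex.ofReal_sin]
    simp only [Real.cos_neg, Real.sin_neg, Real.cos_add_pi_div_two, Real.sin_add_pi_div_two,
      Real.cos_sub_pi_div_two, Real.sin_sub_pi_div_two]
    push_cast
    ring
  have h := add_pow (-b) a n
  rw [hab] at h
  have h' := congrArg Complex.re h
  rw [← Complex.ofReal_pow, Complex.ofReal_re, mul_pow, Complex.re_sum] at h'
  rw [h']
  refine Finset.sum_congr rfl fun l hl => ?_
  have hl' : l ≤ n := by simpa [Nat.lt_succ_iff] using hl
  obtain ⟨k, rfl⟩ := Nat.exists_eq_add_of_le hl'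
  have e : (-b) ^ l * a ^ (l + k - l) * ((l + k).choose l : ℂ) =
      (((-1 : ℝ) ^ l * ((l + k).choose l : ℝ) : ℝ) : ℂ) *
      Complex.exp ((((((l + k : ℕ) : ℝ) - 2 * l) * x - (l + k : ℕ) * (π / 2) : ℝ) : ℂ) * Complex.I) := by
    have e1 : b ^ l * a ^ k = Complex.exp ((((((l + k : ℕ) : ℝ) - 2 * l) * x -
        (l + k : ℕ) * (π / 2) : ℝ) : ℂ) * Complex.I) := by
      rw [ha, hb, ← Complex.exp_nat_mul, ← Complex.exp_nat_mul, ← Complex.exp_add]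
      congr 1
      push_cast
      ring
    rw [← e1, Nat.add_sub_cancel_left, neg_pow]
    push_cast
    ring
  rw [e, Complex.re_ofReal_mul, Complex.exp_ofReal_mul_I_re]

lemma sin_pow_TT (m k : ℕ) (x : ℝ) (n : ℕ) (hn : n = m + 2 * k) : Real.sin x ^ n =
    (-1) ^ k / 2 ^ n * ∑ l ∈ range (n + 1), (-1 : ℝ) ^ l * (n.choose l : ℝ) *
      TT m (((n : ℝ) - 2 * l) * x) := by
  have h := sin_pow_eq n x
  obtain ⟨P, hP⟩ := TT_poly m
  have h0 : ∑ l ∈ range (n + 1), (-1 : ℝ) ^ l * (n.choose l : ℝ) *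
      ∑ j ∈ range m, P j * (((n : ℝ) - 2 * l) * x) ^ j = 0 := by
    simp_rw [Finset.mul_sum]
    rw [Finset.sum_comm]
    refine Finset.sum_eq_zero fun j hj => ?_
    have := findiff n j (by have := Finset.mem_range.mp hj; omega) x
    calc _ = P j * ∑ l ∈ range (n + 1),
        (-1 : ℝ) ^ l * (n.choose l : ℝ) * (((n : ℝ) - 2 * l) * x) ^ j := by
          rw [Finset.mul_sum]; refine Finset.sum_congr rfl fun l _ => by ring
      _ = 0 := by rw [this, mul_zero]
  simp_rw [hP, mul_add, Finset.sum_add_distrib]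
  rw [h0, add_zero]
  have hc : ∀ y : ℝ, Real.cos (y - n * (π / 2)) = (-1) ^ k * Real.cos (y - m * (π / 2)) := by
    intro y
    rw [← Real.cos_sub_nat_mul_pi]
    congr 1
    rw [hn]; push_cast; ring
  simp_rw [hc] at h
  have h3 : (2 : ℝ) ^ n ≠ 0 := by positivity
  field_simp
  rw [mul_comm, h, Finset.mul_sum]
  refine Finset.sum_congr rfl fun l _ => by ring

lemma lap_t (x : ℝ) (hx : 0 < x) :
    IntegrableOn (fun t => t * Real.exp (-(x * t))) (Set.Ioi 0) ∧
    ∫ t in Set.Ioi (0 : ℝ), t * Real.exp (-(x * t)) = 1 / x ^ 2 := by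
  have hd : ∀ t ∈ Set.Ici (0 : ℝ), HasDerivAt
      (fun t => -((t / x + 1 / x ^ 2) * Real.exp (-(x * t)))) (t * Real.exp (-(x * t))) t := by
    intro t _
    have h1 : HasDerivAt (fun t => -(x * t)) (-(x * 1)) t := ((hasDerivAt_id t).const_mul x).neg
    have h2 := ((((hasDerivAt_id t).div_const x).add_const (1 / x ^ 2)).mul h1.exp).neg
    convert! h2 using 1
    simp only [id]
    field_simp
    ring
  have hp : ∀ t ∈ Set.Ioi (0 : ℝ), 0 ≤ t * Real.exp (-(x * t)) :=
    fun t ht => mul_nonneg (le_of_lt ht) (Real.exp_pos _).le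
  have hl : Filter.Tendsto (fun t => -((t / x + 1 / x ^ 2) * Real.exp (-(x * t))))
      Filter.atTop (nhds 0) := by
    have hm : Filter.Tendsto (fun t : ℝ => x * t) Filter.atTop Filter.atTop :=
      Filter.tendsto_id.const_mul_atTop hx
    have h1 := (Real.tendsto_pow_mul_exp_neg_atTop_nhds_zero 1).comp hm
    have h0 := (Real.tendsto_pow_mul_exp_neg_atTop_nhds_zero 0).comp hm
    have h2 := ((h1.add h0).const_mul (1 / x ^ 2)).neg
    simp only [add_zero, mul_zero, neg_zero] at h2
    refine h2.congr fun t => ?_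
    simp only [Function.comp]
    field_simp
  refine ⟨integrableOn_Ioi_deriv_of_nonneg' hd hp hl, ?_⟩
  rw [integral_Ioi_of_hasDerivAt_of_nonneg' hd hp hl]
  simp

lemma lap_x (t : ℝ) (ht : 0 < t) :
    IntegrableOn (fun x => (1 - Real.cos x) * Real.exp (-(x * t))) (Set.Ioi 0) ∧
    ∫ x in Set.Ioi (0 : ℝ), (1 - Real.cos x) * Real.exp (-(x * t)) = 1 / (t * (1 + t ^ 2)) := by
  have hd : ∀ x ∈ Set.Ici (0 : ℝ), HasDerivAt
      (fun x => ((t * Real.cos x - Real.sin x) / (1 + t ^ 2) - 1 / t) * Real.exp (-(x * t)))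
      ((1 - Real.cos x) * Real.exp (-(x * t))) x := by
    intro x _
    have h1 : HasDerivAt (fun x => -(x * t)) (-(1 * t)) x := ((hasDerivAt_id x).mul_const t).neg
    have h2 := (((((Real.hasDerivAt_cos x).const_mul t).sub (Real.hasDerivAt_sin x)).div_const
      (1 + t ^ 2)).sub_const (1 / t)).mul h1.exp
    convert! h2 using 1
    simp only [Pi.sub_apply]
    have : 1 + t ^ 2 ≠ 0 := by positivity
    field_simp
    ring
  have hp : ∀ x ∈ Set.Ioi (0 : ℝ), 0 ≤ (1 - Real.cos x) * Real.exp (-(x * t)) :=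
    fun x _ => mul_nonneg (by linarith [Real.cos_le_one x]) (Real.exp_pos _).le
  have hl : Filter.Tendsto
      (fun x => ((t * Real.cos x - Real.sin x) / (1 + t ^ 2) - 1 / t) * Real.exp (-(x * t)))
      Filter.atTop (nhds 0) := by
    have hm : Filter.Tendsto (fun x : ℝ => x * t) Filter.atTop Filter.atTop :=
      Filter.tendsto_id.atTop_mul_const ht
    have h0 := (Real.tendsto_pow_mul_exp_neg_atTop_nhds_zero 0).comp hm
    have h2 := h0.const_mul ((t + 1) / (1 + t ^ 2) + 1 / t)
    rw [mul_zero] at h2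
    refine squeeze_zero_norm (fun x => ?_) h2
    simp only [Function.comp, pow_zero, one_mul, norm_mul, Real.norm_eq_abs, Real.abs_exp]
    refine mul_le_mul_of_nonneg_right ?_ (Real.exp_pos _).le
    refine (abs_sub _ _).trans ?_
    rw [abs_div, abs_of_pos (show 0 < 1 + t ^ 2 by positivity),
      abs_of_pos (show 0 < 1 / t by positivity)]
    gcongr
    refine (abs_sub _ _).trans ?_
    rw [abs_mul, abs_of_pos ht]
    have := Real.abs_cos_le_one x
    have := Real.abs_sin_le_one x
    nlinarith
  refine ⟨integrableOn_Ioi_deriv_of_nonneg' hd hp hl, ?_⟩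
  rw [integral_Ioi_of_hasDerivAt_of_nonneg' hd hp hl]
  simp
  field_simp
  ring

lemma base_lint : ∫⁻ x in Set.Ioi (0 : ℝ), ENNReal.ofReal ((1 - Real.cos x) / x ^ 2) =
    ENNReal.ofReal (π / 2) := by
  have h1 : ∫⁻ x in Set.Ioi (0 : ℝ), ENNReal.ofReal ((1 - Real.cos x) / x ^ 2) =
      ∫⁻ x in Set.Ioi (0 : ℝ), ∫⁻ t in Set.Ioi (0 : ℝ),
        ENNReal.ofReal ((1 - Real.cos x) * (t * Real.exp (-(x * t)))) := by
    refine setLIntegral_congr_fun measurableSet_Ioi fun x hx => ?_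
    obtain ⟨hi, he⟩ := lap_t x hx
    have hc : 0 ≤ 1 - Real.cos x := by linarith [Real.cos_le_one x]
    have hi2 := Integrable.const_mul hi (1 - Real.cos x)
    have := ofReal_integral_eq_lintegral_ofReal hi2 (by
      refine (ae_restrict_iff' measurableSet_Ioi).mpr (Filter.Eventually.of_forall fun t ht => ?_)
      exact mul_nonneg hc (mul_nonneg (le_of_lt ht) (Real.exp_pos _).le))
    rw [← this, integral_const_mul, he, mul_one_div]
  rw [h1, lintegral_lintegral_swap (by
    apply Measurable.aemeasurable
    unfold Function.uncurry
    fun_prop)]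
  have h2 : ∫⁻ t in Set.Ioi (0 : ℝ), ∫⁻ x in Set.Ioi (0 : ℝ),
        ENNReal.ofReal ((1 - Real.cos x) * (t * Real.exp (-(x * t)))) =
      ∫⁻ t in Set.Ioi (0 : ℝ), ENNReal.ofReal ((1 + t ^ 2)⁻¹) := by
    refine setLIntegral_congr_fun measurableSet_Ioi fun t ht => ?_
    obtain ⟨hi, he⟩ := lap_x t ht
    have ht' : (0 : ℝ) < t := ht
    have hi2 := Integrable.const_mul hi t
    have := ofReal_integral_eq_lintegral_ofReal hi2 (by
      refine Filter.Eventually.of_forall fun x => ?_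
      have hc : 0 ≤ 1 - Real.cos x := by linarith [Real.cos_le_one x]
      exact mul_nonneg ht'.le (mul_nonneg hc (Real.exp_pos _).le))
    simp_rw [mul_left_comm _ t]
    rw [← this, integral_const_mul, he]
    congr 1
    field_simp
  rw [h2, ← ofReal_integral_eq_lintegral_ofReal integrable_inv_one_add_sq.integrableOn
    (Filter.Eventually.of_forall fun t => by positivity), integral_Ioi_inv_one_add_sq]
  simp

lemma base_int : ∫ x in Set.Ioi (0 : ℝ), (1 - Real.cos x) / x ^ 2 = π / 2 := by
  rw [integral_eq_lintegral_of_nonneg_ae, base_lint, ENNReal.toReal_ofReal (by positivity)]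
  · refine Filter.Eventually.of_forall fun x => ?_
    exact div_nonneg (by linarith [Real.cos_le_one x]) (by positivity)
  · apply Measurable.aestronglyMeasurable
    fun_prop

lemma TT_int (m : ℕ) (hm : 2 ≤ m) :
    IntegrableOn (fun x => TT m x / x ^ m) (Set.Ioi 0) := by
  obtain ⟨k, rfl⟩ := Nat.exists_eq_add_of_le' hm
  refine Integrable.mono' ((integrable_inv_one_add_sq.const_mul 3).integrableOn) ?_ ?_
  · apply Measurable.aestronglyMeasurable
    exact (TT_cont _).measurable.div (by fun_prop)
  · refine (ae_restrict_iff' measurableSet_Ioi).mpr (Filter.Eventually.of_forall fun x hx => ?_)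
    have hx' : 0 < x := hx
    have h1 := TT_bound1 (k + 2) x hx'.le
    have h2 := TT_bound2 k x hx'.le
    rw [Real.norm_eq_abs, abs_div, abs_of_pos (pow_pos hx' (k + 2)), ← div_eq_mul_inv,
      div_le_div_iff₀ (by positivity) (by positivity)]
    have h3 : |TT (k + 2) x| * x ^ 2 ≤ 2 * x ^ k * x ^ 2 := by gcongr
    have h4 : x ^ (k + 2) = x ^ k * x ^ 2 := pow_add _ _ _
    nlinarith

lemma TT_val (k : ℕ) :
    ∫ x in Set.Ioi (0 : ℝ), TT (k + 2) x / x ^ (k + 2) = π / 2 / (Nat.factorial (k + 1)) := by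
  induction k with
  | zero => simpa [TT_two] using base_int
  | succ k ih =>
    have i1 := TT_int (k + 2) (by omega)
    have i2 := TT_int (k + 3) (by omega)
    have i3 := i1.sub (i2.const_mul ((k + 2 : ℕ) : ℝ))
    have hd : ∀ x ∈ Set.Ioi (0 : ℝ), HasDerivAt (fun x => TT (k + 3) x / x ^ (k + 2))
        (TT (k + 2) x / x ^ (k + 2) - ((k + 2 : ℕ) : ℝ) * (TT (k + 3) x / x ^ (k + 3))) x := by
      intro x hx
      have hx' : x ≠ 0 := ne_of_gt hx
      have h := (TT_deriv (k + 2) x).div (hasDerivAt_pow (k + 2) x) (pow_ne_zero _ hx')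
      convert! h using 1
      have : k + 2 - 1 = k + 1 := rfl
      rw [this]
      field_simp
      ring
    have hc : ContinuousWithinAt (fun x => TT (k + 3) x / x ^ (k + 2)) (Set.Ici 0) 0 := by
      unfold ContinuousWithinAt
      have e : TT (k + 3) 0 / 0 ^ (k + 2) = 0 := by simp
      simp only [e]
      refine squeeze_zero_norm' (a := fun x => x) ?_ ?_
      · filter_upwards [self_mem_nhdsWithin] with x hx
        rcases (show (0 : ℝ) ≤ x from hx).eq_or_lt with rfl | hx'
        · simp
        · rw [Real.norm_eq_abs, abs_div, abs_of_pos (pow_pos hx' (k + 2)),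
            div_le_iff₀ (by positivity), ← pow_succ']
          exact TT_bound1 (k + 3) x hx'.le
      · exact tendsto_nhdsWithin_of_tendsto_nhds Filter.tendsto_id
    have hl : Filter.Tendsto (fun x => TT (k + 3) x / x ^ (k + 2)) Filter.atTop (nhds 0) := by
      have h0 := (tendsto_inv_atTop_zero (𝕜 := ℝ)).const_mul 2
      rw [mul_zero] at h0
      refine squeeze_zero_norm' ?_ h0
      filter_upwards [Filter.eventually_gt_atTop 0] with x hx'
      rw [Real.norm_eq_abs, abs_div, abs_of_pos (pow_pos hx' (k + 2)),
            div_le_iff₀ (by positivity)]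
      refine (TT_bound2 (k + 1) x hx'.le).trans (le_of_eq ?_)
      field_simp
      try ring
    have h := integral_Ioi_of_hasDerivAt_of_tendsto hc hd i3 hl
    rw [integral_sub i1 (i2.const_mul _), integral_const_mul, ih] at h
    simp only [TT_zero, zero_div, sub_zero] at h
    have hk : ((k + 2 : ℕ) : ℝ) ≠ 0 := by positivity
    have hf : ((k + 1).factorial : ℝ) ≠ 0 := by positivity
    rw [show k + 1 + 1 = (k + 1) + 1 from rfl, Nat.factorial_succ (k + 1)]
    show ∫ x in Set.Ioi (0 : ℝ), TT (k + 3) x / x ^ (k + 3) = _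
    push_cast at h hk ⊢
    field_simp
    field_simp at h
    linarith

lemma TT_scale_pos (k : ℕ) (b : ℝ) (hb : 0 < b) :
    IntegrableOn (fun x => TT (k + 2) (b * x) / x ^ (k + 2)) (Set.Ioi 0) ∧
    ∫ x in Set.Ioi (0 : ℝ), TT (k + 2) (b * x) / x ^ (k + 2) =
      b ^ (k + 1) * (π / 2 / (Nat.factorial (k + 1))) := by
  have e : (fun x => TT (k + 2) (b * x) / x ^ (k + 2)) =
      fun x => b ^ (k + 2) * (TT (k + 2) (b * x) / (b * x) ^ (k + 2)) := by
    funext x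
    rw [mul_pow]
    by_cases hx : x = 0
    · simp [hx]
    · field_simp
  rw [e]
  constructor
  · have h := (integrableOn_Ioi_comp_mul_left_iff (fun x => TT (k + 2) x / x ^ (k + 2)) 0 hb).mpr
      (by rw [mul_zero]; exact TT_int (k + 2) (by omega))
    exact Integrable.const_mul h _
  · rw [integral_const_mul,
      integral_comp_mul_left_Ioi (fun x => TT (k + 2) x / x ^ (k + 2)) 0 hb, mul_zero, TT_val]
    simp only [smul_eq_mul]
    field_simp
    ring

lemma TT_scale (k : ℕ) (b : ℝ) :
    IntegrableOn (fun x => TT (k + 2) (b * x) / x ^ (k + 2)) (Set.Ioi 0) ∧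
    ∫ x in Set.Ioi (0 : ℝ), TT (k + 2) (b * x) / x ^ (k + 2) =
      b ^ (k + 1) * Real.sign b * (π / 2 / (Nat.factorial (k + 1))) := by
  rcases lt_trichotomy b 0 with hb | hb | hb
  · obtain ⟨h1, h2⟩ := TT_scale_pos k (-b) (by linarith)
    have e : (fun x => TT (k + 2) (b * x) / x ^ (k + 2)) =
        fun x => (-1) ^ (k + 2) * (TT (k + 2) (-b * x) / x ^ (k + 2)) := by
      funext x
      rw [← mul_div_assoc, ← TT_neg]
      congr 2
      ring
    rw [e]
    refine ⟨Integrable.const_mul h1 _, ?_⟩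
    rw [integral_const_mul, h2, Real.sign_of_neg hb, neg_pow b]
    have : (-1 : ℝ) ^ (k + 1) * (-1) ^ (k + 1) = 1 := by rw [← mul_pow]; simp
    rw [pow_succ _ (k + 1)]
    linear_combination (-(b ^ (k + 1) * (π / 2 / (Nat.factorial (k + 1))))) * this
  · subst hb
    simp [TT_zero]
  · rw [Real.sign_of_pos hb, mul_one]
    exact TT_scale_pos k b hb

theorem stmt_2 (n m : ℕ) (hm : 2 ≤ m) (hmn : m ≤ n) (hpar : Even (n - m)) :
    ∫ x in Set.Ioi (0 : ℝ), Real.sin x ^ n / x ^ m =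
      -((-1 : ℝ) ^ (((m : ℤ) - n) / 2)) * Real.pi /
          (2 ^ (n + 1) * (Nat.factorial (m - 1))) *
        ∑ l ∈ (Finset.range (n + 1)).filter (fun l => 2 * l ≠ n),
          (-1 : ℝ) ^ l * (n.choose l : ℝ) * ((n : ℝ) - 2 * l) ^ (m - 1) *
            Real.sign (2 * (l : ℝ) - n) := by
  obtain ⟨r, hr⟩ := hpar
  have hn : n = m + 2 * r := by omega
  obtain ⟨k, rfl⟩ := Nat.exists_eq_add_of_le' hm
  have hz : (-1 : ℝ) ^ ((((k + 2 : ℕ) : ℤ) - n) / 2) = (-1) ^ r := by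
    have : (((k + 2 : ℕ) : ℤ) - n) / 2 = -(r : ℤ) := by omega
    rw [this, zpow_neg, zpow_natCast, ← inv_pow]
    norm_num
  rw [hz]
  have hfil : ∑ l ∈ (Finset.range (n + 1)).filter (fun l => 2 * l ≠ n),
          (-1 : ℝ) ^ l * (n.choose l : ℝ) * ((n : ℝ) - 2 * l) ^ (k + 2 - 1) *
            Real.sign (2 * (l : ℝ) - n) =
      ∑ l ∈ Finset.range (n + 1), (-1 : ℝ) ^ l * (n.choose l : ℝ) * ((n : ℝ) - 2 * l) ^ (k + 1) *
            Real.sign (2 * (l : ℝ) - n) := by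
    refine Finset.sum_filter_of_ne fun l _ h h2 => h ?_
    have : (2 * (l : ℝ) - n) = 0 := by rw [← h2]; push_cast; ring
    rw [this, Real.sign_zero, mul_zero]
  rw [hfil]
  have hs : ∀ x : ℝ, Real.sin x ^ n / x ^ (k + 2) = ∑ l ∈ range (n + 1),
      ((-1) ^ r / 2 ^ n * ((-1 : ℝ) ^ l * (n.choose l : ℝ))) *
      (TT (k + 2) (((n : ℝ) - 2 * l) * x) / x ^ (k + 2)) := by
    intro x
    rw [sin_pow_TT (k + 2) r x n hn, Finset.mul_sum, Finset.sum_div]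
    refine Finset.sum_congr rfl fun l _ => by ring
  simp_rw [hs]
  rw [integral_finsetSum _ fun l _ => Integrable.const_mul (TT_scale k _).1 _, Finset.mul_sum]
  refine Finset.sum_congr rfl fun l _ => ?_
  rw [integral_const_mul, (TT_scale k _).2, show k + 2 - 1 = k + 1 from rfl,
    show (2 * (l : ℝ) - n) = -((n : ℝ) - 2 * l) by ring, Real.sign_neg, pow_succ 2 n]
  field_simp
end

section
/- For every real β > 0 and every real k ≠ 0, the alternating series ∑_{n=1}^{∞} (−1)^n/(β²n² + k²) converges and 2k · ∑_{n=1}^{∞} (−1)^n/(β²n² + k²) = π/(β · sinh(πk/β)) − 1/k. -/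
open Real

lemma aux_hasSum (y : ℝ) (hy : y ≠ 0) :
    HasSum (fun n : ℕ => 1 / (((n : ℝ) + 1) ^ 2 + y ^ 2))
      ((Real.pi * (Real.cosh (Real.pi * y) / Real.sinh (Real.pi * y)) - 1 / y) / (2 * y)) := by
  have hz : (y * Complex.I : ℂ) ∈ Complex.integerComplement := by
    rintro ⟨n, hn⟩
    have := congrArg Complex.im hn
    simp at this
    exact hy this.symm
  have h := (summable_cotTerm hz).hasSum
  have h2 := cot_series_rep' hz
  rw [← h2] at h
  have hyc : (y : ℂ) ≠ 0 := by exact_mod_cast hy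
  have hI := Complex.I_ne_zero
  have hs : Complex.sinh (Real.pi * y) ≠ 0 := by
    have : Real.sinh (Real.pi * y) ≠ 0 := by
      rw [Ne, Real.sinh_eq_zero]; exact mul_ne_zero Real.pi_ne_zero hy
    exact_mod_cast this
  have h3 := h.mul_left (Complex.I / (2 * y))
  rw [← Complex.hasSum_ofReal]
  convert! h3 using 1
  · funext n
    rw [cotTerm_identity hz]
    have hd : (((n : ℂ) + 1) ^ 2 + y ^ 2) ≠ 0 := by
      have : (((n : ℝ) + 1) ^ 2 + y ^ 2) ≠ 0 := by positivity
      exact_mod_cast this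
    have he : ((y : ℂ) * Complex.I + (n + 1)) * (y * Complex.I - (n + 1)) =
        - (((n : ℂ) + 1) ^ 2 + y ^ 2) := by
      linear_combination (y : ℂ) ^ 2 * Complex.I_sq
    rw [he]
    push_cast
    have : (Complex.I / (2 * y) * (2 * (y * Complex.I) * (1 / -(((n : ℂ) + 1) ^ 2 + y ^ 2)))) =
      Complex.I ^ 2 * (1 / -(((n : ℂ) + 1) ^ 2 + y ^ 2)) := by
      field_simp
    rw [this, Complex.I_sq]
    field_simp
  · rw [← mul_assoc, Complex.cot_eq_cos_div_sin, Complex.cos_mul_I, Complex.sin_mul_I]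
    push_cast
    have e1 : Complex.cosh (Real.pi * y) / (Complex.sinh (Real.pi * y) * Complex.I) =
      -Complex.I * (Complex.cosh (Real.pi * y) / Complex.sinh (Real.pi * y)) := by
      field_simp
      rw [Complex.I_sq]; ring
    have e2 : 1 / ((y : ℂ) * Complex.I) = -Complex.I * (1 / y) := by
      field_simp
      rw [Complex.I_sq]; ring
    rw [e1, e2]
    linear_combination ((Real.pi * (Complex.cosh (Real.pi * y) / Complex.sinh (Real.pi * y)) - 1 / (y : ℂ)) / (2 * y)) * Complex.I_sq

lemma aux_alt (y : ℝ) (hy : y ≠ 0) :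
    HasSum (fun n : ℕ => (-1 : ℝ) ^ (n + 1) / (((n : ℝ) + 1) ^ 2 + y ^ 2))
      ((Real.pi / Real.sinh (Real.pi * y) - 1 / y) / (2 * y)) := by
  have h1 := aux_hasSum y hy
  have h2 := (aux_hasSum (y / 2) (by positivity)).mul_left (1 / 2)
  set h : ℕ → ℝ := fun n => (1 + (-1 : ℝ) ^ (n + 1)) / (((n : ℝ) + 1) ^ 2 + y ^ 2) with hh
  have he : HasSum (fun k => h (2 * k)) 0 := by
    convert (hasSum_zero : HasSum (fun _ : ℕ => (0 : ℝ)) 0) using 2 with k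
    simp [hh, pow_succ, pow_mul]
  have ho : HasSum (fun k => h (2 * k + 1)) (1 / 2 * ((π * (cosh (π * (y / 2)) / sinh (π * (y / 2))) - 1 / (y / 2)) / (2 * (y / 2)))) := by
    convert! h2 using 2 with k
    simp only [hh, pow_succ, pow_mul]
    push_cast
    norm_num
    have : ((k : ℝ) + 1) ^ 2 + (y / 2) ^ 2 ≠ 0 := by positivity
    have : (2 * (k : ℝ) + 1 + 1) ^ 2 + y ^ 2 ≠ 0 := by positivity
    field_simp
    ring
  have h3 := (he.even_add_odd ho).sub h1
  convert! h3 using 1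
  · funext n
    simp only [hh]
    ring
  · have hu : Real.pi * (y / 2) ≠ 0 := mul_ne_zero Real.pi_ne_zero (by positivity)
    have hs : Real.sinh (Real.pi * (y / 2)) ≠ 0 := by rwa [Ne, Real.sinh_eq_zero]
    have hc : Real.cosh (Real.pi * (y / 2)) ≠ 0 := (Real.cosh_pos _).ne'
    have e : Real.pi * y = 2 * (Real.pi * (y / 2)) := by ring
    rw [e, Real.sinh_two_mul, Real.cosh_two_mul]
    have := Real.cosh_sq (Real.pi * (y / 2))
    generalize Real.cosh (Real.pi * (y / 2)) = c at *
    generalize Real.sinh (Real.pi * (y / 2)) = s at *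
    field_simp
    linear_combination (-y * Real.pi) * this

theorem stmt_5 (β k : ℝ) (hβ : 0 < β) (hk : k ≠ 0) :
    (Summable fun n : ℕ => (-1 : ℝ) ^ (n + 1) / (β ^ 2 * ((n : ℝ) + 1) ^ 2 + k ^ 2)) ∧
    2 * k * (∑' n : ℕ, (-1 : ℝ) ^ (n + 1) / (β ^ 2 * ((n : ℝ) + 1) ^ 2 + k ^ 2)) =
      Real.pi / (β * Real.sinh (Real.pi * k / β)) - 1 / k := by
  have h := (aux_alt (k / β) (by positivity)).mul_left (1 / β ^ 2)
  have h' : HasSum (fun n : ℕ => (-1 : ℝ) ^ (n + 1) / (β ^ 2 * ((n : ℝ) + 1) ^ 2 + k ^ 2))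
      (1 / β ^ 2 * ((π / sinh (π * (k / β)) - 1 / (k / β)) / (2 * (k / β)))) := by
    convert! h using 2 with n
    have : ((n : ℝ) + 1) ^ 2 + (k / β) ^ 2 ≠ 0 := by positivity
    have : β ^ 2 * ((n : ℝ) + 1) ^ 2 + k ^ 2 ≠ 0 := by positivity
    field_simp
  refine ⟨h'.summable, ?_⟩
  rw [h'.tsum_eq, show π * (k / β) = π * k / β by ring]
  have hs : Real.sinh (Real.pi * k / β) ≠ 0 := by
    rw [Ne, Real.sinh_eq_zero]; have := Real.pi_pos; positivity
  generalize Real.sinh (Real.pi * k / β) = s at *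
  field_simp
end

section
/- Let β > 0 and let k be a nonzero real number. Then the Abel-regularized Fourier transform of the Fermi–Dirac function exists and equals lim_{ε→0⁺} ∫_ℝ e^{−ikx} · e^{−ε|x|} / (1 + e^{βx}) dx = iπ/(β · sinh(πk/β)), an equality of complex numbers. -/
open MeasureTheory Real Complex Filter Topology

lemma aux_pt (u : ℂ) (x : ℝ) :
    |Real.sigmoid x * (1 - Real.sigmoid x)| •
      ((Real.sigmoid x : ℂ) ^ (u - 1) * (1 - (Real.sigmoid x : ℂ)) ^ ((1 - u) - 1))
      = Complex.exp (u * x) / (1 + Real.exp x) := by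
  have h0 := Real.sigmoid_pos x
  have h1 : 0 < 1 - Real.sigmoid x := by linarith [Real.sigmoid_lt_one x]
  obtain ⟨a, ha⟩ : ∃ a : ℝ, Real.exp a = Real.sigmoid x := ⟨_, Real.exp_log h0⟩
  obtain ⟨b, hb⟩ : ∃ b : ℝ, Real.exp b = 1 - Real.sigmoid x := ⟨_, Real.exp_log h1⟩
  have hbx : Real.exp b = (1 + Real.exp x)⁻¹ := by
    rw [hb, ← Real.sigmoid_neg, Real.sigmoid_def, neg_neg]
  have hab : a = b + x := by
    apply Real.exp_injective
    rw [Real.exp_add, hbx, ha, Real.sigmoid_def, Real.exp_neg]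
    have := Real.exp_pos x
    field_simp
    try ring
  rw [abs_of_pos (mul_pos h0 h1)]
  have e1 : (1 - (Real.sigmoid x : ℂ)) = ((1 - Real.sigmoid x : ℝ) : ℂ) := by push_cast; rfl
  have key : ∀ (t : ℝ) (w : ℂ), ((Real.exp t : ℝ) : ℂ) ^ w = Complex.exp (t * w) := by
    intro t w
    rw [Complex.cpow_def_of_ne_zero (by exact_mod_cast (Real.exp_pos t).ne'),
      ← Complex.ofReal_log (Real.exp_pos t).le, Real.log_exp]
  have e2 : (1 + (Real.exp x : ℂ))⁻¹ = ((Real.exp b : ℝ) : ℂ) := by rw [hbx]; push_cast; rfl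
  rw [e1, ← ha, ← hb] at *
  rw [key, key, div_eq_mul_inv, e2, ← Real.exp_add, Complex.real_smul, Complex.ofReal_exp,
    Complex.ofReal_exp, ← Complex.exp_add, ← Complex.exp_add, ← Complex.exp_add, hab]
  congr 1
  push_cast
  ring

lemma aux_image : Real.sigmoid '' Set.univ = Set.Ioo 0 1 := by
  rw [Set.image_univ, Real.range_sigmoid]

lemma aux_int_s7 (u : ℂ) (h0 : 0 < u.re) (h1 : u.re < 1) :
    Integrable (fun x : ℝ => Complex.exp (u * x) / (1 + Real.exp x)) := by
  have h := betaIntegral_convergent (u := u) (v := 1 - u) h0 (by simp; linarith)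
  rw [intervalIntegrable_iff_integrableOn_Ioo_of_le zero_le_one, ← aux_image,
    integrableOn_image_iff_integrableOn_abs_deriv_smul MeasurableSet.univ
      (fun x _ => (Real.hasDerivAt_sigmoid x).hasDerivWithinAt)
      Real.sigmoid_injective.injOn, integrableOn_univ] at h
  simpa only [aux_pt] using h

lemma aux_val (u : ℂ) (h0 : 0 < u.re) (h1 : u.re < 1) :
    ∫ x : ℝ, Complex.exp (u * x) / (1 + Real.exp x) = Real.pi / Complex.sin (Real.pi * u) := by
  have h := Complex.Gamma_mul_Gamma_eq_betaIntegral (s := u) (t := 1 - u) h0 (by simp; linarith)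
  rw [Complex.Gamma_mul_Gamma_one_sub, betaIntegral, add_sub_cancel, Complex.Gamma_one, one_mul,
    intervalIntegral.integral_of_le zero_le_one, integral_Ioc_eq_integral_Ioo, ← aux_image,
    integral_image_eq_integral_abs_deriv_smul MeasurableSet.univ
      (fun x _ => (Real.hasDerivAt_sigmoid x).hasDerivWithinAt)
      Real.sigmoid_injective.injOn, setIntegral_univ] at h
  simp only [aux_pt] at h
  exact h.symm

lemma aux_scale (β : ℝ) (hβ : 0 < β) (u : ℂ) (x : ℝ) :
    Complex.exp (u * x) / (1 + Real.exp (β * x)) =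
      Complex.exp ((u / β) * ((β * x : ℝ) : ℂ)) / (1 + Real.exp (β * x)) := by
  have : (β : ℂ) ≠ 0 := by exact_mod_cast hβ.ne'
  congr 2
  push_cast
  field_simp

lemma aux_re (β : ℝ) (u : ℂ) : (u / β).re = u.re / β := by
  simp [Complex.div_ofReal_re]

lemma aux_int' (β : ℝ) (hβ : 0 < β) (u : ℂ) (h0 : 0 < u.re) (h1 : u.re < β) :
    Integrable (fun x : ℝ => Complex.exp (u * x) / (1 + Real.exp (β * x))) := by
  have h := aux_int_s7 (u / β) (by rw [aux_re]; positivity)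
    (by rw [aux_re, div_lt_one hβ]; exact h1)
  have h2 := h.comp_mul_left' hβ.ne'
  simpa only [aux_scale β hβ u] using h2

lemma aux_val' (β : ℝ) (hβ : 0 < β) (u : ℂ) (h0 : 0 < u.re) (h1 : u.re < β) :
    ∫ x : ℝ, Complex.exp (u * x) / (1 + Real.exp (β * x)) =
      Real.pi / (β * Complex.sin (Real.pi * u / β)) := by
  have h := aux_val (u / β) (by rw [aux_re]; positivity)
    (by rw [aux_re, div_lt_one hβ]; exact h1)
  simp only [aux_scale β hβ u]
  rw [Measure.integral_comp_mul_left
    (fun y : ℝ => Complex.exp ((u / β) * (y : ℂ)) / (1 + Real.exp y)), h,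
    abs_of_pos (inv_pos.2 hβ), Complex.real_smul, mul_div_assoc]
  push_cast
  rw [inv_mul_eq_div, div_div, mul_comm (β : ℂ)]

theorem stmt_7 (β k : ℝ) (hβ : 0 < β) (hk : k ≠ 0) :
    Filter.Tendsto
      (fun ε : ℝ => ∫ x : ℝ,
        Complex.exp (-Complex.I * k * x) * Real.exp (-ε * |x|) / (1 + Real.exp (β * x)))
      (nhdsWithin 0 (Set.Ioi 0))
      (nhds (Complex.I * Real.pi / (β * Real.sinh (Real.pi * k / β)))) := by
  have hβ' : (β : ℂ) ≠ 0 := by exact_mod_cast hβ.ne'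
  have hs : Real.sinh (Real.pi * k / β) ≠ 0 := by
    rw [Ne, Real.sinh_eq_zero]
    have := Real.pi_ne_zero
    have := hβ.ne'
    positivity
  have hsC : Complex.sin (Real.pi * (((0 : ℝ) : ℂ) - Complex.I * k) / β)
      = -(Real.sinh (Real.pi * k / β) : ℂ) * Complex.I := by
    have : Real.pi * (((0 : ℝ) : ℂ) - Complex.I * k) / β
        = -(((Real.pi * k / β : ℝ) : ℂ) * Complex.I) := by
      push_cast; ring
    rw [this, Complex.sin_neg, Complex.sin_mul_I, Complex.ofReal_sinh, neg_mul]
  have hsC0 : (Real.sinh (Real.pi * k / β) : ℂ) ≠ 0 := by exact_mod_cast hs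
  -- main part
  have hA : Tendsto (fun ε : ℝ => (Real.pi : ℂ) /
      (β * Complex.sin (Real.pi * ((ε : ℂ) - Complex.I * k) / β))) (𝓝[>] 0)
      (𝓝 (Complex.I * Real.pi / (β * Real.sinh (Real.pi * k / β)))) := by
    have hc : ContinuousAt (fun ε : ℝ => (Real.pi : ℂ) /
        (β * Complex.sin (Real.pi * ((ε : ℂ) - Complex.I * k) / β))) 0 := by
      apply ContinuousAt.div
      · fun_prop
      · fun_prop
      · rw [hsC]
        simp [hβ', hs, Complex.I_ne_zero, -Complex.ofReal_sinh]
        try exact hsC0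
    have h2 := hc.tendsto.mono_left (nhdsWithin_le_nhds (s := Set.Ioi (0 : ℝ)))
    convert h2 using 2
    rw [hsC, div_eq_div_iff (mul_ne_zero hβ' hsC0)
      (mul_ne_zero hβ' (mul_ne_zero (neg_ne_zero.2 hsC0) Complex.I_ne_zero))]
    linear_combination (-(Real.pi : ℂ) * β * (Real.sinh (Real.pi * k / β) : ℂ)) * Complex.I_mul_I
  -- difference
  let D : ℝ → ℝ → ℂ := fun ε x => Complex.exp (-Complex.I * k * x) *
    ((Real.exp (-ε * |x|) - Real.exp (ε * x) : ℝ) : ℂ) / (1 + Real.exp (β * x))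
  let B : ℝ → ℝ := fun x => Real.exp (β / 2 * x) / (1 + Real.exp (β * x))
  have hden : ∀ x : ℝ, (1 + (Real.exp (β * x) : ℂ)) ≠ 0 := by
    intro x
    have : (0 : ℝ) < 1 + Real.exp (β * x) := by positivity
    exact_mod_cast this.ne'
  have hBint : Integrable B := by
    have h := (aux_int' β hβ ((β / 2 : ℝ) : ℂ) (by simp; linarith) (by simp; linarith)).re
    refine h.congr (Eventually.of_forall fun x => ?_)
    have : Complex.exp (((β / 2 : ℝ) : ℂ) * x) / (1 + Real.exp (β * x)) = ((B x : ℝ) : ℂ) := by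
      simp only [B]; push_cast; rfl
    show (Complex.exp (((β / 2 : ℝ) : ℂ) * x) / (1 + Real.exp (β * x))).re = B x
    rw [this, Complex.ofReal_re]
  have hDmeas : ∀ ε, AEStronglyMeasurable (D ε) volume := by
    intro ε
    refine Continuous.aestronglyMeasurable ?_
    refine Continuous.div ?_ ?_ hden
    · fun_prop
    · fun_prop
  have hDb : ∀ ε, 0 < ε → ε < β / 2 → ∀ x, ‖D ε x‖ ≤ B x := by
    intro ε he0 he1 x
    have hn : ‖Complex.exp (-Complex.I * k * x)‖ = 1 := by
      rw [Complex.norm_exp]; simp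
    have hd : ‖(1 + (Real.exp (β * x) : ℂ))‖ = 1 + Real.exp (β * x) := by
      have : (1 + (Real.exp (β * x) : ℂ)) = ((1 + Real.exp (β * x) : ℝ) : ℂ) := by
        push_cast; rfl
      rw [this, Complex.norm_real, Real.norm_of_nonneg (by positivity)]
    simp only [D, B]
    rw [norm_div, norm_mul, hn, hd, one_mul, Complex.norm_real]
    gcongr
    rcases le_total x 0 with hx | hx
    · rw [abs_of_nonpos hx]
      simp [Real.exp_nonneg]
    · rw [abs_of_nonneg hx, Real.norm_eq_abs, abs_le]
      have e1 : Real.exp (ε * x) ≤ Real.exp (β / 2 * x) := by gcongr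
      have e2 : Real.exp (-ε * x) ≤ Real.exp (ε * x) := by
        apply Real.exp_le_exp.2; nlinarith
      have e3 := Real.exp_pos (-ε * x)
      have e4 := Real.exp_pos (ε * x)
      constructor <;> linarith
  have hev : ∀ᶠ ε : ℝ in 𝓝[>] 0, 0 < ε ∧ ε < β / 2 :=
    Ioo_mem_nhdsGT (by linarith : (0 : ℝ) < β / 2)
  have hD : Tendsto (fun ε => ∫ x, D ε x) (𝓝[>] 0) (𝓝 0) := by
    have h := tendsto_integral_filter_of_dominated_convergence (μ := volume)
      (F := D) (f := fun _ => (0 : ℂ)) (l := 𝓝[>] (0 : ℝ)) B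
      (Eventually.of_forall hDmeas)
      (hev.mono fun ε he => Eventually.of_forall (hDb ε he.1 he.2)) hBint
      (Eventually.of_forall fun x => by
        have hc : Continuous (fun ε => D ε x) := by
          simp only [D]
          refine Continuous.div ?_ continuous_const fun _ => hden x
          fun_prop
        have h2 := (hc.tendsto 0).mono_left (nhdsWithin_le_nhds (s := Set.Ioi (0 : ℝ)))
        simpa [D] using h2)
    simpa using h
  have hsum := hA.add hD
  rw [add_zero] at hsum
  refine hsum.congr' ?_
  filter_upwards [hev] with ε he
  have hre : ((ε : ℂ) - Complex.I * k).re = ε := by simp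
  rw [← aux_val' β hβ ((ε : ℂ) - Complex.I * k) (by rw [hre]; exact he.1)
    (by rw [hre]; linarith [he.2]), ← integral_add
      (aux_int' β hβ _ (by rw [hre]; exact he.1) (by rw [hre]; linarith [he.2]))
      (hBint.mono' (hDmeas ε) (Eventually.of_forall (hDb ε he.1 he.2)))]
  congr 1
  ext x
  simp only [D]
  have : Complex.exp (((ε : ℂ) - Complex.I * k) * x)
      = Complex.exp (-Complex.I * k * x) * ((Real.exp (ε * x) : ℝ) : ℂ) := by
    rw [Complex.ofReal_exp, ← Complex.exp_add]
    congr 1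
    push_cast
    ring
  rw [this, ← add_div, ← mul_add, Complex.ofReal_sub, add_sub_cancel]
end

section
/- Let β > 0 and let φ : ℝ → ℂ be a Schwartz function, and set φ̂(x) = ∫_ℝ φ(k) e^{−ikx} dk. Then ∫_ℝ φ̂(x)/(1 + e^{βx}) dx = π·φ(0) + lim_{δ→0⁺} ∫_{|k| ≥ δ} (iπ/(β · sinh(πk/β))) · φ(k) dk; in particular the principal-value limit on the right exists. (This expresses the distributional identity F[1/(e^{βx}+1)] = π δ(k) + iπ/(β sinh(πk/β)), the second term taken as a principal value.) -/
open MeasureTheory Real Complex Filter Topology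

/-- Fourier transform with kernel `exp (-I k x)`. -/
noncomputable def hatF (f : ℝ → ℂ) (x : ℝ) : ℂ := ∫ k : ℝ, f k * Complex.exp (-Complex.I * k * x)

lemma hatF_eq (f : ℝ → ℂ) (x : ℝ) : hatF f x = FourierTransform.fourier f (x / (2 * π)) := by
  rw [fourier_real_eq_integral_exp_smul, hatF]
  congr 1
  ext k
  rw [smul_eq_mul, mul_comm]
  congr 2
  have : (π : ℂ) ≠ 0 := by exact_mod_cast pi_ne_zero
  push_cast
  field_simp

lemma hatF_hasDerivAt (f : ℝ → ℂ) (hf : Integrable f) (hf' : Integrable (fun x : ℝ => (x : ℂ) * f x))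
    (x : ℝ) : HasDerivAt (hatF f) (-Complex.I * hatF (fun k => k * f k) x) x := by
  have h1 := Real.hasDerivAt_fourier hf (by simpa using hf') (x / (2 * π))
  have h2 : HasDerivAt (fun x : ℝ => x / (2 * π)) (1 / (2 * π)) x := (hasDerivAt_id x).div_const _
  have h3 := h1.scomp x h2
  have e : hatF f = (FourierTransform.fourier f) ∘ (fun x : ℝ => x / (2 * π)) := by
    ext y; exact hatF_eq f y
  rw [e]
  refine h3.congr_deriv ?_
  symm
  rw [hatF_eq, fourier_real_eq_integral_exp_smul, fourier_real_eq_integral_exp_smul,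
    ← integral_const_mul, ← integral_smul]
  congr 1
  ext k
  have : (π : ℂ) ≠ 0 := by exact_mod_cast pi_ne_zero
  simp only [smul_eq_mul, Complex.real_smul]
  push_cast
  field_simp

lemma hatF_tendsto (f : ℝ → ℂ) : Tendsto (hatF f) (cocompact ℝ) (𝓝 0) := by
  have e : hatF f = (FourierTransform.fourier f) ∘ (fun x : ℝ => x / (2 * π)) := by
    ext y; exact hatF_eq f y
  rw [e]
  refine (Real.zero_at_infty_fourier f).comp ?_
  have h : (2 * π)⁻¹ ≠ 0 := by positivity
  exact (Homeomorph.mulRight₀ _ h).isClosedEmbedding.tendsto_cocompact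

lemma hatF_schwartz_integrable (φ : SchwartzMap ℝ ℂ) : Integrable (hatF φ) := by
  have e : hatF φ = fun x : ℝ => (FourierTransform.fourier φ : SchwartzMap ℝ ℂ) (x / (2 * π)) := by
    ext y; exact hatF_eq φ y
  rw [e]
  exact (SchwartzMap.integrable _).comp_div (by positivity)

lemma hatF_schwartz_integral (φ : SchwartzMap ℝ ℂ) : ∫ x, hatF φ x = 2 * π * φ 0 := by
  have e : hatF φ = fun x : ℝ => (FourierTransform.fourier (φ : ℝ → ℂ)) (x / (2 * π)) := by
    ext y; exact hatF_eq φ y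
  have h := φ.continuous.fourierInv_fourier_eq φ.integrable
      (FourierTransform.fourier φ : SchwartzMap ℝ ℂ).integrable
  have h0 := congrFun h 0
  rw [fourierInv_eq'] at h0
  simp only [inner_zero_right, mul_zero, ofReal_zero, zero_mul, Complex.exp_zero, one_smul] at h0
  rw [e, Measure.integral_comp_div, abs_of_pos (by positivity), h0]
  simp

lemma hatF_norm_le (f : ℝ → ℂ) (x : ℝ) : ‖hatF f x‖ ≤ ∫ k, ‖f k‖ := by
  refine (norm_integral_le_integral_norm _).trans (le_of_eq ?_)
  congr 1; ext k
  rw [norm_mul, Complex.norm_exp]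
  simp

lemma hatF_swap (f h : ℝ → ℂ) (hf : Integrable f) (hh : Integrable h) :
    ∫ x, hatF f x * h x = ∫ k, f k * hatF h k := by
  have hint : Integrable (Function.uncurry fun x k : ℝ =>
      f k * Complex.exp (-Complex.I * k * x) * h x) (volume.prod volume) := by
    have h1 : Integrable (fun p : ℝ × ℝ => h p.1 * f p.2) (volume.prod volume) := hh.mul_prod hf
    have h2 := h1.mul_bdd (c := 1) (g := fun p : ℝ × ℝ => Complex.exp (-Complex.I * p.2 * p.1))
      (by apply Continuous.aestronglyMeasurable; fun_prop)
      (by refine ae_of_all _ fun p => ?_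
          rw [Complex.norm_exp]; simp)
    refine h2.congr (ae_of_all _ fun p => ?_)
    simp only [Function.uncurry]; ring
  calc ∫ x, hatF f x * h x = ∫ x : ℝ, ∫ k : ℝ, f k * Complex.exp (-Complex.I * k * x) * h x := by
        congr 1; ext x; rw [hatF, ← integral_mul_const]
    _ = ∫ k : ℝ, ∫ x : ℝ, f k * Complex.exp (-Complex.I * k * x) * h x :=
        integral_integral_swap hint
    _ = _ := by
        congr 1; ext k; rw [hatF, ← integral_const_mul]
        congr 1; ext x; rw [mul_assoc, mul_comm (Complex.exp _)]
        congr 3; ring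

/-- Fermi function -/
noncomputable def fermi (β x : ℝ) : ℝ := 1 / (1 + Real.exp (β * x))
/-- minus its derivative -/
noncomputable def fermiD (β x : ℝ) : ℝ := β * Real.exp (β * x) / (1 + Real.exp (β * x)) ^ 2

lemma fermi_hasDerivAt (β x : ℝ) : HasDerivAt (fermi β) (-fermiD β x) x := by
  have h1 : HasDerivAt (fun x => 1 + Real.exp (β * x)) (Real.exp (β * x) * β) x := by
    have := ((hasDerivAt_id x).const_mul β).exp.const_add 1
    simpa using this
  have := h1.inv (by positivity)
  unfold fermi fermiD
  simp only [one_div]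
  refine this.congr_deriv ?_
  ring

lemma fermi_image (β : ℝ) (hβ : 0 < β) : fermi β '' Set.univ = Set.Ioo 0 1 := by
  ext u
  simp only [Set.image_univ, Set.mem_range, Set.mem_Ioo, fermi]
  constructor
  · rintro ⟨x, rfl⟩
    have := Real.exp_pos (β * x)
    refine ⟨by positivity, ?_⟩
    rw [div_lt_one (by positivity)]; linarith
  · rintro ⟨h0, h1⟩
    refine ⟨Real.log ((1 - u) / u) / β, ?_⟩
    have : 0 < (1 - u) / u := div_pos (by linarith) h0
    rw [mul_div_cancel₀ _ hβ.ne', Real.exp_log this]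
    field_simp
    ring

lemma fermi_inj (β : ℝ) (hβ : 0 < β) : Set.InjOn (fermi β) Set.univ := by
  intro x _ y _ h
  unfold fermi at h
  have hx := Real.exp_pos (β * x)
  have hy := Real.exp_pos (β * y)
  field_simp at h
  have : Real.exp (β * x) = Real.exp (β * y) := by linarith
  have := Real.exp_injective this
  exact mul_left_cancel₀ hβ.ne' this

lemma fermiD_nonneg (β x : ℝ) (hβ : 0 < β) : 0 ≤ fermiD β x := by
  unfold fermiD; positivity

lemma fermiD_integrable (β : ℝ) (hβ : 0 < β) : Integrable (fun x => (fermiD β x : ℂ)) := by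
  have := (integrableOn_image_iff_integrableOn_abs_deriv_smul MeasurableSet.univ
    (fun x _ => (fermi_hasDerivAt β x).hasDerivWithinAt) (fermi_inj β hβ) (fun _ => (1 : ℂ))).1
    (by rw [fermi_image β hβ]; exact integrableOn_const (by simp))
  rw [integrableOn_univ] at this
  refine this.congr (ae_of_all _ fun x => ?_)
  simp [abs_of_nonneg (fermiD_nonneg β x hβ)]

lemma fermiD_hat (β : ℝ) (hβ : 0 < β) (k : ℝ) (hk : k ≠ 0) :
    hatF (fun x => (fermiD β x : ℂ)) k
      = (π * k / β) / Real.sinh (π * k / β) := by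
  set s : ℂ := Complex.I * k / β with hs
  have hβc : (β : ℂ) ≠ 0 := by exact_mod_cast hβ.ne'
  have hkc : (k : ℂ) ≠ 0 := by exact_mod_cast hk
  have hs0 : s ≠ 0 := by
    simp [hs, hβc, hkc]
  have hsre : s.re = 0 := by
    have : s = ((k / β : ℝ) : ℂ) * Complex.I := by rw [hs]; push_cast; ring
    rw [this]; simp
  have h1 := Complex.Gamma_mul_Gamma_eq_betaIntegral (s := s + 1) (t := 1 - s)
    (by simp [hsre]) (by simp [hsre])
  have h2 : Complex.Gamma (s + 1 + (1 - s)) = 1 := by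
    have : s + 1 + (1 - s) = 1 + 1 := by ring
    rw [this, Complex.Gamma_add_one _ one_ne_zero, Complex.Gamma_one, one_mul]
  rw [h2, one_mul, Complex.Gamma_add_one _ hs0, mul_assoc, Complex.Gamma_mul_Gamma_one_sub] at h1
  have h3 : Complex.sin (π * s) = Complex.sinh (π * k / β) * Complex.I := by
    rw [← Complex.sin_mul_I]; congr 1; rw [hs]; ring
  have h4 : hatF (fun x => (fermiD β x : ℂ)) k = Complex.betaIntegral (s + 1) (1 - s) := by
    rw [Complex.betaIntegral, intervalIntegral.integral_of_le zero_le_one,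
      integral_Ioc_eq_integral_Ioo, ← fermi_image β hβ,
      integral_image_eq_integral_abs_deriv_smul MeasurableSet.univ
        (fun x _ => (fermi_hasDerivAt β x).hasDerivWithinAt) (fermi_inj β hβ), hatF,
      setIntegral_univ]
    congr 1; ext x
    rw [abs_neg, abs_of_nonneg (fermiD_nonneg β x hβ), Complex.real_smul]
    congr 1
    have hE := Real.exp_pos (β * x)
    have hu : 0 < fermi β x := by unfold fermi; positivity
    have hv : 0 < 1 - fermi β x := by
      have : fermi β x < 1 := by
        unfold fermi; rw [div_lt_one (by positivity)]; linarith
      linarith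
    have hl : Real.log (1 - fermi β x) = Real.log (fermi β x) + β * x := by
      have : 1 - fermi β x = fermi β x * Real.exp (β * x) := by
        unfold fermi; field_simp; ring
      rw [this, Real.log_mul hu.ne' hE.ne', Real.log_exp]
    have e : (1 : ℂ) - (fermi β x : ℂ) = ((1 - fermi β x : ℝ) : ℂ) := by push_cast; ring
    rw [e, Complex.cpow_def_of_ne_zero (by exact_mod_cast hu.ne'),
      Complex.cpow_def_of_ne_zero (by exact_mod_cast hv.ne'), ← Complex.ofReal_log hu.le,
      ← Complex.ofReal_log hv.le, hl, ← Complex.exp_add]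
    congr 1
    rw [hs]
    push_cast
    field_simp
    ring
  rw [h4, ← h1, h3, hs]
  push_cast
  have : Complex.sinh (π * k / β) ≠ 0 := by
    have : Real.sinh (π * k / β) ≠ 0 := by
      rw [Ne, Real.sinh_eq_zero]
      have := pi_ne_zero
      positivity
    have h : (Real.sinh (π * k / β) : ℂ) ≠ 0 := by exact_mod_cast this
    simpa using h
  have hI := Complex.I_ne_zero
  field_simp

lemma fermi_bound (β x : ℝ) : ‖(fermi β x : ℂ)‖ ≤ 1 := by
  have hE := Real.exp_pos (β * x)
  have hu : 0 < fermi β x := by unfold fermi; positivity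
  rw [Complex.norm_real, Real.norm_eq_abs, abs_of_pos hu]
  unfold fermi; rw [div_le_one (by positivity)]; linarith

lemma fermi_continuous (β : ℝ) : Continuous (fun x => (fermi β x : ℂ)) := by
  have : Continuous (fermi β) :=
    continuous_iff_continuousAt.2 fun x => (fermi_hasDerivAt β x).continuousAt
  fun_prop

lemma fermi_neg (β x : ℝ) : (fermi β (-x) : ℂ) = 1 - fermi β x := by
  have : fermi β (-x) = 1 - fermi β x := by
    unfold fermi
    have hE := Real.exp_pos (β * x)
    rw [mul_neg, Real.exp_neg]
    field_simp
    ring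
  rw [this]; push_cast; ring

/-- odd part -/
noncomputable def oddP (φ : ℝ → ℂ) (k : ℝ) : ℂ := (φ k - φ (-k)) / 2

lemma oddP_integrable (φ : SchwartzMap ℝ ℂ) : Integrable (oddP φ) :=
  (φ.integrable.sub φ.integrable.comp_neg).div_const 2

lemma hatF_neg (f : ℝ → ℂ) (x : ℝ) : hatF (fun k => f (-k)) x = hatF f (-x) := by
  unfold hatF
  rw [← integral_neg_eq_self]
  congr 1; ext k
  simp

lemma hatF_integrand (f : ℝ → ℂ) (hf : Integrable f) (x : ℝ) :
    Integrable (fun k : ℝ => f k * Complex.exp (-Complex.I * k * x)) := by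
  refine hf.mul_bdd (c := 1) (by apply Continuous.aestronglyMeasurable; fun_prop)
    (ae_of_all _ fun p => ?_)
  rw [Complex.norm_exp]; simp

lemma hatF_oddP (φ : SchwartzMap ℝ ℂ) (x : ℝ) :
    hatF (oddP φ) x = (hatF φ x - hatF φ (-x)) / 2 := by
  rw [← hatF_neg]
  unfold hatF oddP
  rw [← integral_sub (hatF_integrand _ φ.integrable x)
    (hatF_integrand _ φ.integrable.comp_neg x), ← integral_div]
  congr 1; ext k; ring

/-- quotient of the odd part by `k` -/
noncomputable def etaF (φ : ℝ → ℂ) : ℝ → ℂ := dslope (oddP φ) 0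

lemma oddP_differentiable (φ : SchwartzMap ℝ ℂ) : Differentiable ℝ (oddP φ) := by
  have := φ.differentiable
  unfold oddP
  fun_prop

lemma mul_etaF (φ : ℝ → ℂ) (k : ℝ) : (k : ℂ) * etaF φ k = oddP φ k := by
  have := sub_smul_dslope (oddP φ) 0 k
  have h0 : oddP φ 0 = 0 := by simp [oddP]
  simpa [h0, etaF] using this

lemma etaF_continuous (φ : SchwartzMap ℝ ℂ) : Continuous (etaF φ) := by
  rw [← continuousOn_univ]
  exact (continuousOn_dslope univ_mem).2
    ⟨(oddP_differentiable φ).continuous.continuousOn, (oddP_differentiable φ) 0⟩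

lemma etaF_integrable (φ : SchwartzMap ℝ ℂ) : Integrable (etaF φ) := by
  have hc := etaF_continuous φ
  have h1 : IntegrableOn (etaF φ) (Set.Icc (-1) 1) := hc.continuousOn.integrableOn_Icc
  have h2 : IntegrableOn (etaF φ) (Set.Icc (-1) 1)ᶜ := by
    refine Integrable.mono (oddP_integrable φ).integrableOn hc.aestronglyMeasurable ?_
    refine (ae_restrict_iff' measurableSet_Icc.compl).2 (ae_of_all _ fun k hk => ?_)
    rw [← mul_etaF, norm_mul]
    have : 1 ≤ ‖(k : ℂ)‖ := by
      rw [Complex.norm_real, Real.norm_eq_abs]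
      by_contra! h
      exact hk ⟨by linarith [neg_abs_le k], by linarith [le_abs_self k]⟩
    nlinarith [norm_nonneg (etaF φ k)]
  have := h1.union h2
  rwa [Set.union_compl_self, integrableOn_univ] at this

lemma lhs_eq (β : ℝ) (hβ : 0 < β) (φ : SchwartzMap ℝ ℂ) :
    ∫ x, hatF φ x * fermi β x = π * φ 0 + ∫ x, hatF (oddP φ) x * fermi β x := by
  have hi := hatF_schwartz_integrable φ
  have hbd : ∀ f : ℝ → ℂ, Integrable f → Integrable (fun x => f x * fermi β x) := fun f hf =>
    hf.mul_bdd (c := 1) (fermi_continuous β).aestronglyMeasurable (ae_of_all _ (fermi_bound β))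
  have h1 : ∫ x, hatF φ x * fermi β x = ∫ x, (hatF φ (-x) - hatF φ (-x) * fermi β x) := by
    rw [← integral_neg_eq_self]
    congr 1; ext x; rw [fermi_neg]; ring
  rw [integral_sub hi.comp_neg (hbd _ hi.comp_neg), integral_neg_eq_self (hatF φ),
    hatF_schwartz_integral] at h1
  have h2 : ∫ x, hatF (oddP φ) x * fermi β x
      = ((∫ x, hatF φ x * fermi β x) - ∫ x, hatF φ (-x) * fermi β x) / 2 := by
    rw [← integral_sub (hbd _ hi) (hbd _ hi.comp_neg), ← integral_div]
    congr 1; ext x; rw [hatF_oddP]; ring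
  rw [h2]
  linear_combination h1 / 2

lemma odd_eq (β : ℝ) (hβ : 0 < β) (φ : SchwartzMap ℝ ℂ) :
    ∫ x, hatF (oddP φ) x * fermi β x
      = ∫ k, Complex.I * (etaF φ k * hatF (fun x => (fermiD β x : ℂ)) k) := by
  have hη := etaF_integrable φ
  have hD := fermiD_integrable β hβ
  have hmul : (fun k : ℝ => (k : ℂ) * etaF φ k) = oddP φ := funext (mul_etaF φ)
  have hd : ∀ x, HasDerivAt (hatF (etaF φ)) (-Complex.I * hatF (oddP φ) x) x := by
    intro x
    have := hatF_hasDerivAt (etaF φ) hη (by rw [hmul]; exact oddP_integrable φ) x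
    rwa [hmul] at this
  have hcont : Continuous (hatF (etaF φ)) :=
    continuous_iff_continuousAt.2 fun x => (hd x).continuousAt
  have hoi : Integrable (hatF (oddP φ)) := by
    have hi := hatF_schwartz_integrable φ
    refine ((hi.sub hi.comp_neg).div_const 2).congr (ae_of_all _ fun x => ?_)
    simp [hatF_oddP]
  have hlim : Tendsto (hatF (etaF φ) * fun x => (fermi β x : ℂ)) (cocompact ℝ) (𝓝 0) := by
    refine squeeze_zero_norm (fun x => ?_) (tendsto_norm_zero.comp (hatF_tendsto (etaF φ)))
    simp only [Pi.mul_apply, norm_mul, Function.comp]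
    exact mul_le_of_le_one_right (norm_nonneg _) (fermi_bound β x)
  have hp := integral_mul_deriv_eq_deriv_mul (u := hatF (etaF φ)) (v := fun x => (fermi β x : ℂ))
    (u' := fun x => -Complex.I * hatF (oddP φ) x) (v' := fun x => ((-fermiD β x : ℝ) : ℂ))
    (a' := 0) (b' := 0)
    (fun x _ => hd x) (fun x _ => (fermi_hasDerivAt β x).ofReal_comp)
    (by
      have := hD.neg.bdd_mul (c := ∫ k, ‖etaF φ k‖) hcont.aestronglyMeasurable
        (ae_of_all _ (hatF_norm_le (etaF φ)))
      refine this.congr (ae_of_all _ fun x => ?_)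
      simp)
    ((hoi.const_mul (-Complex.I)).mul_bdd (c := 1) (fermi_continuous β).aestronglyMeasurable
      (ae_of_all _ (fermi_bound β)))
    (hlim.mono_left atBot_le_cocompact) (hlim.mono_left atTop_le_cocompact)
  rw [integral_const_mul, ← hatF_swap _ _ hη hD]
  have e1 : ∫ x, hatF (etaF φ) x * ((-fermiD β x : ℝ) : ℂ)
      = - ∫ x, hatF (etaF φ) x * (fermiD β x : ℂ) := by
    rw [← integral_neg]; congr 1; ext x; push_cast; ring
  have e2 : ∫ x, -Complex.I * hatF (oddP φ) x * (fermi β x : ℂ)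
      = -Complex.I * ∫ x, hatF (oddP φ) x * (fermi β x : ℂ) := by
    rw [← integral_const_mul]; congr 1; ext x; ring
  rw [e1, e2] at hp
  linear_combination Complex.I * hp
    + (∫ x, hatF (oddP φ) x * (fermi β x : ℂ)) * Complex.I_mul_I

lemma sinh_lower (t : ℝ) (ht : 0 ≤ t) : t ≤ Real.sinh t := Real.self_le_sinh_iff.2 ht

lemma kernel_integrableOn (β : ℝ) (hβ : 0 < β) (φ : SchwartzMap ℝ ℂ) (δ : ℝ) (hδ : 0 < δ) :
    IntegrableOn (fun k : ℝ => (Complex.I * Real.pi / (β * Real.sinh (Real.pi * k / β))) * φ k)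
      {k : ℝ | δ ≤ |k|} := by
  have hms : MeasurableSet {k : ℝ | δ ≤ |k|} := measurableSet_le measurable_const measurable_id.abs
  refine Integrable.bdd_mul (c := δ⁻¹) φ.integrable.integrableOn ?_ ?_
  · apply Measurable.aestronglyMeasurable
    have : Measurable Real.sinh := Real.continuous_sinh.measurable
    fun_prop
  · refine (ae_restrict_iff' hms).2 (ae_of_all _ fun k hk => ?_)
    have hk' : δ ≤ |k| := hk
    have h1 : |k| ≤ β / π * |Real.sinh (π * k / β)| := by
      rw [Real.abs_sinh]
      have := sinh_lower |π * k / β| (abs_nonneg _)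
      rw [abs_div, abs_mul, abs_of_pos pi_pos, abs_of_pos hβ] at this ⊢
      have h2 := mul_le_mul_of_nonneg_left this (show 0 ≤ β / π by positivity)
      refine le_trans (le_of_eq ?_) h2
      have := pi_pos
      field_simp
    rw [norm_div, norm_mul, norm_mul, Complex.norm_I, one_mul, Complex.norm_real, Complex.norm_real,
      Complex.norm_real, Real.norm_eq_abs, Real.norm_eq_abs, Real.norm_eq_abs, abs_of_pos pi_pos,
      abs_of_pos hβ]
    have h3 : δ ≤ β / π * |Real.sinh (π * k / β)| := hk'.trans h1
    calc π / (β * |Real.sinh (π * k / β)|) = (β / π * |Real.sinh (π * k / β)|)⁻¹ := by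
          rw [mul_inv, inv_div, div_mul_eq_div_div]; rfl
      _ ≤ δ⁻¹ := inv_anti₀ hδ h3

theorem stmt_8 (β : ℝ) (hβ : 0 < β) (φ : SchwartzMap ℝ ℂ) :
    Filter.Tendsto
      (fun δ : ℝ => ∫ k in {k : ℝ | δ ≤ |k|},
        (Complex.I * Real.pi / (β * Real.sinh (Real.pi * k / β))) * φ k)
      (nhdsWithin 0 (Set.Ioi 0))
      (nhds ((∫ x : ℝ,
          (∫ k : ℝ, φ k * Complex.exp (-Complex.I * k * x)) / (1 + Real.exp (β * x)))
        - Real.pi * φ 0)) := by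
  have hL : (∫ x : ℝ, (∫ k : ℝ, φ k * Complex.exp (-Complex.I * k * x)) / (1 + Real.exp (β * x)))
      = ∫ x, hatF φ x * fermi β x := by
    congr 1; ext x
    simp only [hatF, fermi]
    push_cast
    ring
  rw [hL, lhs_eq β hβ, odd_eq β hβ, add_sub_cancel_left]
  set T : ℝ → ℂ := fun k => Complex.I * (etaF φ k * hatF (fun x => (fermiD β x : ℂ)) k) with hT
  have hms : ∀ δ : ℝ, MeasurableSet {k : ℝ | δ ≤ |k|} := fun δ =>
    measurableSet_le measurable_const measurable_id.abs
  have hcont : Continuous (hatF (fun x => (fermiD β x : ℂ))) := by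
    have e : hatF (fun x => (fermiD β x : ℂ))
        = (FourierTransform.fourier (fun x => (fermiD β x : ℂ))) ∘ (fun x : ℝ => x / (2 * π)) := by
      ext y; exact hatF_eq _ y
    rw [e]
    have := VectorFourier.fourierIntegral_continuous Real.continuous_fourierChar
      (L := innerₗ ℝ) (by exact continuous_inner) (fermiD_integrable β hβ)
    exact Continuous.comp this (by fun_prop)
  have hTi : Integrable T := by
    refine Integrable.const_mul ?_ _
    exact (etaF_integrable φ).mul_bdd hcont.aestronglyMeasurable (ae_of_all _ (hatF_norm_le _))
  have key : ∀ δ : ℝ, 0 < δ → ∫ k in {k : ℝ | δ ≤ |k|},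
        (Complex.I * Real.pi / (β * Real.sinh (Real.pi * k / β))) * φ k
        = ∫ k, Set.indicator {k : ℝ | δ ≤ |k|} T k := by
    intro δ hδ
    rw [← integral_indicator (hms δ)]
    have hi := (kernel_integrableOn β hβ φ δ hδ).integrable_indicator (hms δ)
    set G := Set.indicator {k : ℝ | δ ≤ |k|}
      (fun k : ℝ => (Complex.I * Real.pi / (β * Real.sinh (Real.pi * k / β))) * φ k) with hG
    have h1 : ∫ k, G k = ((∫ k, G k) + ∫ k, G (-k)) / 2 := by
      rw [integral_neg_eq_self]; ring
    rw [h1, ← integral_add hi hi.comp_neg, ← integral_div]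
    congr 1; ext k
    by_cases hk : δ ≤ |k|
    · have hk' : δ ≤ |-k| := by rwa [abs_neg]
      have hk0 : k ≠ 0 := by
        rintro rfl; simp at hk; linarith
      rw [hG, Set.indicator_of_mem (show k ∈ {k : ℝ | δ ≤ |k|} from hk),
        Set.indicator_of_mem (show -k ∈ {k : ℝ | δ ≤ |k|} from hk'),
        Set.indicator_of_mem (show k ∈ {k : ℝ | δ ≤ |k|} from hk), hT]
      simp only
      rw [fermiD_hat β hβ k hk0]
      have e := mul_etaF φ k
      have hs : (Real.sinh (π * k / β) : ℂ) ≠ 0 := by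
        have : Real.sinh (π * k / β) ≠ 0 := by
          rw [Ne, Real.sinh_eq_zero]
          have := pi_ne_zero
          positivity
        exact_mod_cast this
      have hβc : (β : ℂ) ≠ 0 := by exact_mod_cast hβ.ne'
      have en : Real.sinh (π * -k / β) = - Real.sinh (π * k / β) := by
        rw [← Real.sinh_neg]; congr 1; ring
      rw [en]
      have e' : Complex.I * (etaF φ k * ((π * k / β) / Real.sinh (π * k / β)))
        = Complex.I * π / (β * Real.sinh (π * k / β)) * (k * etaF φ k) := by
        field_simp
      rw [e', e, oddP]
      generalize (Real.sinh (π * k / β)) = S at hs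
      push_cast
      field_simp
      ring
    · have hk' : ¬ δ ≤ |-k| := by rwa [abs_neg]
      rw [hG, Set.indicator_of_notMem (show k ∉ {k : ℝ | δ ≤ |k|} from hk),
        Set.indicator_of_notMem (show -k ∉ {k : ℝ | δ ≤ |k|} from hk'),
        Set.indicator_of_notMem (show k ∉ {k : ℝ | δ ≤ |k|} from hk)]
      simp
  have main : Tendsto (fun δ : ℝ => ∫ k, Set.indicator {k : ℝ | δ ≤ |k|} T k)
      (nhdsWithin 0 (Set.Ioi 0)) (𝓝 (∫ k, T k)) := by
    refine tendsto_integral_filter_of_dominated_convergence (fun k => ‖T k‖)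
      (Eventually.of_forall fun δ => (hTi.indicator (hms δ)).aestronglyMeasurable)
      (Eventually.of_forall fun δ => ae_of_all _ fun k => norm_indicator_le_norm_self _ _)
      hTi.norm ?_
    have h0 : ∀ᵐ k : ℝ, k ≠ 0 := by simp [ae_iff]
    filter_upwards [h0] with k hk
    refine tendsto_const_nhds.congr' ?_
    have : ∀ᶠ δ in 𝓝 (0 : ℝ), δ < |k| := eventually_lt_nhds (abs_pos.2 hk)
    filter_upwards [nhdsWithin_le_nhds this] with δ hδ
    rw [Set.indicator_of_mem (show k ∈ {k : ℝ | δ ≤ |k|} from hδ.le)]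
  refine main.congr' ?_
  filter_upwards [self_mem_nhdsWithin] with δ hδ
  exact (key δ hδ).symm
end

section
/- Let β > 0 and let φ : ℝ → ℂ be a Schwartz function, and set φ̂(x) = ∫_ℝ φ(k) e^{−ikx} dk. Then the two principal-value limits below exist and lim_{δ→0⁺} ∫_{|x| ≥ δ} φ̂(x)/(e^{βx} − 1) dx = −π·φ(0) + lim_{δ→0⁺} ∫_{|k| ≥ δ} (−iπ/β) · coth(πk/β) · φ(k) dk. (This expresses the distributional identity F[1/(e^{βx}−1)] = (π/(iβ)) coth(πk/β) − π δ(k), both singular integrals taken as principal values.) -/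
open MeasureTheory Real Complex Filter Topology

open SchwartzMap FourierTransform

lemma aux_fourier (φ : SchwartzMap ℝ ℂ) : ∃ Φ : SchwartzMap ℝ ℂ,
    (∀ x : ℝ, Φ x = ∫ k : ℝ, φ k * Complex.exp (-Complex.I * k * x)) ∧
    ∫ x : ℝ, Φ x = 2 * π * φ 0 := by
  have h2 : ((2 * π)⁻¹ : ℝ) ≠ 0 := by positivity
  refine ⟨SchwartzMap.compCLMOfContinuousLinearEquiv ℂ
    (ContinuousLinearEquiv.unitsEquivAut ℝ (Units.mk0 _ h2)) (𝓕 φ), ?_, ?_⟩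
  · intro x
    simp only [compCLMOfContinuousLinearEquiv_apply, Function.comp,
      ContinuousLinearEquiv.unitsEquivAut_apply, Units.val_mk0]
    rw [fourier_coe, Real.fourier_real_eq_integral_exp_smul]
    congr 1; ext v
    rw [smul_eq_mul, mul_comm]
    congr 2
    have : (π : ℂ) ≠ 0 := by exact_mod_cast Real.pi_ne_zero
    push_cast
    field_simp
  · simp only [compCLMOfContinuousLinearEquiv_apply, Function.comp,
      ContinuousLinearEquiv.unitsEquivAut_apply, Units.val_mk0]
    rw [MeasureTheory.Measure.integral_comp_mul_right (g := ⇑(𝓕 φ : SchwartzMap ℝ ℂ))]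
    have h3 : ∫ x, (𝓕 φ) x = φ 0 := by
      have : 𝓕⁻ (𝓕 φ) = φ := by simp
      conv_rhs => rw [← this]
      rw [fourierInv_coe, Real.fourierInv_eq']
      simp
    rw [h3, inv_inv, abs_of_pos (by positivity)]
    simp [Complex.real_smul]

/-- odd difference -/
lemma aux_odd_bound (ψ : SchwartzMap ℝ ℂ) : ∃ K : ℝ, 0 ≤ K ∧
    (∀ x : ℝ, 0 < x → ‖ψ x - ψ (-x)‖ ≤ K * x) ∧
    (∀ x : ℝ, 0 < x → ‖ψ x - ψ (-x)‖ / x ≤ K * (1 + x ^ 2)⁻¹) := by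
  obtain ⟨C, hC⟩ : ∃ C : ℝ, ∀ x, ‖deriv ψ x‖ ≤ C := by
    refine ⟨SchwartzMap.seminorm ℝ 0 1 ψ, fun x => ?_⟩
    have := SchwartzMap.le_seminorm' ℝ 0 1 ψ x
    simpa using this
  obtain ⟨C', hC'⟩ : ∃ C : ℝ, ∀ x, |x| * ‖ψ x‖ ≤ C := by
    refine ⟨SchwartzMap.seminorm ℝ 1 0 ψ, fun x => ?_⟩
    have := SchwartzMap.le_seminorm' ℝ 1 0 ψ x
    simpa using this
  have hC0 : 0 ≤ C := (norm_nonneg _).trans (hC 0)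
  have hC0' : 0 ≤ C' := le_trans (by positivity) (hC' 0)
  have h1 : ∀ x : ℝ, 0 < x → ‖ψ x - ψ (-x)‖ ≤ 2 * C * x := by
    intro x hx
    have := Convex.norm_image_sub_le_of_norm_deriv_le (f := ψ) (s := Set.univ) (C := C)
      (fun x _ => ψ.differentiableAt) (fun x _ => hC x) convex_univ (Set.mem_univ (-x))
      (Set.mem_univ x)
    refine this.trans (le_of_eq ?_)
    rw [Real.norm_eq_abs, abs_of_pos (by linarith)]; ring
  refine ⟨2 * C + 2 * C', by positivity, ?_, ?_⟩
  · intro x hx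
    refine (h1 x hx).trans ?_
    nlinarith [mul_nonneg hC0' hx.le]
  · intro x hx
    have h2 : x * ‖ψ x - ψ (-x)‖ ≤ 2 * C' := by
      have a := hC' x
      have b := hC' (-x)
      rw [abs_neg] at b
      rw [abs_of_pos hx] at a b
      have := norm_sub_le (ψ x) (ψ (-x))
      nlinarith
    rw [← div_eq_mul_inv, div_le_div_iff₀ hx (by positivity)]
    have := h1 x hx
    nlinarith

lemma aux_odd_int (ψ : SchwartzMap ℝ ℂ) :
    Integrable (fun x => ψ x - ψ (-x)) := ψ.integrable.sub ψ.integrable.comp_neg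

lemma aux_odd_div_int (ψ : SchwartzMap ℝ ℂ) :
    IntegrableOn (fun x : ℝ => ‖ψ x - ψ (-x)‖ / x) (Set.Ioi 0) := by
  obtain ⟨K, -, -, h⟩ := aux_odd_bound ψ
  refine Integrable.mono' (g := fun x => K * (1 + x ^ 2)⁻¹) ?_ ?_ ?_
  · exact (integrable_inv_one_add_sq.const_mul K).integrableOn
  · have := ψ.continuous
    have h : Continuous (fun x : ℝ => ‖ψ x - ψ (-x)‖) := by fun_prop
    exact (h.measurable.div measurable_id).aestronglyMeasurable
  · filter_upwards [ae_restrict_mem measurableSet_Ioi] with x hx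
    rw [Real.norm_eq_abs, abs_of_nonneg (div_nonneg (norm_nonneg _) (le_of_lt hx))]
    exact h x hx

lemma aux_coth_bound (u : ℝ) (hu : 0 < u) : |Real.cosh u / Real.sinh u| ≤ 1 + 1 / u := by
  have hs : 0 < Real.sinh u := Real.sinh_pos_iff.2 hu
  have hc := Real.cosh_pos u
  rw [abs_of_pos (by positivity), div_le_iff₀ hs]
  have h1 : Real.cosh u - Real.sinh u = Real.exp (-u) := Real.cosh_sub_sinh u
  have h2 : Real.exp (-u) ≤ 1 := Real.exp_le_one_iff.2 (by linarith)
  have h3 : u ≤ Real.sinh u := Real.self_le_sinh_iff.2 hu.le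
  have h4 : 1 ≤ 1 / u * Real.sinh u := by
    rw [one_div, inv_mul_eq_div, le_div_iff₀ hu]; linarith
  linarith

lemma aux_split (f : ℝ → ℂ) (δ : ℝ) (hδ : 0 < δ) (hf : IntegrableOn f {x : ℝ | δ ≤ |x|}) :
    ∫ x in {x : ℝ | δ ≤ |x|}, f x = ∫ x in Set.Ioi δ, (f x + f (-x)) := by
  have hs : {x : ℝ | δ ≤ |x|} = Set.Ici δ ∪ Set.Iic (-δ) := by
    ext x; simp [le_abs, le_neg]
  rw [hs] at hf ⊢
  have h1 := hf.left_of_union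
  have h2 := hf.right_of_union
  rw [setIntegral_union _ measurableSet_Iic h1 h2, integral_add, integral_Ici_eq_integral_Ioi,
    integral_comp_neg_Ioi]
  · exact h1.mono_set Set.Ioi_subset_Ici_self
  · have := h2.comp_neg
    rw [Set.neg_Iic, neg_neg] at this
    exact this.mono_set Set.Ioi_subset_Ici_self
  · rw [Set.disjoint_left]; intro x hx hx'
    simp at hx hx'; linarith

lemma aux_tendsto (f : ℝ → ℂ) (hf : IntegrableOn f (Set.Ioi 0)) :
    Tendsto (fun δ : ℝ => ∫ x in Set.Ioi δ, f x) (𝓝[>] 0) (𝓝 (∫ x in Set.Ioi 0, f x)) := by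
  have hc := aecover_Ioi_of_Ioi (μ := volume) (l := 𝓝[>] (0:ℝ)) (a := fun δ : ℝ => δ) (A := 0)
    (tendsto_nhdsWithin_of_tendsto_nhds tendsto_id)
  refine (hc.integral_tendsto_of_countably_generated hf).congr' ?_
  filter_upwards [self_mem_nhdsWithin] with δ hδ
  rw [Measure.restrict_restrict measurableSet_Ioi, Set.inter_eq_left.2]
  exact Set.Ioi_subset_Ioi (le_of_lt hδ)

lemma aux_coth_meas (b : ℝ) :
    Measurable (fun x : ℝ => ((Real.cosh (b * x) / Real.sinh (b * x) : ℝ) : ℂ)) := by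
  fun_prop

lemma aux_coth_int (b : ℝ) (hb : 0 < b) (ψ : SchwartzMap ℝ ℂ) :
    IntegrableOn (fun x : ℝ => ((Real.cosh (b * x) / Real.sinh (b * x) : ℝ) : ℂ) *
      (ψ x - ψ (-x))) (Set.Ioi 0) := by
  refine Integrable.mono' (g := fun x => ‖ψ x - ψ (-x)‖ + b⁻¹ * (‖ψ x - ψ (-x)‖ / x)) ?_ ?_ ?_
  · exact (aux_odd_int ψ).norm.integrableOn.add ((aux_odd_div_int ψ).const_mul _)
  · exact (aux_coth_meas b).aestronglyMeasurable.mul (aux_odd_int ψ).1.restrict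
  · filter_upwards [ae_restrict_mem measurableSet_Ioi] with x hx
    have hx : 0 < x := hx
    rw [norm_mul, Complex.norm_real, Real.norm_eq_abs]
    refine (mul_le_mul_of_nonneg_right (aux_coth_bound (b * x) (by positivity))
      (norm_nonneg _)).trans (le_of_eq ?_)
    field_simp

lemma aux_coth_intOn (b : ℝ) (hb : 0 < b) (ψ : SchwartzMap ℝ ℂ) (δ : ℝ) (hδ : 0 < δ) :
    IntegrableOn (fun x : ℝ => ((Real.cosh (b * x) / Real.sinh (b * x) : ℝ) : ℂ) * ψ x)
      {x : ℝ | δ ≤ |x|} := by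
  have hm : MeasurableSet {x : ℝ | δ ≤ |x|} := measurableSet_le measurable_const measurable_norm
  refine Integrable.bdd_mul (c := 1 + 1 / (b * δ)) ψ.integrable.integrableOn
    (aux_coth_meas b).aestronglyMeasurable ?_
  filter_upwards [ae_restrict_mem hm] with x hx
  have hx : δ ≤ |x| := hx
  have hp : 0 < |x| := hδ.trans_le hx
  rw [Complex.norm_real, Real.norm_eq_abs]
  have h := aux_coth_bound (b * |x|) (by positivity)
  have e : |Real.cosh (b * x) / Real.sinh (b * x)| =
      |Real.cosh (b * |x|) / Real.sinh (b * |x|)| := by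
    rcases abs_cases x with ⟨h, _⟩ | ⟨h, _⟩ <;> rw [h] 
    rw [mul_neg, Real.cosh_neg, Real.sinh_neg, div_neg, abs_neg]
  rw [e]
  refine h.trans ?_
  gcongr

lemma aux_pv (b : ℝ) (hb : 0 < b) (ψ : SchwartzMap ℝ ℂ) :
    Tendsto (fun δ : ℝ => ∫ x in {x : ℝ | δ ≤ |x|},
        ((Real.cosh (b * x) / Real.sinh (b * x) : ℝ) : ℂ) * ψ x) (𝓝[>] 0)
      (𝓝 (∫ x in Set.Ioi (0:ℝ), ((Real.cosh (b * x) / Real.sinh (b * x) : ℝ) : ℂ) *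
      (ψ x - ψ (-x)))) := by
  refine (aux_tendsto _ (aux_coth_int b hb ψ)).congr' ?_
  filter_upwards [self_mem_nhdsWithin] with δ hδ
  rw [aux_split _ δ hδ (aux_coth_intOn b hb ψ δ hδ)]
  congr 1; ext x
  rw [mul_neg, Real.cosh_neg, Real.sinh_neg, div_neg]
  push_cast; ring

lemma aux_fold (G : ℝ → ℂ) (hG : Integrable G) :
    ∫ x, G x = ∫ x in Set.Ioi (0:ℝ), (G x + G (-x)) := by
  rw [integral_add hG.integrableOn hG.comp_neg.integrableOn, integral_comp_neg_Ioi, neg_zero,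
    add_comm, intervalIntegral.integral_Iic_add_Ioi hG.integrableOn hG.integrableOn]

lemma aux_inner (ε : ℝ) (hε : 0 < ε) (k : ℝ) :
    ∫ x in Set.Ioi (0:ℝ), ((Real.exp (-ε * x) : ℝ) : ℂ) *
      (Complex.exp (-Complex.I * k * x) - Complex.exp (Complex.I * k * x)) =
    -Complex.I * ((2 * k / (k ^ 2 + ε ^ 2) : ℝ) : ℂ) := by
  have e1 : ((-ε - Complex.I * k : ℂ)).re < 0 := by simp [hε]
  have e2 : ((-ε + Complex.I * k : ℂ)).re < 0 := by simp [hε]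
  have : ∀ x : ℝ, ((Real.exp (-ε * x) : ℝ) : ℂ) *
      (Complex.exp (-Complex.I * k * x) - Complex.exp (Complex.I * k * x)) =
      Complex.exp ((-ε - Complex.I * k) * x) - Complex.exp ((-ε + Complex.I * k) * x) := by
    intro x
    push_cast
    rw [mul_sub, ← Complex.exp_add, ← Complex.exp_add]
    congr 2 <;> ring
  simp_rw [this]
  rw [integral_sub (integrableOn_exp_mul_complex_Ioi e1 0) (integrableOn_exp_mul_complex_Ioi e2 0),
    integral_exp_mul_complex_Ioi e1, integral_exp_mul_complex_Ioi e2]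
  have n1 : (-ε - Complex.I * k : ℂ) ≠ 0 := fun h => by rw [h] at e1; simp at e1
  have n2 : (-ε + Complex.I * k : ℂ) ≠ 0 := fun h => by rw [h] at e2; simp at e2
  have n3 : ((k:ℂ) ^ 2 + ε ^ 2) = (-ε - Complex.I * k) * (-ε + Complex.I * k) := by
    linear_combination ((k:ℂ)^2) * Complex.I_sq
  push_cast
  rw [n3]
  simp only [mul_zero, Complex.exp_zero]
  field_simp
  ring

lemma aux_norm_exp (k x : ℝ) : ‖Complex.exp (-Complex.I * k * x)‖ = 1 ∧
    ‖Complex.exp (Complex.I * k * x)‖ = 1 := by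
  constructor <;> simp [Complex.norm_exp]

lemma aux_abel (φ Φ : SchwartzMap ℝ ℂ)
    (hΦ : ∀ x : ℝ, Φ x = ∫ k : ℝ, φ k * Complex.exp (-Complex.I * k * x)) (ε : ℝ) (hε : 0 < ε) :
    ∫ x in Set.Ioi (0:ℝ), ((Real.exp (-ε * x) : ℝ) : ℂ) * (Φ x - Φ (-x)) =
    -Complex.I * ∫ k in Set.Ioi (0:ℝ), ((2 * k / (k ^ 2 + ε ^ 2) : ℝ) : ℂ) *
      (φ k - φ (-k)) := by
  have hφc := φ.continuous
  have hi : ∀ x : ℝ, Integrable (fun k : ℝ => φ k * Complex.exp (-Complex.I * k * x)) := by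
    intro x
    refine φ.integrable.mul_bdd (c := 1) (by fun_prop) ?_
    exact Eventually.of_forall fun k => (aux_norm_exp k x).1.le
  have hD : ∀ x : ℝ, Φ x - Φ (-x) = ∫ k : ℝ, φ k * (Complex.exp (-Complex.I * k * x) -
      Complex.exp (Complex.I * k * x)) := by
    intro x
    rw [hΦ, hΦ, ← integral_sub (hi _) (hi _)]
    congr 1; ext k; rw [mul_sub]; congr 3; push_cast; ring
  simp_rw [hD, ← integral_const_mul]
  rw [integral_integral_swap]
  · have : ∀ k : ℝ, ∫ x in Set.Ioi (0:ℝ), ((Real.exp (-ε * x) : ℝ) : ℂ) *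
      (φ k * (Complex.exp (-Complex.I * k * x) - Complex.exp (Complex.I * k * x))) =
      φ k * (-Complex.I * ((2 * k / (k ^ 2 + ε ^ 2) : ℝ) : ℂ)) := by
      intro k
      rw [← aux_inner ε hε k, ← integral_const_mul]
      congr 1; ext x; ring
    simp_rw [this]
    rw [aux_fold]
    · congr 1; ext k; push_cast; rw [neg_sq]; ring
    · refine φ.integrable.mul_bdd (c := 1 / ε) ?_ ?_
      · apply Continuous.aestronglyMeasurable
        have : ∀ k : ℝ, k ^ 2 + ε ^ 2 ≠ 0 := fun k => by positivity
        fun_prop (disch := exact this _)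
      · refine Eventually.of_forall fun k => ?_
        rw [norm_mul, norm_neg, Complex.norm_I, one_mul, Complex.norm_real, Real.norm_eq_abs,
          abs_div, abs_of_pos (show 0 < k ^ 2 + ε ^ 2 by positivity),
          div_le_div_iff₀ (by positivity) hε, abs_mul, abs_two, ← sq_abs k]
        nlinarith [sq_nonneg (|k| - ε)]
  · have h1 : IntegrableOn (fun x : ℝ => ((Real.exp (-ε * x) : ℝ) : ℂ)) (Set.Ioi 0) :=
      (integrableOn_exp_mul_Ioi (by linarith) 0).ofReal
    have h2 := (Integrable.mul_prod h1 (φ.integrable (μ := volume))).mul_bdd (c := 2)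
      (g := fun z : ℝ × ℝ => (Complex.exp (-Complex.I * z.2 * z.1) -
      Complex.exp (Complex.I * z.2 * z.1))) (by fun_prop)
      (Eventually.of_forall fun z => by
        refine (norm_sub_le _ _).trans ?_
        rw [(aux_norm_exp _ _).1, (aux_norm_exp _ _).2]; norm_num)
    refine h2.congr (Eventually.of_forall fun z => ?_)
    simp only [Function.uncurry]
    ring

lemma aux_geom (y : ℝ) (hy : 0 < y) :
    HasSum (fun n : ℕ => Real.exp (-((n + 1) * y)))
      (1 / 2 * (Real.cosh (y / 2) / Real.sinh (y / 2)) - 1 / 2) := by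
  have h := (hasSum_geometric_of_lt_one (Real.exp_pos (-y)).le
    (Real.exp_lt_one_iff.2 (by linarith))).mul_left (Real.exp (-y))
  have hs : 0 < Real.sinh (y / 2) := Real.sinh_pos_iff.2 (by linarith)
  have h1 : Real.exp (-y) < 1 := Real.exp_lt_one_iff.2 (by linarith)
  have hA : (fun n : ℕ => Real.exp (-((n + 1) * y))) =
      fun n : ℕ => Real.exp (-y) * Real.exp (-y) ^ n := by
    ext n
    rw [← Real.exp_nat_mul, ← Real.exp_add]; congr 1; ring
  have hB : 1 / 2 * (Real.cosh (y / 2) / Real.sinh (y / 2)) - 1 / 2 =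
      Real.exp (-y) * (1 - Real.exp (-y))⁻¹ := by
    rw [Real.cosh_eq, Real.sinh_eq] at *
    have e1 : Real.exp (-y) = Real.exp (-(y/2)) ^ 2 := by
      rw [← Real.exp_nat_mul]; congr 1; push_cast; ring
    have e2 : Real.exp (y/2) * Real.exp (-(y/2)) = 1 := by rw [← Real.exp_add]; simp
    rw [e1] at h1 ⊢
    set p := Real.exp (y/2)
    set q := Real.exp (-(y/2))
    have n1 : p - q ≠ 0 := by intro h; rw [h] at hs; simp at hs
    have n2 : 1 - q ^ 2 ≠ 0 := by linarith
    field_simp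
    linear_combination (-2 * q) * e2
  rw [hA, hB]; exact h

lemma aux_mittag (β k : ℝ) (hβ : 0 < β) (hk : 0 < k) :
    HasSum (fun n : ℕ => 2 * k / (k ^ 2 + ((n + 1) * β) ^ 2))
      (π / β * (Real.cosh (π / β * k) / Real.sinh (π / β * k)) - 1 / k) := by
  set z : ℂ := Complex.I * (k / β : ℝ) with hz
  have hzi : z ∈ Complex.integerComplement := by
    rintro ⟨n, hn⟩
    have := congrArg Complex.im hn
    simp [hz] at this
    have h2 : 0 < k / β := by positivity
    grind
  have hsum := (summable_cotTerm hzi).hasSum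
  have hrep := cot_series_rep' hzi
  have e : ∑' n : ℕ, cotTerm z n = π * cot (π * z) - 1 / z := by rw [hrep]
  rw [e] at hsum
  have h := hsum.mul_left (Complex.I / β)
  have hβc : (β : ℂ) ≠ 0 := by exact_mod_cast hβ.ne'
  have hkc : (k : ℂ) ≠ 0 := by exact_mod_cast hk.ne'
  rw [← Complex.hasSum_ofReal]
  have hA : (fun n : ℕ => ((2 * k / (k ^ 2 + ((n + 1) * β) ^ 2) : ℝ) : ℂ)) =
      fun n : ℕ => Complex.I / β * cotTerm z n := by
    ext n
    have n1 := Complex.integerComplement_add_ne_zero hzi ((n : ℤ) + 1)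
    have n2 := Complex.integerComplement_add_ne_zero hzi (-((n : ℤ) + 1))
    push_cast at n1 n2
    have n2' : z - (n + 1) ≠ 0 := by intro h; apply n2; linear_combination h
    have n3 : ((k:ℂ) ^ 2 + ((n + 1) * β) ^ 2) = - β ^ 2 * ((z - (n + 1)) * (z + (n + 1))) := by
      rw [hz]; push_cast; field_simp; linear_combination (k:ℂ)^2 * Complex.I_sq
    simp only [cotTerm]
    push_cast
    rw [n3]
    field_simp
    have hzk : z * β = Complex.I * k := by rw [hz]; push_cast; field_simp
    linear_combination (-2 * Complex.I) * hzk - 2 * k * Complex.I_sq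
  have hB : ((π / β * (Real.cosh (π / β * k) / Real.sinh (π / β * k)) - 1 / k : ℝ) : ℂ) =
      Complex.I / β * (π * cot (π * z) - 1 / z) := by
    have e1 : (π : ℂ) * z = ((π / β * k : ℝ) : ℂ) * Complex.I := by
      rw [hz]; push_cast; ring
    have hs : 0 < Real.sinh (π / β * k) := Real.sinh_pos_iff.2 (by positivity)
    have hsc : Complex.sinh ((π / β * k : ℝ) : ℂ) ≠ 0 := by
      rw [← Complex.ofReal_sinh]; exact_mod_cast hs.ne'
    rw [e1, Complex.cot_eq_cos_div_sin, Complex.cos_mul_I, Complex.sin_mul_I, hz,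
      Complex.ofReal_sub, Complex.ofReal_mul, Complex.ofReal_div (Real.cosh _),
      Complex.ofReal_cosh, Complex.ofReal_sinh]
    have hI := Complex.I_ne_zero
    push_cast at hsc ⊢
    field_simp
  rw [hA, hB]; exact h

lemma aux_sum (a : ℕ → ℝ → ℝ) (s : ℝ → ℝ) (D : ℝ → ℂ) (hD : AEStronglyMeasurable D)
    (ha : ∀ n, Measurable (a n)) (hpos : ∀ n x, 0 < x → 0 ≤ a n x)
    (hs : ∀ x, 0 < x → HasSum (fun n => a n x) (s x))
    (hi : IntegrableOn (fun x => (s x : ℂ) * D x) (Set.Ioi 0)) :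
    HasSum (fun n => ∫ x in Set.Ioi (0:ℝ), (a n x : ℂ) * D x)
      (∫ x in Set.Ioi (0:ℝ), (s x : ℂ) * D x) := by
  refine hasSum_integral_of_dominated_convergence (fun n x => a n x * ‖D x‖) ?_ ?_ ?_ ?_ ?_
  · intro n
    exact ((Complex.measurable_ofReal.comp (ha n)).aestronglyMeasurable).mul hD.restrict
  · intro n
    filter_upwards [ae_restrict_mem measurableSet_Ioi] with x hx
    rw [norm_mul, Complex.norm_real, Real.norm_eq_abs, abs_of_nonneg (hpos n x hx)]
  · filter_upwards [ae_restrict_mem measurableSet_Ioi] with x hx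
    exact (hs x hx).summable.mul_right _
  · refine hi.norm.congr ?_
    filter_upwards [ae_restrict_mem measurableSet_Ioi] with x hx
    rw [norm_mul, Complex.norm_real, Real.norm_eq_abs,
      abs_of_nonneg ((hs x hx).nonneg (fun n => hpos n x hx)), tsum_mul_right, (hs x hx).tsum_eq]
  · filter_upwards [ae_restrict_mem measurableSet_Ioi] with x hx
    exact ((Complex.hasSum_ofReal (f := fun n => a n x)).2 (hs x hx)).mul_right _

lemma aux_div_int' (ψ : SchwartzMap ℝ ℂ) :
    IntegrableOn (fun x : ℝ => ((1 / x : ℝ) : ℂ) * (ψ x - ψ (-x))) (Set.Ioi 0) := by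
  refine (aux_odd_div_int ψ).mono' ?_ ?_
  · exact (Complex.measurable_ofReal.comp (measurable_const.div
      measurable_id)).aestronglyMeasurable.mul (aux_odd_int ψ).1.restrict
  · filter_upwards [ae_restrict_mem measurableSet_Ioi] with x hx
    have hx : 0 < x := hx
    rw [norm_mul, Complex.norm_real, Real.norm_eq_abs, abs_of_pos (by positivity)]
    apply le_of_eq; ring

lemma aux_lim (φ Φ : SchwartzMap ℝ ℂ)
    (hΦ : ∀ x : ℝ, Φ x = ∫ k : ℝ, φ k * Complex.exp (-Complex.I * k * x)) :
    ∫ x in Set.Ioi (0:ℝ), (Φ x - Φ (-x)) =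
    -Complex.I * (2 * ∫ k in Set.Ioi (0:ℝ), ((1 / k : ℝ) : ℂ) * (φ k - φ (-k))) := by
  have h1 : Tendsto (fun ε : ℝ => ∫ x in Set.Ioi (0:ℝ), ((Real.exp (-ε * x) : ℝ) : ℂ) *
      (Φ x - Φ (-x))) (𝓝[>] 0) (𝓝 (∫ x in Set.Ioi (0:ℝ), (Φ x - Φ (-x)))) := by
    refine tendsto_integral_filter_of_dominated_convergence (fun x => ‖Φ x - Φ (-x)‖) ?_ ?_ ?_ ?_
    · refine Eventually.of_forall fun ε => ?_
      exact AEStronglyMeasurable.mul (by fun_prop) (aux_odd_int Φ).1.restrict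
    · filter_upwards [self_mem_nhdsWithin] with ε hε
      have hε : 0 < ε := hε
      filter_upwards [ae_restrict_mem measurableSet_Ioi] with x hx
      have hx : 0 < x := hx
      rw [norm_mul, Complex.norm_real, Real.norm_eq_abs, abs_of_pos (Real.exp_pos _)]
      refine mul_le_of_le_one_left (norm_nonneg _) (Real.exp_le_one_iff.2 ?_)
      nlinarith [mul_pos hε hx]
    · exact (aux_odd_int Φ).norm.integrableOn
    · refine Eventually.of_forall fun x => ?_
      have : Continuous (fun ε : ℝ => ((Real.exp (-ε * x) : ℝ) : ℂ) * (Φ x - Φ (-x))) := by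
        fun_prop
      have := this.tendsto 0
      simp only [neg_zero, zero_mul, Real.exp_zero, Complex.ofReal_one, one_mul] at this
      exact tendsto_nhdsWithin_of_tendsto_nhds this
  have h2 : Tendsto (fun ε : ℝ => ∫ k in Set.Ioi (0:ℝ), ((2 * k / (k ^ 2 + ε ^ 2) : ℝ) : ℂ) *
      (φ k - φ (-k))) (𝓝[>] 0)
      (𝓝 (∫ k in Set.Ioi (0:ℝ), 2 * (((1 / k : ℝ) : ℂ) * (φ k - φ (-k))))) := by
    refine tendsto_integral_filter_of_dominated_convergence
      (fun k => 2 * ‖((1 / k : ℝ) : ℂ) * (φ k - φ (-k))‖) ?_ ?_ ?_ ?_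
    · refine Eventually.of_forall fun ε => ?_
      refine AEStronglyMeasurable.mul ?_ (aux_odd_int φ).1.restrict
      exact Measurable.aestronglyMeasurable (by fun_prop)
    · filter_upwards [self_mem_nhdsWithin] with ε hε
      have hε : 0 < ε := hε
      filter_upwards [ae_restrict_mem measurableSet_Ioi] with x hx
      have hx : 0 < x := hx
      rw [norm_mul, norm_mul, Complex.norm_real, Real.norm_eq_abs, Complex.norm_real,
        Real.norm_eq_abs, abs_of_pos (by positivity), abs_of_pos (by positivity), ← mul_assoc]
      gcongr
      rw [mul_one_div, div_le_div_iff₀ (by positivity) hx]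
      nlinarith [sq_nonneg ε]
    · exact (aux_div_int' φ).norm.const_mul 2
    · filter_upwards [ae_restrict_mem measurableSet_Ioi] with x hx
      have hx : 0 < x := hx
      have hne : ∀ ε : ℝ, x ^ 2 + ε ^ 2 ≠ 0 := fun ε => by positivity
      have : Continuous (fun ε : ℝ => ((2 * x / (x ^ 2 + ε ^ 2) : ℝ) : ℂ) *
          (φ x - φ (-x))) := by
        fun_prop (disch := exact hne _)
      have h := this.tendsto 0
      have e : ((2 * x / (x ^ 2 + 0 ^ 2) : ℝ) : ℂ) * (φ x - φ (-x)) =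
          2 * (((1 / x : ℝ) : ℂ) * (φ x - φ (-x))) := by
        have hxc : (x : ℂ) ≠ 0 := by exact_mod_cast hx.ne'
        push_cast; field_simp; ring
      rw [e] at h
      exact tendsto_nhdsWithin_of_tendsto_nhds h
  rw [integral_const_mul] at h2
  refine tendsto_nhds_unique h1 ((h2.const_mul (-Complex.I)).congr' ?_)
  filter_upwards [self_mem_nhdsWithin] with ε hε
  exact (aux_abel φ Φ hΦ ε hε).symm

lemma aux_main_s9 (β : ℝ) (hβ : 0 < β) (φ Φ : SchwartzMap ℝ ℂ)
    (hΦ : ∀ x : ℝ, Φ x = ∫ k : ℝ, φ k * Complex.exp (-Complex.I * k * x)) :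
    1 / 2 * ∫ x in Set.Ioi (0:ℝ), ((Real.cosh (β / 2 * x) / Real.sinh (β / 2 * x) : ℝ) : ℂ) *
      (Φ x - Φ (-x)) =
    (-Complex.I * π / β) * ∫ x in Set.Ioi (0:ℝ),
      ((Real.cosh (π / β * x) / Real.sinh (π / β * x) : ℝ) : ℂ) * (φ x - φ (-x)) := by
  have i1 := aux_coth_int (β / 2) (by positivity) Φ
  have i2 := aux_coth_int (π / β) (by positivity) φ
  have i3 := (aux_odd_int Φ).integrableOn (s := Set.Ioi 0)
  have i4 := aux_div_int' φ
  have j1 := (i1.const_mul (1 / 2)).sub (i3.const_mul (1 / 2))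
  have j2 := (i2.const_mul ((π / β : ℝ) : ℂ)).sub i4
  have q1 : ∀ x : ℝ, ((1 / 2 * (Real.cosh (β * x / 2) / Real.sinh (β * x / 2)) - 1 / 2 : ℝ) : ℂ) *
      (Φ x - Φ (-x)) = 1 / 2 * (((Real.cosh (β / 2 * x) / Real.sinh (β / 2 * x) : ℝ) : ℂ) *
      (Φ x - Φ (-x))) - 1 / 2 * (Φ x - Φ (-x)) := by
    intro x
    rw [show β * x / 2 = β / 2 * x by ring]; push_cast; ring
  have q2 : ∀ x : ℝ, ((π / β * (Real.cosh (π / β * x) / Real.sinh (π / β * x)) - 1 / x : ℝ) : ℂ) *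
      (φ x - φ (-x)) = ((π / β : ℝ) : ℂ) * (((Real.cosh (π / β * x) / Real.sinh (π / β * x) : ℝ)
      : ℂ) * (φ x - φ (-x))) - ((1 / x : ℝ) : ℂ) * (φ x - φ (-x)) := by
    intro x; push_cast; ring
  have s1 := aux_sum (fun n x => Real.exp (-((n + 1) * (β * x)))) _ (fun x => Φ x - Φ (-x))
    (aux_odd_int Φ).1 (fun n => by fun_prop) (fun n x hx => (Real.exp_pos _).le)
    (fun x hx => aux_geom (β * x) (by positivity))
    (j1.congr (Eventually.of_forall fun x => (q1 x).symm))
  have s2 := aux_sum (fun n k => 2 * k / (k ^ 2 + ((n + 1) * β) ^ 2)) _ (fun x => φ x - φ (-x))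
    (aux_odd_int φ).1 (fun n => by fun_prop) (fun n x hx => by positivity)
    (fun x hx => aux_mittag β x hβ hx)
    (j2.congr (Eventually.of_forall fun x => (q2 x).symm))
  simp_rw [q1] at s1
  simp_rw [q2] at s2
  rw [integral_sub (i1.const_mul _) (i3.const_mul _), integral_const_mul, integral_const_mul] at s1
  rw [integral_sub (i2.const_mul _) i4, integral_const_mul] at s2
  have s3 := s2.mul_left (-Complex.I)
  have hA : (fun n : ℕ => ∫ x in Set.Ioi (0:ℝ), ((Real.exp (-((n + 1) * (β * x))) : ℝ) : ℂ) *
      (Φ x - Φ (-x))) = fun n : ℕ => -Complex.I * ∫ k in Set.Ioi (0:ℝ),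
      ((2 * k / (k ^ 2 + ((n + 1) * β) ^ 2) : ℝ) : ℂ) * (φ k - φ (-k)) := by
    ext n
    rw [← aux_abel φ Φ hΦ ((n + 1) * β) (by positivity)]
    congr 1; ext x
    congr 4; ring
  rw [hA] at s1
  have h := s1.unique s3
  rw [aux_lim φ Φ hΦ] at h
  push_cast at h ⊢
  linear_combination h

lemma aux_plain (ψ : SchwartzMap ℝ ℂ) :
    Tendsto (fun δ : ℝ => ∫ x in {x : ℝ | δ ≤ |x|}, ψ x) (𝓝[>] 0) (𝓝 (∫ x, ψ x)) := by
  rw [aux_fold _ ψ.integrable]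
  refine (aux_tendsto _ (ψ.integrable.add ψ.integrable.comp_neg).integrableOn).congr' ?_
  filter_upwards [self_mem_nhdsWithin] with δ hδ
  rw [aux_split _ δ hδ ψ.integrable.integrableOn]
  rfl

lemma aux_be (y : ℝ) (hy : y ≠ 0) : 1 / (Real.exp y - 1) =
    -(1 / 2) + 1 / 2 * (Real.cosh (y / 2) / Real.sinh (y / 2)) := by
  have hs : Real.sinh (y / 2) ≠ 0 := by
    rw [Ne, Real.sinh_eq_zero]; grind
  have h1 : Real.exp y - 1 ≠ 0 := by
    rw [sub_ne_zero, Ne, Real.exp_eq_one_iff]; exact hy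
  rw [Real.cosh_eq, Real.sinh_eq] at *
  have e1 : Real.exp y = Real.exp (y/2) ^ 2 := by
    rw [← Real.exp_nat_mul]; congr 1; push_cast; ring
  have e2 : Real.exp (y/2) * Real.exp (-(y/2)) = 1 := by rw [← Real.exp_add]; simp
  rw [e1] at h1 ⊢
  set p := Real.exp (y/2)
  set q := Real.exp (-(y/2))
  have n1 : p - q ≠ 0 := by intro h; rw [h] at hs; simp at hs
  field_simp
  linear_combination (-2 * p) * e2

theorem stmt_9 (β : ℝ) (hβ : 0 < β) (φ : SchwartzMap ℝ ℂ) :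
    ∃ A B : ℂ,
      Filter.Tendsto
        (fun δ : ℝ => ∫ x in {x : ℝ | δ ≤ |x|},
          (∫ k : ℝ, φ k * Complex.exp (-Complex.I * k * x)) / (Real.exp (β * x) - 1))
        (nhdsWithin 0 (Set.Ioi 0)) (nhds A) ∧
      Filter.Tendsto
        (fun δ : ℝ => ∫ k in {k : ℝ | δ ≤ |k|},
          (-Complex.I * Real.pi / β) *
            (Real.cosh (Real.pi * k / β) / Real.sinh (Real.pi * k / β)) * φ k)
        (nhdsWithin 0 (Set.Ioi 0)) (nhds B) ∧
      A = -Real.pi * φ 0 + B := by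
  obtain ⟨Φ, hΦ, hΦi⟩ := aux_fourier φ
  have hA := ((aux_plain Φ).const_mul (-(1 / 2))).add
    ((aux_pv (β / 2) (by positivity) Φ).const_mul (1 / 2))
  have hB := (aux_pv (π / β) (by positivity) φ).const_mul (-Complex.I * π / β)
  refine ⟨_, _, hA.congr' ?_, hB.congr' ?_, ?_⟩
  · filter_upwards [self_mem_nhdsWithin] with δ hδ
    have hδ : 0 < δ := hδ
    have hm : MeasurableSet {x : ℝ | δ ≤ |x|} := measurableSet_le measurable_const measurable_norm
    rw [← integral_const_mul, ← integral_const_mul, ← integral_add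
      (Φ.integrable.integrableOn.const_mul _)
      ((aux_coth_intOn (β / 2) (by positivity) Φ δ hδ).const_mul _)]
    refine setIntegral_congr_fun hm fun x hx => ?_
    have hx : δ ≤ |x| := hx
    have hx0 : x ≠ 0 := by
      intro h; rw [h, abs_zero] at hx; linarith
    have h := congrArg (fun r : ℝ => (r : ℂ)) (aux_be (β * x) (by positivity))
    rw [show β * x / 2 = β / 2 * x by ring] at h
    simp only [← hΦ]
    push_cast at h ⊢
    rw [div_eq_mul_one_div (Φ x), h]
    ring
  · filter_upwards with δ
    rw [← integral_const_mul]
    congr 1; ext k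
    rw [show π * k / β = π / β * k by ring]
    push_cast; ring
  · rw [hΦi, aux_main_s9 β hβ φ Φ hΦ]
    ring
end

section
/- Let α > −1 be a real number and let k be a nonzero real number. Then lim_{ε→0⁺} ∫_0^∞ x^α · e^{−(ε + ik)x} dx = Γ(α+1) · (ik)^{−(α+1)}, where Γ is the Gamma function and (ik)^{−(α+1)} is the principal branch of the complex power (defined via the principal branch of the logarithm). -/
open MeasureTheory Real Complex Filter Topology

lemma aux_int_s10 (α : ℝ) (hα : -1 < α) (b : ℝ) (hb : 0 < b) :
    IntegrableOn (fun x : ℝ => x ^ α * Real.exp (-b * x)) (Set.Ioi 0) := by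
  simpa using integrableOn_rpow_mul_exp_neg_mul_rpow hα one_pos hb

lemma aux_norm (α : ℝ) (z : ℂ) (x : ℝ) (hx : 0 < x) :
    ‖((x ^ α : ℝ) : ℂ) * Complex.exp (-z * x)‖ = x ^ α * Real.exp (-z.re * x) := by
  rw [norm_mul, Complex.norm_exp, Complex.norm_real,
    Real.norm_of_nonneg (Real.rpow_nonneg hx.le _)]
  simp

lemma aux_meas (α : ℝ) (z : ℂ) : AEStronglyMeasurable
    (fun x : ℝ => ((x ^ α : ℝ) : ℂ) * Complex.exp (-z * x)) (volume.restrict (Set.Ioi 0)) := by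
  apply Measurable.aestronglyMeasurable
  fun_prop

lemma aux_diff (α : ℝ) (hα : -1 < α) (z : ℂ) (hz : 0 < z.re) :
    DifferentiableAt ℂ (fun z : ℂ => ∫ x in Set.Ioi (0 : ℝ),
        ((x ^ α : ℝ) : ℂ) * Complex.exp (-z * x)) z := by
  have hs : {w : ℂ | z.re / 2 < w.re} ∈ 𝓝 z :=
    (isOpen_lt continuous_const Complex.continuous_re).mem_nhds (by simp; linarith)
  refine (hasDerivAt_integral_of_dominated_loc_of_deriv_le
    (F := fun (z : ℂ) (x : ℝ) => ((x ^ α : ℝ) : ℂ) * Complex.exp (-z * x))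
    (F' := fun (z : ℂ) (x : ℝ) => ((x ^ α : ℝ) : ℂ) * (Complex.exp (-z * x) * (-x)))
    (bound := fun x : ℝ => x ^ (α + 1) * Real.exp (-(z.re / 2) * x))
    hs ?_ ?_ ?_ ?_ ?_ ?_).2.differentiableAt
  · exact Eventually.of_forall fun w => aux_meas α w
  · refine (aux_int_s10 α hα z.re hz).mono' (aux_meas α z) ?_
    filter_upwards [ae_restrict_mem measurableSet_Ioi] with x hx
    exact (aux_norm α z x hx).le
  · apply Measurable.aestronglyMeasurable
    fun_prop
  · filter_upwards [ae_restrict_mem measurableSet_Ioi] with x hx w hw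
    have hx : 0 < x := hx
    have hw : z.re / 2 < w.re := hw
    rw [← mul_assoc, norm_mul, aux_norm α w x hx, norm_neg, Complex.norm_real,
      Real.norm_of_nonneg hx.le, Real.rpow_add_one hx.ne']
    have h1 : Real.exp (-w.re * x) ≤ Real.exp (-(z.re / 2) * x) := by
      apply Real.exp_le_exp.2
      nlinarith
    have h2 : 0 ≤ x ^ α * x := by positivity
    nlinarith
  · exact aux_int_s10 (α + 1) (by linarith) _ (by linarith)
  · refine Eventually.of_forall fun x w _ => ?_
    refine HasDerivAt.const_mul _ (HasDerivAt.cexp ?_)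
    simpa using ((hasDerivAt_id w).neg.mul_const (x : ℂ))

lemma aux_real (α : ℝ) (hα : -1 < α) (t : ℝ) (ht : 0 < t) :
    ∫ x in Set.Ioi (0 : ℝ), ((x ^ α : ℝ) : ℂ) * Complex.exp (-(t : ℂ) * x)
      = Complex.Gamma ((α : ℂ) + 1) * (t : ℂ) ^ (-((α : ℂ) + 1)) := by
  have h := Complex.integral_cpow_mul_exp_neg_mul_Ioi (a := (α : ℂ) + 1) (r := t)
    (by simp; linarith) ht
  rw [one_div, Complex.inv_cpow _ _ (by rw [Complex.arg_ofReal_of_nonneg ht.le]; exact pi_pos.ne),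
    ← Complex.cpow_neg, mul_comm] at h
  rw [← h]
  refine setIntegral_congr_fun measurableSet_Ioi fun x hx => ?_
  have hx : 0 < x := hx
  simp [Complex.ofReal_cpow hx.le]

lemma aux_main_s10 (α : ℝ) (hα : -1 < α) (z : ℂ) (hz : 0 < z.re) :
    ∫ x in Set.Ioi (0 : ℝ), ((x ^ α : ℝ) : ℂ) * Complex.exp (-z * x)
      = Complex.Gamma ((α : ℂ) + 1) * z ^ (-((α : ℂ) + 1)) := by
  have hU : IsOpen {w : ℂ | 0 < w.re} := isOpen_lt continuous_const Complex.continuous_re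
  refine AnalyticOnNhd.eqOn_of_preconnected_of_frequently_eq (𝕜 := ℂ) (U := {w : ℂ | 0 < w.re})
    (z₀ := 1)
    (f := fun z : ℂ => ∫ x in Set.Ioi (0 : ℝ), ((x ^ α : ℝ) : ℂ) * Complex.exp (-z * x))
    (g := fun z : ℂ => Complex.Gamma ((α : ℂ) + 1) * z ^ (-((α : ℂ) + 1)))
    ?_ ?_ (convex_halfSpace_re_gt 0).isPreconnected (by simp) ?_ hz
  · exact DifferentiableOn.analyticOnNhd
      (fun w hw => (aux_diff α hα w hw).differentiableWithinAt) hU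
  · refine DifferentiableOn.analyticOnNhd (fun w hw => ?_) hU
    exact (DifferentiableAt.const_mul (differentiableAt_id.cpow_const (Or.inl hw))
      _).differentiableWithinAt
  · have ht : Tendsto (fun t : ℝ => (t : ℂ)) (𝓝[≠] 1) (𝓝[≠] 1) := by
      refine tendsto_nhdsWithin_iff.2 ⟨?_, ?_⟩
      · exact (Complex.continuous_ofReal.tendsto' 1 1 (by simp)).mono_left nhdsWithin_le_nhds
      · filter_upwards [self_mem_nhdsWithin] with t ht
        simpa using ht
    refine ht.frequently (Eventually.frequently ?_)
    filter_upwards [nhdsWithin_le_nhds (lt_mem_nhds (one_pos : (0 : ℝ) < 1))] with t ht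
    exact aux_real α hα t ht

theorem stmt_10 (α : ℝ) (hα : -1 < α) (k : ℝ) (hk : k ≠ 0) :
    Filter.Tendsto
      (fun ε : ℝ => ∫ x in Set.Ioi (0 : ℝ),
        ((x ^ α : ℝ) : ℂ) * Complex.exp (-((ε : ℂ) + Complex.I * k) * x))
      (nhdsWithin 0 (Set.Ioi 0))
      (nhds (Complex.Gamma ((α : ℂ) + 1) * (Complex.I * k) ^ (-((α : ℂ) + 1)))) := by
  have h1 : Tendsto (fun ε : ℝ => (ε : ℂ) + Complex.I * k) (𝓝[>] 0) (𝓝 (Complex.I * k)) := by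
    have : Continuous (fun ε : ℝ => (ε : ℂ) + Complex.I * k) := by fun_prop
    exact (this.tendsto' 0 _ (by simp)).mono_left nhdsWithin_le_nhds
  have hs : Complex.I * k ∈ Complex.slitPlane := Or.inr (by simpa using hk)
  have h2 := (h1.cpow (tendsto_const_nhds (x := -((α : ℂ) + 1))) hs).const_mul (Complex.Gamma ((α : ℂ) + 1))
  refine Tendsto.congr' ?_ h2
  filter_upwards [self_mem_nhdsWithin] with ε hε
  have hε : 0 < ε := hε
  exact (aux_main_s10 α hα _ (by simpa using hε)).symm
end

section
/- For every nonzero real k, the principal-value Fourier integral of 1/x exists and lim_{δ→0⁺, R→∞} ∫_{δ ≤ |x| ≤ R} e^{−ikx}/x dx = −iπ · sgn(k), where sgn is the sign function. (This expresses Dirichlet's discontinuous integral, i.e. the distributional identity F[1/x] = −iπ sgn(k).) -/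
open MeasureTheory Real Complex Filter Topology

/-- The semicircle integral. -/
noncomputable def semiF (r : ℝ) : ℂ :=
  ∫ θ in (0:ℝ)..Real.pi, Complex.exp (Complex.I * r * Complex.exp (Complex.I * θ))

lemma semi_norm (r θ : ℝ) :
    ‖Complex.exp (Complex.I * r * Complex.exp (Complex.I * θ))‖ = Real.exp (-(r * Real.sin θ)) := by
  rw [Complex.norm_exp]
  congr 1
  rw [mul_comm Complex.I (θ : ℂ), Complex.exp_mul_I, ← Complex.ofReal_cos, ← Complex.ofReal_sin]
  simp only [Complex.mul_re, Complex.mul_im, Complex.add_re, Complex.add_im, Complex.I_re,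
    Complex.I_im, Complex.ofReal_re, Complex.ofReal_im]
  ring

lemma semi_cont (r : ℝ) :
    Continuous (fun θ : ℝ => Complex.exp (Complex.I * r * Complex.exp (Complex.I * θ))) := by
  fun_prop

lemma semi_norm_le {r θ : ℝ} (hr : 0 ≤ r) (hθ : θ ∈ Set.uIoc 0 Real.pi) :
    ‖Complex.exp (Complex.I * r * Complex.exp (Complex.I * θ))‖ ≤ 1 := by
  rw [Set.uIoc_of_le Real.pi_pos.le] at hθ
  rw [semi_norm, Real.exp_le_one_iff]
  have := Real.sin_nonneg_of_nonneg_of_le_pi hθ.1.le hθ.2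
  have := mul_nonneg hr this
  linarith

lemma semiF_zero : Tendsto semiF (𝓝[>] 0) (𝓝 Real.pi) := by
  have h0 : (Real.pi : ℂ) = ∫ θ in (0:ℝ)..Real.pi, (1:ℂ) := by simp
  rw [h0]
  refine intervalIntegral.tendsto_integral_filter_of_dominated_convergence (fun _ => 1) ?_ ?_ ?_ ?_
  · exact Eventually.of_forall fun r => (semi_cont r).aestronglyMeasurable
  · filter_upwards [self_mem_nhdsWithin] with r hr
    exact Eventually.of_forall fun θ hθ => semi_norm_le (le_of_lt hr) hθ
  · simp
  · refine Eventually.of_forall fun θ _ => ?_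
    have : Continuous (fun r : ℝ => Complex.exp (Complex.I * r * Complex.exp (Complex.I * θ))) := by
      fun_prop
    have := this.tendsto 0
    simp only [Complex.ofReal_zero, mul_zero, zero_mul, Complex.exp_zero] at this
    exact this.mono_left nhdsWithin_le_nhds

lemma semiF_top : Tendsto semiF atTop (𝓝 0) := by
  have h0 : (0 : ℂ) = ∫ θ in (0:ℝ)..Real.pi, (0:ℂ) := by simp
  rw [h0]
  refine intervalIntegral.tendsto_integral_filter_of_dominated_convergence (fun _ => 1) ?_ ?_ ?_ ?_
  · exact Eventually.of_forall fun r => (semi_cont r).aestronglyMeasurable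
  · filter_upwards [eventually_ge_atTop 0] with r hr
    exact Eventually.of_forall fun θ hθ => semi_norm_le hr hθ
  · simp
  · have hne : ∀ᵐ θ : ℝ, θ ≠ Real.pi := by
      simp [ae_iff, measure_singleton]
    filter_upwards [hne] with θ hθ hm
    rw [Set.uIoc_of_le Real.pi_pos.le] at hm
    rw [tendsto_zero_iff_norm_tendsto_zero]
    simp only [semi_norm]
    have hs : 0 < Real.sin θ := Real.sin_pos_of_pos_of_lt_pi hm.1 (lt_of_le_of_ne hm.2 hθ)
    exact Real.tendsto_exp_neg_atTop_nhds_zero.comp (tendsto_id.atTop_mul_const hs)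

lemma semiF_deriv {r : ℝ} (hr : 0 < r) :
    HasDerivAt semiF (-2 * Complex.sin r / r) r := by
  have key := intervalIntegral.hasDerivAt_integral_of_dominated_loc_of_deriv_le
    (μ := volume) (a := 0) (b := Real.pi) (𝕜 := ℝ) (x₀ := r) (s := Set.Ioi 0)
    (F := fun (r θ : ℝ) => Complex.exp (Complex.I * r * Complex.exp (Complex.I * θ)))
    (F' := fun (r θ : ℝ) => Complex.exp (Complex.I * r * Complex.exp (Complex.I * θ)) *
      (Complex.I * Complex.exp (Complex.I * θ))) (bound := fun _ => 1)
    (Ioi_mem_nhds hr)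
    (Eventually.of_forall fun r => (semi_cont r).aestronglyMeasurable)
    ((semi_cont r).intervalIntegrable _ _)
    (Continuous.aestronglyMeasurable (by fun_prop))
    (Eventually.of_forall fun θ hθ x hx => by
      rw [norm_mul, norm_mul, mul_comm Complex.I (θ:ℂ), Complex.norm_exp_ofReal_mul_I]
      simpa [mul_comm] using semi_norm_le (le_of_lt hx) hθ)
    (by simp)
    (Eventually.of_forall fun θ hθ x hx => by
      have h1 : HasDerivAt (fun y : ℝ => Complex.I * (y:ℂ) * Complex.exp (Complex.I * θ))
          (Complex.I * Complex.exp (Complex.I * θ)) x := by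
        simpa using ((Complex.ofRealCLM.hasDerivAt (x := x)).const_mul Complex.I).mul_const
          (Complex.exp (Complex.I * θ))
      exact h1.cexp)
  have hI : (∫ θ in (0:ℝ)..Real.pi,
      Complex.exp (Complex.I * r * Complex.exp (Complex.I * θ)) *
      (Complex.I * Complex.exp (Complex.I * θ))) = -2 * Complex.sin r / r := by
    have hr' : (r:ℂ) ≠ 0 := by exact_mod_cast hr.ne'
    have hd : ∀ θ ∈ Set.uIcc 0 Real.pi, HasDerivAt
        (fun θ : ℝ => Complex.exp (Complex.I * r * Complex.exp (Complex.I * θ)) / (Complex.I * r))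
        (Complex.exp (Complex.I * r * Complex.exp (Complex.I * θ)) *
          (Complex.I * Complex.exp (Complex.I * θ))) θ := by
      intro θ _
      have h1 : HasDerivAt (fun y : ℝ => Complex.I * (y:ℂ)) Complex.I θ := by
        simpa using (Complex.ofRealCLM.hasDerivAt (x := θ)).const_mul Complex.I
      have h2 := ((h1.cexp.const_mul (Complex.I * r)).cexp).div_const (Complex.I * r)
      have hI0 := Complex.I_ne_zero
      refine h2.congr_deriv ?_
      field_simp
    rw [intervalIntegral.integral_eq_sub_of_hasDerivAt hd
      (Continuous.intervalIntegrable (by fun_prop) _ _)]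
    have e1 : Complex.exp (Complex.I * (Real.pi : ℝ)) = -1 := by
      rw [mul_comm]; exact Complex.exp_pi_mul_I
    rw [e1, Complex.sin]
    simp only [Complex.ofReal_zero, mul_zero, Complex.exp_zero, mul_one, mul_neg]
    rw [show -(r:ℂ) * Complex.I = -(Complex.I * r) by ring,
      show (r:ℂ) * Complex.I = Complex.I * r by ring]
    field_simp
    ring_nf
    simp only [Complex.I_sq]
    ring
  have := key.2
  rw [hI] at this
  exact this

lemma sin_int {a δ R : ℝ} (ha : 0 < a) (hδ : 0 < δ) (h : δ ≤ R) :
    ∫ x in δ..R, (-2 * Complex.sin (a * x) / x) = semiF (a * R) - semiF (a * δ) := by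
  have hpos : ∀ x ∈ Set.uIcc δ R, 0 < x := by
    intro x hx
    rw [Set.uIcc_of_le h] at hx
    exact hδ.trans_le hx.1
  refine intervalIntegral.integral_eq_sub_of_hasDerivAt (f := fun x => semiF (a * x)) ?_ ?_
  · intro x hx
    have hx' := hpos x hx
    have h1 : HasDerivAt (fun y : ℝ => a * y) a x := by
      simpa using (hasDerivAt_id x).const_mul a
    have h2 := (semiF_deriv (mul_pos ha hx')).scomp x h1
    refine HasDerivAt.congr_deriv (f := fun x => semiF (a * x)) h2 ?_
    have : (a:ℂ) ≠ 0 := by exact_mod_cast ha.ne'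
    have : (x:ℂ) ≠ 0 := by exact_mod_cast hx'.ne'
    rw [Complex.real_smul]
    push_cast
    field_simp
  · refine ContinuousOn.intervalIntegrable ?_
    refine ContinuousOn.div (by fun_prop) (by fun_prop) ?_
    intro x hx
    exact_mod_cast (hpos x hx).ne'

lemma set_int (k : ℝ) {δ R : ℝ} (hδ : 0 < δ) (h : δ ≤ R) :
    ∫ x in {x : ℝ | δ ≤ |x| ∧ |x| ≤ R}, Complex.exp (-Complex.I * k * x) / (x : ℂ)
      = ∫ x in δ..R, Complex.I * (-2 * Complex.sin (k * x) / x) := by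
  have hset : {x : ℝ | δ ≤ |x| ∧ |x| ≤ R} = Set.Icc (-R) (-δ) ∪ Set.Icc δ R := by
    ext x
    simp only [Set.mem_setOf_eq, Set.mem_union, Set.mem_Icc]
    rcases abs_cases x with ⟨h1, h2⟩ | ⟨h1, h2⟩ <;> rw [h1] <;> grind
  have hc : ∀ s : Set ℝ, (0:ℝ) ∉ s →
      ContinuousOn (fun x : ℝ => Complex.exp (-Complex.I * k * x) / (x : ℂ)) s := by
    intro s hs
    refine ContinuousOn.div (by fun_prop) (by fun_prop) ?_
    intro x hx h0
    have : x = 0 := by exact_mod_cast h0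
    exact hs (this ▸ hx)
  have c1 := hc (Set.Icc (-R) (-δ)) (by simp; intro; linarith)
  have c2 := hc (Set.Icc δ R) (by simp; intro; linarith)
  rw [hset, setIntegral_union _ measurableSet_Icc c1.integrableOn_Icc c2.integrableOn_Icc,
    integral_Icc_eq_integral_Ioc, integral_Icc_eq_integral_Ioc,
    ← intervalIntegral.integral_of_le h, ← intervalIntegral.integral_of_le (by linarith),
    ← intervalIntegral.integral_comp_neg, ← intervalIntegral.integral_add]
  · refine intervalIntegral.integral_congr fun x hx => ?_
    rw [Set.uIcc_of_le h] at hx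
    have hx0 : (x:ℂ) ≠ 0 := by
      have : 0 < x := hδ.trans_le hx.1
      exact_mod_cast this.ne'
    simp only [Complex.sin]
    push_cast
    rw [show -Complex.I * k * -(x:ℂ) = k * x * Complex.I by ring,
      show -Complex.I * k * (x:ℂ) = -(k * x) * Complex.I by ring]
    field_simp
    ring_nf
    simp only [Complex.I_sq]
    ring
  · refine ContinuousOn.intervalIntegrable ?_
    rw [Set.uIcc_of_le h]
    exact c1.comp (f := fun x : ℝ => -x) (by fun_prop) (fun x hx => by
      simp only [Set.mem_Icc] at hx ⊢; constructor <;> linarith)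
  · refine ContinuousOn.intervalIntegrable ?_
    rwa [Set.uIcc_of_le h]
  · rw [Set.disjoint_left]
    intro x h1 h2
    have := h1.2
    have := h2.1
    linarith

theorem stmt_12 (k : ℝ) (hk : k ≠ 0) :
    Filter.Tendsto
      (fun p : ℝ × ℝ => ∫ x in {x : ℝ | p.1 ≤ |x| ∧ |x| ≤ p.2},
        Complex.exp (-Complex.I * k * x) / (x : ℂ))
      ((nhdsWithin 0 (Set.Ioi 0)) ×ˢ Filter.atTop)
      (nhds (-Complex.I * Real.pi * Real.sign k)) := by
  have ha : 0 < |k| := abs_pos.mpr hk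
  have hsin : ∀ x : ℝ, Complex.sin (k * x) = Real.sign k * Complex.sin ((|k| : ℝ) * x) := by
    intro x
    rcases lt_or_gt_of_ne hk with h | h
    · simp [abs_of_neg h, Real.sign_of_neg h]
    · simp [abs_of_pos h, Real.sign_of_pos h]
  have hF : ∀ δ R : ℝ, 0 < δ → δ ≤ R →
      Complex.I * Real.sign k * (semiF (|k| * R) - semiF (|k| * δ)) =
      ∫ x in {x : ℝ | δ ≤ |x| ∧ |x| ≤ R}, Complex.exp (-Complex.I * k * x) / (x : ℂ) := by
    intro δ R hδ h
    rw [set_int k hδ h, ← sin_int ha hδ h, ← intervalIntegral.integral_const_mul]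
    refine intervalIntegral.integral_congr fun x _ => ?_
    simp only [hsin]
    ring
  have t1 : Tendsto (fun R => semiF (|k| * R)) atTop (𝓝 0) :=
    semiF_top.comp (tendsto_id.const_mul_atTop ha)
  have t2 : Tendsto (fun δ => semiF (|k| * δ)) (𝓝[>] 0) (𝓝 Real.pi) := by
    refine semiF_zero.comp (tendsto_nhdsWithin_iff.mpr ⟨?_, ?_⟩)
    · have : Continuous (fun δ : ℝ => |k| * δ) := by fun_prop
      have := this.tendsto 0
      rw [mul_zero] at this
      exact this.mono_left nhdsWithin_le_nhds
    · filter_upwards [self_mem_nhdsWithin] with δ hδ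
      exact mul_pos ha hδ
  have t3 := ((t1.comp (tendsto_snd (f := 𝓝[>] (0:ℝ)))).sub
    (t2.comp (tendsto_fst (g := (atTop : Filter ℝ))))).const_mul (Complex.I * Real.sign k)
  have e : Complex.I * Real.sign k * (0 - (Real.pi : ℂ)) =
      -Complex.I * Real.pi * Real.sign k := by ring
  rw [e] at t3
  refine t3.congr' ?_
  have hδ1 : ∀ᶠ δ : ℝ in 𝓝[>] 0, 0 < δ ∧ δ ≤ 1 := by
    filter_upwards [Ioc_mem_nhdsGT (zero_lt_one (α := ℝ))] with δ hδ using hδ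
  filter_upwards [hδ1.prod_mk (eventually_ge_atTop (1:ℝ))] with p hp
  exact hF p.1 p.2 hp.1.1 (hp.1.2.trans hp.2)
end

section
/- Let φ : ℝ → ℂ be a Schwartz function and set φ̂(x) = ∫_ℝ φ(k) e^{−ikx} dk. Then ∫_ℝ sgn(x) · φ̂(x) dx = lim_{δ→0⁺} ∫_{|k| ≥ δ} (2/(ik)) · φ(k) dk; in particular the principal-value limit on the right exists. (This expresses the distributional identity F[sgn(x)] = 2/(ik).) -/
open MeasureTheory Real Complex Filter Topology

noncomputable def oddQ (φ : SchwartzMap ℝ ℂ) (k : ℝ) : ℂ := (1 / (Complex.I * k)) * (φ k - φ (-k))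

lemma oddQ_integrable (φ : SchwartzMap ℝ ℂ) : Integrable (oddQ φ) := by
  obtain ⟨C, hC, h⟩ := φ.decay 0 1
  have hlip : ∀ k : ℝ, ‖φ k - φ (-k)‖ ≤ C * ‖k - (-k)‖ := by
    intro k
    refine Convex.norm_image_sub_le_of_norm_deriv_le (𝕜 := ℝ) (s := Set.univ) (f := φ)
      (fun x _ => φ.differentiableAt) (fun x _ => ?_) convex_univ trivial trivial
    have := h x
    rw [pow_zero, one_mul, norm_iteratedFDeriv_one, ← norm_deriv_eq_norm_fderiv] at this
    exact this
  have hφ : Integrable (fun k : ℝ => φ k) := φ.integrable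
  have hψ : Integrable (fun k : ℝ => φ k - φ (-k)) := hφ.sub hφ.comp_neg
  have hb : Integrable (fun k : ℝ => (Set.Icc (-1:ℝ) 1).indicator (fun _ => 2 * C) k
      + ‖φ k - φ (-k)‖) := by
    refine Integrable.add ?_ hψ.norm
    rw [integrable_indicator_iff measurableSet_Icc]
    exact integrableOn_const (by simp)
  refine hb.mono' ?_ (Eventually.of_forall fun k => ?_)
  · refine AEStronglyMeasurable.mul ?_ hψ.aestronglyMeasurable
    exact (by fun_prop : Measurable fun k : ℝ => (1 / (Complex.I * (k:ℂ)))).aestronglyMeasurable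
  · have hn : ‖oddQ φ k‖ = ‖φ k - φ (-k)‖ / |k| := by
      simp [oddQ]; ring
    rw [hn]
    by_cases hk : k ∈ Set.Icc (-1:ℝ) 1
    · rw [Set.indicator_of_mem hk]
      have h1 : ‖φ k - φ (-k)‖ / |k| ≤ 2 * C := by
        apply div_le_of_le_mul₀ (abs_nonneg _) (by positivity)
        have := hlip k
        rw [sub_neg_eq_add, ← two_mul, norm_mul] at this
        simp at this
        linarith
      have := norm_nonneg (φ k - φ (-k))
      linarith
    · rw [Set.indicator_of_notMem hk, zero_add]
      apply div_le_self (norm_nonneg _)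
      by_contra hcon
      exact hk (abs_le.mp (not_le.mp hcon).le)

lemma hat_integrable (φ : SchwartzMap ℝ ℂ) :
    Integrable (fun x : ℝ => ∫ k : ℝ, φ k * Complex.exp (-Complex.I * k * x)) := by
  have h := ((FourierTransform.fourier φ).integrable (μ := volume)).comp_div
    (R := 2 * π) (by positivity)
  refine h.congr (Eventually.of_forall fun x => ?_)
  simp only [SchwartzMap.fourier_coe, fourier_real_eq_integral_exp_smul]
  refine integral_congr_ae (Eventually.of_forall fun k => ?_)
  simp only [smul_eq_mul]
  rw [mul_comm]
  congr 2
  have : (π:ℂ) ≠ 0 := by exact_mod_cast Real.pi_ne_zero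
  push_cast
  field_simp

lemma mul_exp_integrable {f : ℝ → ℂ} (hf : Integrable f) (x : ℝ) :
    Integrable (fun k : ℝ => f k * Complex.exp (-Complex.I * k * x)) := by
  refine hf.mono (hf.aestronglyMeasurable.mul
    (by fun_prop : Continuous fun k : ℝ => Complex.exp (-Complex.I * k * x)).aestronglyMeasurable)
    (Eventually.of_forall fun k => ?_)
  simp [Complex.norm_exp]

lemma hat_sub (φ : SchwartzMap ℝ ℂ) (x : ℝ) :
    (∫ k : ℝ, φ k * Complex.exp (-Complex.I * k * x))
      - (∫ k : ℝ, φ k * Complex.exp (-Complex.I * k * (-x : ℝ)))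
    = ∫ k : ℝ, (φ k - φ (-k)) * Complex.exp (-Complex.I * k * x) := by
  have hφ : Integrable (fun k : ℝ => φ k) := φ.integrable
  rw [← integral_neg_eq_self (fun k : ℝ => φ k * Complex.exp (-Complex.I * k * (-x : ℝ)))]
  have e : ∀ k : ℝ, φ (-k) * Complex.exp (-Complex.I * (-k : ℝ) * (-x : ℝ))
      = φ (-k) * Complex.exp (-Complex.I * k * x) := by
    intro k; push_cast; ring_nf
  simp_rw [e]
  rw [← integral_sub (mul_exp_integrable hφ x) (mul_exp_integrable hφ.comp_neg x)]
  simp_rw [sub_mul]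

lemma sign_integral (φ : SchwartzMap ℝ ℂ) :
    (∫ x : ℝ, (Real.sign x : ℂ) * ∫ k : ℝ, φ k * Complex.exp (-Complex.I * k * x))
    = ∫ x in Set.Ioi (0:ℝ), ∫ k : ℝ, (φ k - φ (-k)) * Complex.exp (-Complex.I * k * x) := by
  have hi := hat_integrable φ
  simp_rw [← hat_sub φ]
  generalize hF : (fun x : ℝ => ∫ k : ℝ, φ k * Complex.exp (-Complex.I * k * x)) = F at hi
  have hF' : ∀ x : ℝ, ∫ k : ℝ, φ k * Complex.exp (-Complex.I * k * x) = F x :=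
    fun x => congrFun hF x
  simp_rw [hF']
  rw [integral_sub hi.integrableOn hi.comp_neg.integrableOn, integral_comp_neg_Ioi, neg_zero]
  have e : ∀ x : ℝ, x ≠ 0 → (Real.sign x : ℂ) * F x
      = (Set.Ioi (0:ℝ)).indicator F x - (Set.Iic (0:ℝ)).indicator F x := by
    intro x hx
    rcases lt_or_gt_of_ne hx with h | h
    · simp [Real.sign_of_neg h, h.le, h.not_gt]
    · simp [Real.sign_of_pos h, h, h.not_ge]
  have e' : ∀ᵐ x : ℝ, (Real.sign x : ℂ) * F x
      = (Set.Ioi (0:ℝ)).indicator F x - (Set.Iic (0:ℝ)).indicator F x := by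
    filter_upwards [Measure.ae_ne volume (0:ℝ)] with x hx using e x hx
  rw [integral_congr_ae e', integral_sub (hi.indicator measurableSet_Ioi)
    (hi.indicator measurableSet_Iic), integral_indicator measurableSet_Ioi,
    integral_indicator measurableSet_Iic]

lemma hat_odd_integrable (φ : SchwartzMap ℝ ℂ) :
    Integrable (fun x : ℝ => ∫ k : ℝ, (φ k - φ (-k)) * Complex.exp (-Complex.I * k * x)) := by
  simp_rw [← hat_sub φ]
  exact (hat_integrable φ).sub (hat_integrable φ).comp_neg

lemma trunc_eq (φ : SchwartzMap ℝ ℂ) (R : ℝ) :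
    (∫ x in (0:ℝ)..R, ∫ k : ℝ, (φ k - φ (-k)) * Complex.exp (-Complex.I * k * x))
    = (∫ k, oddQ φ k) - ∫ k : ℝ, oddQ φ k * Complex.exp (-Complex.I * k * R) := by
  have hφ : Integrable (fun k : ℝ => φ k) := φ.integrable
  have hψ : Integrable (fun k : ℝ => φ k - φ (-k)) := hφ.sub hφ.comp_neg
  rw [intervalIntegral_integral_swap, ← integral_sub (oddQ_integrable φ)
    (mul_exp_integrable (oddQ_integrable φ) R)]
  · refine integral_congr_ae ?_
    filter_upwards [Measure.ae_ne volume (0:ℝ)] with k hk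
    have hk' : (k:ℂ) ≠ 0 := by exact_mod_cast hk
    rw [intervalIntegral.integral_const_mul, integral_exp_mul_complex (by simp [hk'])]
    simp only [oddQ]
    field_simp
    simp
    ring
  · have : IsFiniteMeasure (volume.restrict (Set.uIoc 0 R)) := by
      unfold Set.uIoc; infer_instance
    have h1 : Integrable (fun p : ℝ × ℝ => (1:ℂ) * (φ p.2 - φ (-p.2)))
        ((volume.restrict (Set.uIoc 0 R)).prod volume) :=
      Integrable.mul_prod (f := fun _ : ℝ => (1:ℂ)) (integrable_const _) hψ
    refine h1.mono ?_ (Eventually.of_forall fun p => ?_)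
    · have hc : Continuous φ := φ.continuous
      exact Continuous.aestronglyMeasurable (by unfold Function.uncurry; fun_prop)
    · simp [Function.uncurry, Complex.norm_exp]

lemma rl (φ : SchwartzMap ℝ ℂ) :
    Tendsto (fun R : ℝ => ∫ k : ℝ, oddQ φ k * Complex.exp (-Complex.I * k * R)) atTop (𝓝 0) := by
  have h := Real.zero_at_infty_fourier (oddQ φ)
  have h2 : Tendsto (fun R : ℝ => R / (2 * π)) atTop (cocompact ℝ) :=
    (tendsto_id.atTop_div_const (by positivity)).mono_right atTop_le_cocompact
  refine (h.comp h2).congr fun R => ?_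
  simp only [Function.comp, fourier_real_eq_integral_exp_smul]
  refine integral_congr_ae (Eventually.of_forall fun k => ?_)
  simp only [smul_eq_mul]
  rw [mul_comm]
  congr 2
  have : (π:ℂ) ≠ 0 := by exact_mod_cast Real.pi_ne_zero
  push_cast
  field_simp

lemma sign_eq (φ : SchwartzMap ℝ ℂ) :
    (∫ x : ℝ, (Real.sign x : ℂ) * ∫ k : ℝ, φ k * Complex.exp (-Complex.I * k * x))
    = ∫ k, oddQ φ k := by
  rw [sign_integral]
  refine tendsto_nhds_unique (intervalIntegral_tendsto_integral_Ioi (0:ℝ)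
    (hat_odd_integrable φ).integrableOn tendsto_id) ?_
  simp only [id, trunc_eq]
  simpa using (rl φ).const_sub (∫ k, oddQ φ k)

lemma meas_S (δ : ℝ) : MeasurableSet {k : ℝ | δ ≤ |k|} :=
  measurableSet_le measurable_const (by fun_prop)

lemma pv_eq (φ : SchwartzMap ℝ ℂ) {δ : ℝ} (hδ : 0 < δ) :
    ∫ k in {k : ℝ | δ ≤ |k|}, (2 / (Complex.I * k)) * φ k
    = ∫ k in {k : ℝ | δ ≤ |k|}, oddQ φ k := by
  have hφ : Integrable (fun k : ℝ => φ k) := φ.integrable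
  have hS := meas_S δ
  set h : ℝ → ℂ := {k : ℝ | δ ≤ |k|}.indicator (fun k => (1 / (Complex.I * k)) * φ k) with hh
  have hint : Integrable h := by
    refine (hφ.norm.const_mul (1 / δ)).mono' ?_ (Eventually.of_forall fun k => ?_)
    · refine AEStronglyMeasurable.indicator (AEStronglyMeasurable.mul ?_ hφ.aestronglyMeasurable) hS
      exact (by fun_prop : Measurable fun k : ℝ => (1 / (Complex.I * (k:ℂ)))).aestronglyMeasurable
    · by_cases hk : δ ≤ |k|
      · rw [hh, Set.indicator_of_mem (by exact hk)]
        simp only [norm_mul, norm_div, norm_one, Complex.norm_I, one_mul, Complex.norm_real,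
          Real.norm_eq_abs]
        gcongr
      · rw [hh, Set.indicator_of_notMem (by exact hk), norm_zero]
        positivity
  have e1 : ∀ k : ℝ, {k : ℝ | δ ≤ |k|}.indicator (fun k : ℝ => (2 / (Complex.I * k)) * φ k) k
      = h k + h k := by
    intro k
    by_cases hk : δ ≤ |k|
    · simp only [hh, Set.indicator, Set.mem_ofPred_eq, hk, if_true]; ring
    · simp [hh, Set.indicator, hk]
  have e2 : ∀ k : ℝ, {k : ℝ | δ ≤ |k|}.indicator (oddQ φ) k = h k + h (-k) := by
    intro k
    by_cases hk : δ ≤ |k|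
    · simp only [hh, Set.indicator, Set.mem_ofPred_eq, abs_neg, hk, if_true, oddQ]
      push_cast
      rw [mul_neg, div_neg]
      ring
    · simp [hh, Set.indicator, hk]
  rw [← integral_indicator hS, ← integral_indicator hS]
  simp_rw [e1, e2]
  rw [integral_add hint hint, integral_add hint hint.comp_neg, integral_neg_eq_self]

theorem stmt_14 (φ : SchwartzMap ℝ ℂ) :
    Filter.Tendsto
      (fun δ : ℝ => ∫ k in {k : ℝ | δ ≤ |k|}, (2 / (Complex.I * k)) * φ k)
      (nhdsWithin 0 (Set.Ioi 0))
      (nhds (∫ x : ℝ,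
        (Real.sign x : ℂ) * ∫ k : ℝ, φ k * Complex.exp (-Complex.I * k * x))) := by
  rw [sign_eq]
  have hc : AECover volume (nhdsWithin (0:ℝ) (Set.Ioi 0)) (fun δ : ℝ => {k : ℝ | δ ≤ |k|}) := by
    refine ⟨?_, fun δ => meas_S δ⟩
    filter_upwards [Measure.ae_ne volume (0:ℝ)] with k hk
    have : ∀ᶠ δ in 𝓝 (0:ℝ), δ < |k| := Iio_mem_nhds (abs_pos.mpr hk)
    exact (this.filter_mono nhdsWithin_le_nhds).mono fun δ hδ => le_of_lt hδ
  refine (hc.integral_tendsto_of_countably_generated (oddQ_integrable φ)).congr' ?_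
  filter_upwards [self_mem_nhdsWithin] with δ hδ
  exact (pv_eq φ hδ).symm
end

section
/- The function x ↦ sin³(x)/x² is Lebesgue integrable on (0,∞) and ∫_0^∞ sin³(x)/x² dx = (3/4)·ln 3. -/
open MeasureTheory Real

theorem aux_meas_s15 (s : Set ℝ) :
    AEStronglyMeasurable (fun x : ℝ => Real.sin x ^ 3 / x ^ 2) (volume.restrict s) := by
  apply Measurable.aestronglyMeasurable
  fun_prop

theorem aux_int_s15 :
    IntegrableOn (fun x : ℝ => Real.sin x ^ 3 / x ^ 2) (Set.Ioi 0) := by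
  rw [← Set.Ioc_union_Ioi_eq_Ioi (zero_le_one (α := ℝ))]
  refine IntegrableOn.union ?_ ?_
  · have h1 : IntegrableOn (fun _ : ℝ => (1 : ℝ)) (Set.Ioc 0 1) := by
      simp
    refine Integrable.mono' h1 (aux_meas_s15 _) (ae_of_all _ fun x => ?_)
    rw [norm_div, norm_pow, norm_pow, Real.norm_eq_abs, Real.norm_eq_abs]
    apply div_le_one_of_le₀ _ (by positivity)
    have a1 := Real.abs_sin_le_one x
    have a2 : |Real.sin x| ≤ |x| := Real.abs_sin_le_abs
    calc |Real.sin x| ^ 3 ≤ |Real.sin x| ^ 2 :=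
          pow_le_pow_of_le_one (abs_nonneg _) a1 (by norm_num)
      _ ≤ |x| ^ 2 := by gcongr
  · have h1 : IntegrableOn (fun x : ℝ => x ^ (-2 : ℝ)) (Set.Ioi 1) :=
      integrableOn_Ioi_rpow_of_lt (by norm_num) one_pos
    refine Integrable.mono' h1 (aux_meas_s15 _) ?_
    filter_upwards [ae_restrict_mem measurableSet_Ioi] with x hx
    have hx0 : (0 : ℝ) < x := one_pos.trans hx
    rw [norm_div, norm_pow, norm_pow, Real.norm_eq_abs, Real.norm_eq_abs, abs_of_pos hx0,
      Real.rpow_neg hx0.le, ← one_div]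
    norm_cast
    gcongr
    exact pow_le_one₀ (abs_nonneg _) (Real.abs_sin_le_one x)

theorem aux_eq (x : ℝ) (hx : 0 < x) :
    Real.sin x ^ 3 / x ^ 2 = 3 / 4 * (x⁻¹ • (Real.sinc (1 * x) - Real.sinc (3 * x))) := by
  rw [Real.sinc_of_ne_zero (by positivity), Real.sinc_of_ne_zero (by positivity),
    Real.sin_three_mul, smul_eq_mul, one_mul]
  field_simp
  ring

theorem stmt_15 :
    IntegrableOn (fun x : ℝ => Real.sin x ^ 3 / x ^ 2) (Set.Ioi 0) ∧
    ∫ x in Set.Ioi (0 : ℝ), Real.sin x ^ 3 / x ^ 2 = 3 / 4 * Real.log 3 := by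
  refine ⟨aux_int_s15, ?_⟩
  have hint : IntegrableOn (fun x : ℝ => x⁻¹ • (Real.sinc (1 * x) - Real.sinc (3 * x)))
      (Set.Ioi 0) := by
    refine (Integrable.const_mul aux_int_s15 (4 / 3)).congr ?_
    filter_upwards [ae_restrict_mem measurableSet_Ioi] with x hx
    rw [aux_eq x hx]
    ring
  have hR : Filter.Tendsto Real.sinc Filter.atTop (nhds 0) := by
    refine squeeze_zero_norm' ?_ tendsto_inv_atTop_zero
    filter_upwards [Filter.eventually_gt_atTop 0] with x hx
    rw [Real.sinc_of_ne_zero hx.ne', norm_div, Real.norm_eq_abs, Real.norm_eq_abs,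
      abs_of_pos hx, ← one_div]
    gcongr
    exact Real.abs_sin_le_one x
  have hL : Filter.Tendsto Real.sinc (nhdsWithin 0 (Set.Ioi 0)) (nhds 1) := by
    have := Real.continuous_sinc.tendsto 0
    rw [Real.sinc_zero] at this
    exact this.mono_left nhdsWithin_le_nhds
  have key := Frullani.integral_Ioi_eq
    (Real.continuous_sinc.locallyIntegrable.locallyIntegrableOn _)
    one_pos three_pos hL hR hint
  rw [setIntegral_congr_fun measurableSet_Ioi (fun x hx => aux_eq x hx),
    integral_const_mul, key]
  simp
end
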